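/- arXiv:1305.3546 — 12 statements merged into one kernel-verified Lean document; each statement's English description precedes it below -/
import Mathlib

section
/- Let X be a real normed vector space with von Neumann–Jordan constant at most ε + 1. Then for all x, y ∈ X, |[2x, y] − 2[x, y]| ≤ 2ε(‖x + y‖² + ‖x − y‖² + 2‖x‖²), and this quantity is in turn at most 4ε[(1 + ε)(‖x‖² + ‖y‖²) + ‖x‖²]. -/
/-- **Approximate doubling law for the bracket** (Lemma 2.2). For a real normed vector
space with von Neumann–Jordan constant at most `ε + 1`, with `[a, b] = ‖a+b‖² − ‖a−b‖²`,
`|[2x, y] − 2[x, y]| ≤ 2ε(‖x+y‖² + ‖x−y‖² + 2‖x‖²) ≤ 4ε[(1+ε)(‖x‖² + ‖y‖²) + ‖x‖²]`. -/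
theorem bracket_double_law {X : Type*} [NormedAddCommGroup X] [NormedSpace ℝ X]
    (ε : ℝ) (hε : 0 ≤ ε)
    (hJ : ∀ a b : X, ¬(a = 0 ∧ b = 0) →
      1 / (ε + 1) ≤ (‖a + b‖ ^ 2 + ‖a - b‖ ^ 2) / (2 * (‖a‖ ^ 2 + ‖b‖ ^ 2)) ∧
      (‖a + b‖ ^ 2 + ‖a - b‖ ^ 2) / (2 * (‖a‖ ^ 2 + ‖b‖ ^ 2)) ≤ ε + 1) :
    ∀ x y : X,
      |(‖2 • x + y‖ ^ 2 - ‖2 • x - y‖ ^ 2) - 2 * (‖x + y‖ ^ 2 - ‖x - y‖ ^ 2)| ≤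
        2 * ε * (‖x + y‖ ^ 2 + ‖x - y‖ ^ 2 + 2 * ‖x‖ ^ 2) ∧
      2 * ε * (‖x + y‖ ^ 2 + ‖x - y‖ ^ 2 + 2 * ‖x‖ ^ 2) ≤
        4 * ε * ((1 + ε) * (‖x‖ ^ 2 + ‖y‖ ^ 2) + ‖x‖ ^ 2) := by
  have key : ∀ a b : X, (1 - ε) * (2 * (‖a‖ ^ 2 + ‖b‖ ^ 2)) ≤ ‖a + b‖ ^ 2 + ‖a - b‖ ^ 2 ∧
      ‖a + b‖ ^ 2 + ‖a - b‖ ^ 2 ≤ (ε + 1) * (2 * (‖a‖ ^ 2 + ‖b‖ ^ 2)) := by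
    intro a b
    by_cases h : a = 0 ∧ b = 0
    · obtain ⟨rfl, rfl⟩ := h
      simp
    · have hpos : 0 < 2 * (‖a‖ ^ 2 + ‖b‖ ^ 2) := by
        by_cases ha : a = 0
        · have hb : 0 < ‖b‖ := norm_pos_iff.mpr (fun hb => h ⟨ha, hb⟩)
          positivity
        · have ha' : 0 < ‖a‖ := norm_pos_iff.mpr ha
          positivity
      obtain ⟨h1, h2⟩ := hJ a b h
      refine ⟨?_, (div_le_iff₀ hpos).mp h2⟩
      have h3 : 1 - ε ≤ 1 / (ε + 1) := by
        rw [le_div_iff₀ (by linarith)]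
        nlinarith [sq_nonneg ε]
      exact (le_div_iff₀ hpos).mp (h3.trans h1)
  intro x y
  have e1 : x + y + x = 2 • x + y := by rw [two_nsmul]; abel
  have e2 : x + y - x = y := by abel
  have e3 : x - y + x = 2 • x - y := by rw [two_nsmul]; abel
  have e4 : ‖x - y - x‖ = ‖y‖ := by
    rw [show x - y - x = -y by abel, norm_neg]
  obtain ⟨p1, p2⟩ := key (x + y) x
  obtain ⟨q1, q2⟩ := key (x - y) x
  rw [e1, e2] at p1 p2
  rw [e3, e4] at q1 q2
  refine ⟨?_, ?_⟩
  · rw [abs_le]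
    constructor <;> nlinarith
  · nlinarith [mul_le_mul_of_nonneg_left (key x y).2 hε]
end

section
/- Let X be a real normed vector space with von Neumann–Jordan constant at most ε + 1. Then for all x, y, z ∈ X, |[x, z] + [y, z] − [x + y, z]| ≤ ε[(3 + 2ε)‖x + y‖² + ‖x − y‖² + 8(1 + ε)‖z‖²]. -/
/-- **Approximate additivity of the bracket** (Lemma 2.3). For a real normed vector
space with von Neumann–Jordan constant at most `ε + 1`, with `[a, b] = ‖a+b‖² − ‖a−b‖²`,
`|[x, z] + [y, z] − [x + y, z]| ≤ ε[(3 + 2ε)‖x+y‖² + ‖x−y‖² + 8(1+ε)‖z‖²]`. -/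
theorem bracket_add_law {X : Type*} [NormedAddCommGroup X] [NormedSpace ℝ X]
    (ε : ℝ) (hε : 0 ≤ ε)
    (hJ : ∀ a b : X, ¬(a = 0 ∧ b = 0) →
      1 / (ε + 1) ≤ (‖a + b‖ ^ 2 + ‖a - b‖ ^ 2) / (2 * (‖a‖ ^ 2 + ‖b‖ ^ 2)) ∧
      (‖a + b‖ ^ 2 + ‖a - b‖ ^ 2) / (2 * (‖a‖ ^ 2 + ‖b‖ ^ 2)) ≤ ε + 1) :
    ∀ x y z : X,
      |(‖x + z‖ ^ 2 - ‖x - z‖ ^ 2) + (‖y + z‖ ^ 2 - ‖y - z‖ ^ 2) -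
          (‖x + y + z‖ ^ 2 - ‖x + y - z‖ ^ 2)| ≤
        ε * ((3 + 2 * ε) * ‖x + y‖ ^ 2 + ‖x - y‖ ^ 2 + 8 * (1 + ε) * ‖z‖ ^ 2) := by
  have U : ∀ a b : X, ‖a + b‖ ^ 2 + ‖a - b‖ ^ 2 ≤ 2 * (1 + ε) * (‖a‖ ^ 2 + ‖b‖ ^ 2) ∧
      2 * (1 - ε) * (‖a‖ ^ 2 + ‖b‖ ^ 2) ≤ ‖a + b‖ ^ 2 + ‖a - b‖ ^ 2 := by
    intro a b
    by_cases h : a = 0 ∧ b = 0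
    · obtain ⟨rfl, rfl⟩ := h
      simp
    · have hpos : 0 < 2 * (‖a‖ ^ 2 + ‖b‖ ^ 2) := by
        by_cases ha : a = 0
        · have hb : b ≠ 0 := fun hb => h ⟨ha, hb⟩
          have := norm_pos_iff.mpr hb
          positivity
        · have := norm_pos_iff.mpr ha
          positivity
      obtain ⟨h1, h2⟩ := hJ a b h
      have h3 : 1 - ε ≤ 1 / (ε + 1) := by
        rw [le_div_iff₀ (by linarith)]
        nlinarith
      have h4 := h3.trans h1
      rw [le_div_iff₀ hpos] at h4
      rw [div_le_iff₀ hpos] at h2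
      constructor <;> linarith
  intro x y z
  obtain ⟨s, hs⟩ : ∃ s : X, s = (1 / 2 : ℝ) • (x + y) := ⟨_, rfl⟩
  obtain ⟨d, hd⟩ : ∃ d : X, d = (1 / 2 : ℝ) • (x - y) := ⟨_, rfl⟩
  have hx : x = s + d := by rw [hs, hd]; module
  have hy : y = s - d := by rw [hs, hd]; module
  have ns : ‖x + y‖ = 2 * ‖s‖ := by
    rw [hs, norm_smul]; norm_num; ring
  have nd : ‖x - y‖ = 2 * ‖d‖ := by
    rw [hd, norm_smul]; norm_num; ring
  rw [ns, nd]
  have A := U (s + z) d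
  have B := U (s - z) d
  have C := U (s + z) s
  have D := U (s - z) s
  have E := (U s z).1
  rw [show s + z + d = x + z by rw [hx]; abel, show s + z - d = y + z by rw [hy]; abel] at A
  rw [show s - z + d = x - z by rw [hx]; abel, show s - z - d = y - z by rw [hy]; abel] at B
  rw [show s + z + s = x + y + z by rw [hx, hy]; abel, show s + z - s = z by abel] at C
  rw [show s - z + s = x + y - z by rw [hx, hy]; abel, show s - z - s = -z by abel,
    norm_neg] at D
  have F := mul_le_mul_of_nonneg_left E hε
  obtain ⟨A1, A2⟩ := A
  obtain ⟨B1, B2⟩ := B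
  obtain ⟨C1, C2⟩ := C
  obtain ⟨D1, D2⟩ := D
  rw [abs_le]
  constructor <;> linarith
end

section
/- Let X be a real normed vector space with von Neumann–Jordan constant at most ε + 1. Then for all x, y ∈ X and all t ∈ ℝ, |[t·x, y] − t·[x, y]| ≤ max{1, t²}·ε·[(8 + 7ε)‖x‖² + (20 + 20ε)‖y‖²]. -/
theorem bsl_mid {X : Type*} [NormedAddCommGroup X] [NormedSpace ℝ X]
    (ε : ℝ) (hε : 0 ≤ ε)
    (h1 : ∀ a b : X, ‖a + b‖ ^ 2 + ‖a - b‖ ^ 2 ≤ 2 * (1 + ε) * (‖a‖ ^ 2 + ‖b‖ ^ 2))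
    (h2 : ∀ a b : X, 2 * (1 - ε) * (‖a‖ ^ 2 + ‖b‖ ^ 2) ≤ ‖a + b‖ ^ 2 + ‖a - b‖ ^ 2)
    (m d y : X) :
    |(‖m + d + y‖ ^ 2 - ‖m + d - y‖ ^ 2) + (‖m - d + y‖ ^ 2 - ‖m - d - y‖ ^ 2)
      - 2 * (‖m + y‖ ^ 2 - ‖m - y‖ ^ 2)| ≤
      4 * ε * ((1 + ε) * (‖m‖ ^ 2 + ‖y‖ ^ 2) + ‖d‖ ^ 2) := by
  have a1 := h1 (m + y) d
  have a2 := h2 (m + y) d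
  have b1 := h1 (m - y) d
  have b2 := h2 (m - y) d
  have c := mul_le_mul_of_nonneg_left (h1 m y) hε
  rw [show m + y + d = m + d + y by abel, show m + y - d = m - d + y by abel] at a1 a2
  rw [show m - y + d = m + d - y by abel, show m - y - d = m - d - y by abel] at b1 b2
  rw [abs_le]
  constructor <;> nlinarith

theorem bsl_unit {X : Type*} [NormedAddCommGroup X] [NormedSpace ℝ X]
    (ε : ℝ) (hε : 0 ≤ ε)
    (h1 : ∀ a b : X, ‖a + b‖ ^ 2 + ‖a - b‖ ^ 2 ≤ 2 * (1 + ε) * (‖a‖ ^ 2 + ‖b‖ ^ 2))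
    (h2 : ∀ a b : X, 2 * (1 - ε) * (‖a‖ ^ 2 + ‖b‖ ^ 2) ≤ ‖a + b‖ ^ 2 + ‖a - b‖ ^ 2)
    (x y : X) (s : ℝ) (hs : s ∈ Set.Icc (0 : ℝ) 1) :
    |(‖s • x + y‖ ^ 2 - ‖s • x - y‖ ^ 2) - s * (‖x + y‖ ^ 2 - ‖x - y‖ ^ 2)| ≤
      4 * ε * (1 + ε) * (‖x‖ ^ 2 + ‖y‖ ^ 2) := by
  set g : ℝ → ℝ := fun s =>
    (‖s • x + y‖ ^ 2 - ‖s • x - y‖ ^ 2) - s * (‖x + y‖ ^ 2 - ‖x - y‖ ^ 2) with hg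
  have hc : Continuous fun s => |g s| := by
    simp only [hg]; fun_prop
  obtain ⟨c, hcm, hmax⟩ := isCompact_Icc.exists_isMaxOn
    (⟨0, by simp⟩ : (Set.Icc (0 : ℝ) 1).Nonempty) hc.continuousOn
  have hmax' : ∀ r ∈ Set.Icc (0 : ℝ) 1, |g r| ≤ |g c| := fun r hr => hmax hr
  refine (hmax' s hs).trans ?_
  have key : ∀ e : ℝ, |g (c + e) + g (c - e) - 2 * g c| ≤
      4 * ε * ((1 + ε) * (c ^ 2 * ‖x‖ ^ 2 + ‖y‖ ^ 2) + e ^ 2 * ‖x‖ ^ 2) := by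
    intro e
    have := bsl_mid ε hε h1 h2 (c • x) (e • x) y
    rw [← add_smul, ← sub_smul, norm_smul, norm_smul, mul_pow, mul_pow, Real.norm_eq_abs,
      Real.norm_eq_abs, sq_abs, sq_abs] at this
    refine le_trans (le_of_eq ?_) this
    congr 1
    simp only [hg]; ring
  have g0 : g 0 = 0 := by simp [hg]
  have g1 : g 1 = 0 := by simp [hg]
  have fin : ∀ e : ℝ, c ^ 2 + e ^ 2 ≤ 1 →
      4 * ε * ((1 + ε) * (c ^ 2 * ‖x‖ ^ 2 + ‖y‖ ^ 2) + e ^ 2 * ‖x‖ ^ 2) ≤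
      4 * ε * (1 + ε) * (‖x‖ ^ 2 + ‖y‖ ^ 2) := by
    intro e he
    rw [mul_assoc (4 * ε)]
    apply mul_le_mul_of_nonneg_left _ (by positivity)
    have := mul_le_mul_of_nonneg_right he (sq_nonneg ‖x‖)
    have h3 := mul_le_mul_of_nonneg_left this hε
    have h4 : 0 ≤ ε * (e ^ 2 * ‖x‖ ^ 2) := by positivity
    nlinarith
  obtain ⟨c0, c1⟩ := hcm
  have tri : ∀ a : ℝ, |a| ≤ |g c| → ∀ D, |a - 2 * g c| ≤ D → |g c| ≤ D := by
    intro a ha D hD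
    have := abs_sub_abs_le_abs_sub (2 * g c) a
    rw [abs_mul, abs_two, abs_sub_comm _ a] at this
    linarith
  rcases le_total c (1 / 2) with h | h
  · have k := (key c).trans (fin c (by nlinarith))
    rw [sub_self, g0, add_zero] at k
    exact tri _ (hmax' _ ⟨by linarith, by linarith⟩) _ k
  · have k := (key (1 - c)).trans (fin (1 - c) (by nlinarith))
    rw [show c + (1 - c) = 1 by ring, g1, zero_add] at k
    exact tri _ (hmax' _ ⟨by linarith, by linarith⟩) _ k

theorem bsl_nonneg {X : Type*} [NormedAddCommGroup X] [NormedSpace ℝ X]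
    (ε : ℝ) (hε : 0 ≤ ε)
    (h1 : ∀ a b : X, ‖a + b‖ ^ 2 + ‖a - b‖ ^ 2 ≤ 2 * (1 + ε) * (‖a‖ ^ 2 + ‖b‖ ^ 2))
    (h2 : ∀ a b : X, 2 * (1 - ε) * (‖a‖ ^ 2 + ‖b‖ ^ 2) ≤ ‖a + b‖ ^ 2 + ‖a - b‖ ^ 2)
    (x y : X) (t : ℝ) (ht : 0 ≤ t) :
    |(‖t • x + y‖ ^ 2 - ‖t • x - y‖ ^ 2) - t * (‖x + y‖ ^ 2 - ‖x - y‖ ^ 2)| ≤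
      max 1 (t ^ 2) * (4 * ε * (1 + ε) * (‖x‖ ^ 2 + ‖y‖ ^ 2)) := by
  have hD : 0 ≤ 4 * ε * (1 + ε) * (‖x‖ ^ 2 + ‖y‖ ^ 2) := by positivity
  rcases le_total t 1 with h | h
  · refine (bsl_unit ε hε h1 h2 x y t ⟨ht, h⟩).trans ?_
    exact le_mul_of_one_le_left hD (le_max_left _ _)
  · have tp : 0 < t := by linarith
    have k := bsl_unit ε hε h1 h2 y x t⁻¹ ⟨by positivity, inv_le_one_of_one_le₀ h⟩
    have e1 : ‖t • x + y‖ = t * ‖t⁻¹ • y + x‖ := by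
      rw [← abs_of_pos tp, ← Real.norm_eq_abs, ← norm_smul, Real.norm_eq_abs, abs_of_pos tp,
        smul_add, smul_inv_smul₀ tp.ne', add_comm]
    have e2 : ‖t • x - y‖ = t * ‖t⁻¹ • y - x‖ := by
      rw [← abs_of_pos tp, ← Real.norm_eq_abs, ← norm_smul, Real.norm_eq_abs, abs_of_pos tp,
        smul_sub, smul_inv_smul₀ tp.ne', norm_sub_rev]
    rw [e1, e2, add_comm x y, norm_sub_rev x y, add_comm (‖x‖ ^ 2)]
    rw [add_comm (‖x‖ ^ 2)] at hD
    refine le_trans (le_of_eq ?_) ((mul_le_mul_of_nonneg_left k (sq_nonneg t)).trans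
      (mul_le_mul_of_nonneg_right (le_max_right _ _) hD))
    rw [← abs_of_nonneg (sq_nonneg t), ← abs_mul]
    congr 1
    field_simp

/-- **Approximate homogeneity of the bracket** (Lemma 2.4). For a real normed vector
space with von Neumann–Jordan constant at most `ε + 1`, with `[a, b] = ‖a+b‖² − ‖a−b‖²`,
`|[t·x, y] − t·[x, y]| ≤ max{1, t²}·ε·[(8 + 7ε)‖x‖² + (20 + 20ε)‖y‖²]`. -/
theorem bracket_scale_law {X : Type*} [NormedAddCommGroup X] [NormedSpace ℝ X]
    (ε : ℝ) (hε : 0 ≤ ε)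
    (hJ : ∀ a b : X, ¬(a = 0 ∧ b = 0) →
      1 / (ε + 1) ≤ (‖a + b‖ ^ 2 + ‖a - b‖ ^ 2) / (2 * (‖a‖ ^ 2 + ‖b‖ ^ 2)) ∧
      (‖a + b‖ ^ 2 + ‖a - b‖ ^ 2) / (2 * (‖a‖ ^ 2 + ‖b‖ ^ 2)) ≤ ε + 1) :
    ∀ (x y : X) (t : ℝ),
      |(‖t • x + y‖ ^ 2 - ‖t • x - y‖ ^ 2) - t * (‖x + y‖ ^ 2 - ‖x - y‖ ^ 2)| ≤
        max 1 (t ^ 2) * ε * ((8 + 7 * ε) * ‖x‖ ^ 2 + (20 + 20 * ε) * ‖y‖ ^ 2) := by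
  have h1 : ∀ a b : X, ‖a + b‖ ^ 2 + ‖a - b‖ ^ 2 ≤ 2 * (1 + ε) * (‖a‖ ^ 2 + ‖b‖ ^ 2) := by
    intro a b
    by_cases h : a = 0 ∧ b = 0
    · simp [h.1, h.2]
    · have hp : 0 < 2 * (‖a‖ ^ 2 + ‖b‖ ^ 2) := by
        rcases not_and_or.mp h with h | h <;> have := norm_pos_iff.mpr h <;> positivity
      have := (div_le_iff₀ hp).mp (hJ a b h).2
      linarith
  have h2 : ∀ a b : X, 2 * (1 - ε) * (‖a‖ ^ 2 + ‖b‖ ^ 2) ≤ ‖a + b‖ ^ 2 + ‖a - b‖ ^ 2 := by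
    intro a b
    by_cases h : a = 0 ∧ b = 0
    · simp [h.1, h.2]
    · have hp : 0 < 2 * (‖a‖ ^ 2 + ‖b‖ ^ 2) := by
        rcases not_and_or.mp h with h | h <;> have := norm_pos_iff.mpr h <;> positivity
      have := (le_div_iff₀ hp).mp (hJ a b h).1
      have h3 : 1 - ε ≤ 1 / (ε + 1) := by
        rw [le_div_iff₀ (by linarith)]; nlinarith
      have := mul_le_mul_of_nonneg_right h3 hp.le
      linarith
  intro x y t
  have main : |(‖t • x + y‖ ^ 2 - ‖t • x - y‖ ^ 2) - t * (‖x + y‖ ^ 2 - ‖x - y‖ ^ 2)| ≤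
      max 1 (t ^ 2) * (4 * ε * (1 + ε) * (‖x‖ ^ 2 + ‖y‖ ^ 2)) := by
    rcases le_total 0 t with h | h
    · exact bsl_nonneg ε hε h1 h2 x y t h
    · have k := bsl_nonneg ε hε h1 h2 (-x) y (-t) (by linarith)
      rw [neg_smul_neg, norm_neg, neg_sq, show -x + y = -(x - y) by abel,
        show -x - y = -(x + y) by abel, norm_neg, norm_neg] at k
      refine le_trans (le_of_eq ?_) k
      congr 1
      ring
  refine main.trans ?_
  rw [mul_assoc (max 1 (t ^ 2))]
  apply mul_le_mul_of_nonneg_left _ (le_trans zero_le_one (le_max_left _ _))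
  rw [mul_comm 4 ε, mul_assoc, mul_assoc]
  apply mul_le_mul_of_nonneg_left _ hε
  have := mul_nonneg hε (sq_nonneg ‖x‖)
  have := mul_nonneg hε (sq_nonneg ‖y‖)
  nlinarith [sq_nonneg ‖x‖, sq_nonneg ‖y‖]
end

section
/- Let X be a two-dimensional real normed vector space and let x ∈ X be a unit vector. Then there exists a unit vector y ∈ X with [x, y] = 0. -/
/-- In a two-dimensional real normed vector space, every unit vector `x` admits a unit
vector `y` with bracket `[x, y] = ‖x + y‖² − ‖x − y‖² = 0`. -/
theorem exists_unit_bracket_orthogonal {X : Type*} [NormedAddCommGroup X] [NormedSpace ℝ X]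
    (hdim : Module.finrank ℝ X = 2) (x : X) (hx : ‖x‖ = 1) :
    ∃ y : X, ‖y‖ = 1 ∧ ‖x + y‖ ^ 2 - ‖x - y‖ ^ 2 = 0 := by
  have hr : 1 < Module.rank ℝ X := by
    haveI : Module.Finite ℝ X := Module.finite_of_finrank_pos (by omega)
    rw [← Module.finrank_eq_rank, hdim]; norm_num
  have hc := isPreconnected_sphere hr (0 : X) 1
  have hf : ContinuousOn (fun y : X => ‖x + y‖ ^ 2 - ‖x - y‖ ^ 2) (Metric.sphere (0 : X) 1) := by
    fun_prop
  have h2 : ‖x + x‖ = 2 := by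
    rw [← two_smul ℝ x, norm_smul, hx]; norm_num
  have h3 : ‖x - -x‖ = 2 := by rw [sub_neg_eq_add, h2]
  obtain ⟨y, hy, h⟩ := hc.intermediate_value (a := -x) (b := x) (by simp [hx]) (by simp [hx]) hf
    (show (0 : ℝ) ∈ _ by simp [h2])
  exact ⟨y, by simpa using hy, h⟩
end

section
/- Let X be a real normed vector space with von Neumann–Jordan constant at most ε + 1, and let x, y ∈ X be unit vectors with [x, y] = 0. Then for every t ∈ ℝ, |‖x + t·y‖²/(1 + t²) − 1| ≤ 15ε + 13.5ε². -/
theorem nse_par {X : Type*} [NormedAddCommGroup X] [NormedSpace ℝ X]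
    (ε : ℝ) (hε : 0 ≤ ε)
    (hJ : ∀ a b : X, ¬(a = 0 ∧ b = 0) →
      1 / (ε + 1) ≤ (‖a + b‖ ^ 2 + ‖a - b‖ ^ 2) / (2 * (‖a‖ ^ 2 + ‖b‖ ^ 2)) ∧
      (‖a + b‖ ^ 2 + ‖a - b‖ ^ 2) / (2 * (‖a‖ ^ 2 + ‖b‖ ^ 2)) ≤ ε + 1) (a b : X) :
    |‖a + b‖ ^ 2 + ‖a - b‖ ^ 2 - 2 * (‖a‖ ^ 2 + ‖b‖ ^ 2)| ≤ 2 * ε * (‖a‖ ^ 2 + ‖b‖ ^ 2) := by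
  by_cases h : a = 0 ∧ b = 0
  · obtain ⟨rfl, rfl⟩ := h
    simp
  · have hpos : 0 < ‖a‖ ^ 2 + ‖b‖ ^ 2 := by
      by_cases ha : a = 0
      · have hb : b ≠ 0 := fun hb => h ⟨ha, hb⟩
        have := norm_pos_iff.2 hb
        positivity
      · have := norm_pos_iff.2 ha
        positivity
    obtain ⟨h1, h2⟩ := hJ a b h
    rw [div_le_iff₀ (by positivity)] at h2
    have h3 : 1 - ε ≤ 1 / (ε + 1) := by
      rw [le_div_iff₀ (by positivity)]
      nlinarith [sq_nonneg ε]
    have h4 := h3.trans h1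
    rw [le_div_iff₀ (by positivity)] at h4
    rw [abs_le]
    constructor <;> linarith

theorem nse_core {X : Type*} [NormedAddCommGroup X] [NormedSpace ℝ X]
    (ε : ℝ) (hε : 0 ≤ ε)
    (hP : ∀ a b : X, |‖a + b‖ ^ 2 + ‖a - b‖ ^ 2 - 2 * (‖a‖ ^ 2 + ‖b‖ ^ 2)|
      ≤ 2 * ε * (‖a‖ ^ 2 + ‖b‖ ^ 2))
    (x y : X) (hx : ‖x‖ = 1) (hy : ‖y‖ = 1)
    (hxy : ‖x + y‖ ^ 2 - ‖x - y‖ ^ 2 = 0) (t : ℝ) (ht : t ∈ Set.Icc (0:ℝ) 1) :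
    |‖x + t • y‖ ^ 2 - (1 + t ^ 2)| ≤ (5 * ε + 4 * ε ^ 2) * (1 + t ^ 2) := by
  have hny : ∀ u : ℝ, ‖u • y‖ ^ 2 = u ^ 2 := by
    intro u
    rw [norm_smul, hy, mul_one, Real.norm_eq_abs, sq_abs]
  have hsum : ∀ t : ℝ, |‖x + t • y‖ ^ 2 + ‖x - t • y‖ ^ 2 - 2 * (1 + t ^ 2)|
      ≤ 2 * ε * (1 + t ^ 2) := by
    intro t
    have := hP x (t • y)
    rwa [hny, hx, one_pow] at this
  obtain ⟨φ, hφ⟩ : ∃ φ : ℝ → ℝ, ∀ t, φ t = ‖x + t • y‖ ^ 2 - ‖x - t • y‖ ^ 2 := ⟨_, fun _ => rfl⟩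
  have hφ0 : φ 0 = 0 := by simp [hφ]
  have hφ1 : φ 1 = 0 := by simp [hφ, hxy]
  have hφc : Continuous φ := by
    have : φ = fun t => ‖x + t • y‖ ^ 2 - ‖x - t • y‖ ^ 2 := funext hφ
    rw [this]; fun_prop
  have hmid : ∀ t u : ℝ, |φ (t + u) + φ (t - u) - 2 * φ t|
      ≤ 4 * ε * (1 + ε) * (1 + t ^ 2 + u ^ 2) := by
    intro t u
    have h1 := hP (x + t • y) (u • y)
    have h2 := hP (x - t • y) (u • y)
    rw [hny] at h1 h2
    have e1 : x + t • y + u • y = x + (t + u) • y := by module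
    have e2 : x + t • y - u • y = x + (t - u) • y := by module
    have e3 : x - t • y + u • y = x - (t - u) • y := by module
    have e4 : x - t • y - u • y = x - (t + u) • y := by module
    rw [e1, e2] at h1
    rw [e3, e4] at h2
    have h3 := hsum t
    rw [hφ, hφ, hφ]
    rw [abs_le] at *
    have h5 := mul_le_mul_of_nonneg_left h3.2 hε
    have h6 : 0 ≤ ε * ε * u ^ 2 := by positivity
    constructor <;> nlinarith
  obtain ⟨s, hs, hmax⟩ := isCompact_Icc.exists_isMaxOn (s := Set.Icc (0:ℝ) 1) ⟨0, by simp⟩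
    (f := fun t => |φ t|) hφc.abs.continuousOn
  have hmax' : ∀ t ∈ Set.Icc (0:ℝ) 1, |φ t| ≤ |φ s| := fun t ht => hmax ht
  have hK : |φ s| ≤ 8 * ε * (1 + ε) := by
    have hc : 0 ≤ ε * (1 + ε) := by positivity
    obtain ⟨hs0, hs1⟩ := hs
    rcases le_total s (1/2) with h | h
    · have h1 := hmid s s
      rw [sub_self, hφ0] at h1
      have h2 := hmax' (s + s) ⟨by linarith, by linarith⟩
      have h4 : ε * (1 + ε) * (1 + s ^ 2 + s ^ 2) ≤ ε * (1 + ε) * 2 :=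
        mul_le_mul_of_nonneg_left (by nlinarith) hc
      rcases abs_cases (φ s) with h3 | h3 <;> rw [abs_le] at h1 h2 <;> linarith
    · have h1 := hmid s (1 - s)
      rw [add_sub_cancel, hφ1] at h1
      have h2 := hmax' (s - (1 - s)) ⟨by linarith, by linarith⟩
      have h4 : ε * (1 + ε) * (1 + s ^ 2 + (1 - s) ^ 2) ≤ ε * (1 + ε) * 2 :=
        mul_le_mul_of_nonneg_left (by nlinarith) hc
      rcases abs_cases (φ s) with h3 | h3 <;> rw [abs_le] at h1 h2 <;> linarith
  have h1 := (hmax' t ht).trans hK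
  have h2 := hsum t
  rw [hφ] at h1
  have h3 : 0 ≤ ε * (1 + ε) * t ^ 2 := by positivity
  rw [abs_le] at *
  constructor <;> linarith

/-- In a real normed vector space with von Neumann–Jordan constant at most `ε + 1`,
if `x, y` are unit vectors with bracket `[x, y] = ‖x+y‖² − ‖x−y‖² = 0`, then for every
`t ∈ ℝ`, `|‖x + t·y‖²/(1 + t²) − 1| ≤ 15ε + 13.5ε²`. -/
theorem norm_sq_near_euclidean {X : Type*} [NormedAddCommGroup X] [NormedSpace ℝ X]
    (ε : ℝ) (hε : 0 ≤ ε)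
    (hJ : ∀ a b : X, ¬(a = 0 ∧ b = 0) →
      1 / (ε + 1) ≤ (‖a + b‖ ^ 2 + ‖a - b‖ ^ 2) / (2 * (‖a‖ ^ 2 + ‖b‖ ^ 2)) ∧
      (‖a + b‖ ^ 2 + ‖a - b‖ ^ 2) / (2 * (‖a‖ ^ 2 + ‖b‖ ^ 2)) ≤ ε + 1)
    (x y : X) (hx : ‖x‖ = 1) (hy : ‖y‖ = 1)
    (hxy : ‖x + y‖ ^ 2 - ‖x - y‖ ^ 2 = 0) :
    ∀ t : ℝ, |‖x + t • y‖ ^ 2 / (1 + t ^ 2) - 1| ≤ 15 * ε + 13.5 * ε ^ 2 := by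
  have hP := nse_par ε hε hJ
  have hA : ∀ x y : X, ‖x‖ = 1 → ‖y‖ = 1 → ‖x + y‖ ^ 2 - ‖x - y‖ ^ 2 = 0 →
      ∀ t : ℝ, |t| ≤ 1 → |‖x + t • y‖ ^ 2 - (1 + t ^ 2)| ≤ (5 * ε + 4 * ε ^ 2) * (1 + t ^ 2) := by
    intro x y hx hy hxy t ht
    rw [abs_le] at ht
    rcases le_total 0 t with h | h
    · exact nse_core ε hε hP x y hx hy hxy t ⟨h, ht.2⟩
    · have := nse_core ε hε hP x (-y) hx (by simpa using hy)
        (by rw [sub_neg_eq_add, ← sub_eq_add_neg]; linarith) (-t) ⟨by linarith, by linarith⟩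
      simpa using this
  intro t
  have hB : |‖x + t • y‖ ^ 2 - (1 + t ^ 2)| ≤ (5 * ε + 4 * ε ^ 2) * (1 + t ^ 2) := by
    rcases le_total |t| 1 with h | h
    · exact hA x y hx hy hxy t h
    · have ht0 : t ≠ 0 := by
        rintro rfl
        norm_num at h
      have h1 := hA y x hy hx (by rw [add_comm, norm_sub_rev]; exact hxy) t⁻¹
        (by rw [abs_inv]; exact inv_le_one_of_one_le₀ h)
      have e : x + t • y = t • (y + t⁻¹ • x) := by
        rw [smul_add, smul_smul, mul_inv_cancel₀ ht0, one_smul, add_comm]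
      have e2 : ‖x + t • y‖ ^ 2 = t ^ 2 * ‖y + t⁻¹ • x‖ ^ 2 := by
        rw [e, norm_smul, mul_pow, Real.norm_eq_abs, sq_abs]
      have e3 : 1 + t ^ 2 = t ^ 2 * (1 + t⁻¹ ^ 2) := by
        field_simp
        try ring
      rw [e2, e3, ← mul_sub, abs_mul, abs_of_nonneg (sq_nonneg t)]
      calc _ ≤ t ^ 2 * ((5 * ε + 4 * ε ^ 2) * (1 + t⁻¹ ^ 2)) :=
            mul_le_mul_of_nonneg_left h1 (sq_nonneg t)
        _ = _ := by ring
  have hp : 0 < 1 + t ^ 2 := by positivity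
  have e : ‖x + t • y‖ ^ 2 / (1 + t ^ 2) - 1 = (‖x + t • y‖ ^ 2 - (1 + t ^ 2)) / (1 + t ^ 2) := by
    field_simp
  rw [e, abs_div, abs_of_pos hp, div_le_iff₀ hp]
  refine hB.trans (mul_le_mul_of_nonneg_right ?_ hp.le)
  nlinarith [sq_nonneg ε]
end

section
/- Let X be a two-dimensional real normed vector space with von Neumann–Jordan constant at most ε + 1, where ε ≥ 0 satisfies 1 − 15ε − 13.5ε² > 0. Then there exists a linear isomorphism Λ from X onto the Euclidean space ℝ² with ‖Λ‖·‖Λ⁻¹‖ ≤ √((1 + 15ε + 13.5ε²)/(1 − 15ε − 13.5ε²)). In particular the Banach–Mazur distance d(X, ℝ²) is at most this quantity. -/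
theorem jvn_aux {X : Type*} [NormedAddCommGroup X] [NormedSpace ℝ X] (M : ℝ) (hM : 1 ≤ M)
    (H : ∀ a b : X, ‖a + b‖ ^ 2 + ‖a - b‖ ^ 2 ≤ 2 * M * (‖a‖ ^ 2 + ‖b‖ ^ 2))
    (u v : X) (hu : ‖u‖ = 1) (hv : ‖v‖ = 1) (huv : ‖u + v‖ = ‖u - v‖)
    (s t : ℝ) (hst : s ^ 2 + t ^ 2 = 1) :
    2 * ‖s • u + t • v‖ ^ 2 * M ^ 2 ≤
      M ^ 3 * (‖(s ^ 2 - t ^ 2) • u + (2 * s * t) • v‖ ^ 2 + 1) + 4 * (M ^ 3 - 1) ∧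
    ‖(s ^ 2 - t ^ 2) • u + (2 * s * t) • v‖ ^ 2 + 1 ≤
      2 * M * ‖s • u + t • v‖ ^ 2 + 4 * (M ^ 3 - 1) := by
  have hsm : ∀ (r : ℝ) (x : X), ‖r • x‖ ^ 2 = r ^ 2 * ‖x‖ ^ 2 := by
    intro r x
    rw [norm_smul, mul_pow, Real.norm_eq_abs, sq_abs]
  have q1 : ‖u + v‖ ^ 2 ≤ 2 * M := by
    have := H u v
    rw [← huv, hu, hv] at this
    linarith
  have q2 : 2 ≤ M * ‖u + v‖ ^ 2 := by
    have := H (u + v) (u - v)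
    rw [← huv, show u + v + (u - v) = (2 : ℝ) • u by module,
      show u + v - (u - v) = (2 : ℝ) • v by module, hsm, hsm, hu, hv] at this
    linarith
  have A : ‖s • u + t • v‖ ^ 2 + ‖s • u - t • v‖ ^ 2 ≤ 2 * M := by
    have := H (s • u) (t • v)
    rw [hsm, hsm, hu, hv] at this
    nlinarith
  have B : 2 ≤ M * (‖s • u + t • v‖ ^ 2 + ‖s • u - t • v‖ ^ 2) := by
    have := H (s • u + t • v) (s • u - t • v)
    rw [show s • u + t • v + (s • u - t • v) = (2 * s) • u by module,
      show s • u + t • v - (s • u - t • v) = (2 * t) • v by module, hsm, hsm, hu, hv] at this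
    nlinarith
  have C1 : ‖(-t) • u + s • v‖ ^ 2 + ‖s • u - t • v‖ ^ 2 ≤ 2 * M ^ 2 := by
    have := H (((s - t) / 2) • (u + v)) (((s + t) / 2) • (v - u))
    rw [show ((s - t) / 2) • (u + v) + ((s + t) / 2) • (v - u) = (-t) • u + s • v by module,
      show ((s - t) / 2) • (u + v) - ((s + t) / 2) • (v - u) = s • u - t • v by module,
      hsm, hsm, norm_sub_rev v u, ← huv] at this
    have e : ((s - t) / 2) ^ 2 * ‖u + v‖ ^ 2 + ((s + t) / 2) ^ 2 * ‖u + v‖ ^ 2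
      = ‖u + v‖ ^ 2 / 2 := by linear_combination ‖u + v‖ ^ 2 / 2 * hst
    rw [e] at this
    nlinarith
  have C2 : 2 ≤ M ^ 2 * (‖(-t) • u + s • v‖ ^ 2 + ‖s • u - t • v‖ ^ 2) := by
    have := H ((-t) • u + s • v) (s • u - t • v)
    rw [show (-t) • u + s • v + (s • u - t • v) = (s - t) • (u + v) by module,
      show (-t) • u + s • v - (s • u - t • v) = (s + t) • (v - u) by module,
      hsm, hsm, norm_sub_rev v u, ← huv] at this
    have e : (s - t) ^ 2 * ‖u + v‖ ^ 2 + (s + t) ^ 2 * ‖u + v‖ ^ 2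
      = 2 * ‖u + v‖ ^ 2 := by linear_combination 2 * ‖u + v‖ ^ 2 * hst
    rw [e] at this
    nlinarith
  have e1 : s ^ 2 - t ^ 2 = 2 * s * s - 1 := by linear_combination -hst
  have e2 : s ^ 2 - t ^ 2 = 1 - 2 * t * t := by linear_combination hst
  set x := (s ^ 2 - t ^ 2) • u + (2 * s * t) • v with hx
  have x1 : x + u = (2 * s) • (s • u + t • v) := by rw [hx, e1]; module
  have x2 : x - u = (2 * t) • ((-t) • u + s • v) := by rw [hx, e2]; module
  have D1 := H x u
  rw [x1, x2, hsm, hsm, hu] at D1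
  have D2 := H (s • (s • u + t • v)) (t • ((-t) • u + s • v))
  rw [show s • (s • u + t • v) + t • ((-t) • u + s • v) = x by rw [hx]; module,
    show s • (s • u + t • v) - t • ((-t) • u + s • v) = (s ^ 2 + t ^ 2) • u by module,
    hst, one_smul, hsm, hsm, hu] at D2
  generalize ‖s • u + t • v‖ ^ 2 = n at *
  generalize ‖(-t) • u + s • v‖ ^ 2 = n' at *
  generalize ‖s • u - t • v‖ ^ 2 = p at *
  generalize ‖x‖ ^ 2 = w at *
  have ht : t ^ 2 ≤ 1 := by nlinarith [sq_nonneg s]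
  have hs : s ^ 2 = 1 - t ^ 2 := by linarith
  have M3 : 1 ≤ M ^ 3 := one_le_pow₀ hM
  constructor
  · have E : M ^ 2 * (n - n') ≤ 2 * (M ^ 3 - 1) := by nlinarith [sq_nonneg M]
    have E' : t ^ 2 * (M ^ 2 * (n - n')) ≤ 2 * (M ^ 3 - 1) := by
      nlinarith [mul_le_mul_of_nonneg_left E (sq_nonneg t)]
    have D1' : 2 * n - 2 * t ^ 2 * (n - n') ≤ M * (w + 1) := by
      have : (2 * s) ^ 2 * n + (2 * t) ^ 2 * n' = 4 * n - 4 * t ^ 2 * (n - n') := by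
        linear_combination 4 * n * hs
      linarith
    nlinarith [mul_le_mul_of_nonneg_left D1' (sq_nonneg M)]
  · have E : M * (n' - n) ≤ 2 * (M ^ 3 - 1) := by nlinarith
    have E' : t ^ 2 * (M * (n' - n)) ≤ 2 * (M ^ 3 - 1) := by
      nlinarith [mul_le_mul_of_nonneg_left E (sq_nonneg t)]
    have : 2 * M * (s ^ 2 * n + t ^ 2 * n') = 2 * M * n + 2 * (t ^ 2 * (M * (n' - n))) := by
      rw [hs]; ring
    linarith


/-- **Two-dimensional approximate Jordan–von Neumann theorem** (Theorem 2.5).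
A two-dimensional real normed vector space with von Neumann–Jordan constant at most
`ε + 1`, with `1 − 15ε − 13.5ε² > 0`, admits a linear isomorphism `Λ` onto the Euclidean
plane with `‖Λ‖·‖Λ⁻¹‖ ≤ √((1 + 15ε + 13.5ε²)/(1 − 15ε − 13.5ε²))`; in particular the
Banach–Mazur distance from `X` to `ℝ²` is at most this quantity. -/
theorem two_dim_approx_jordan_von_neumann {X : Type*} [NormedAddCommGroup X]
    [NormedSpace ℝ X] (hdim : Module.finrank ℝ X = 2)
    (ε : ℝ) (hε : 0 ≤ ε) (hsmall : 0 < 1 - 15 * ε - 13.5 * ε ^ 2)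
    (hJ : ∀ a b : X, ¬(a = 0 ∧ b = 0) →
      1 / (ε + 1) ≤ (‖a + b‖ ^ 2 + ‖a - b‖ ^ 2) / (2 * (‖a‖ ^ 2 + ‖b‖ ^ 2)) ∧
      (‖a + b‖ ^ 2 + ‖a - b‖ ^ 2) / (2 * (‖a‖ ^ 2 + ‖b‖ ^ 2)) ≤ ε + 1) :
    ∃ Λ : X ≃L[ℝ] EuclideanSpace ℝ (Fin 2),
      ‖(Λ : X →L[ℝ] EuclideanSpace ℝ (Fin 2))‖ *
        ‖(Λ.symm : EuclideanSpace ℝ (Fin 2) →L[ℝ] X)‖ ≤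
        Real.sqrt ((1 + 15 * ε + 13.5 * ε ^ 2) / (1 - 15 * ε - 13.5 * ε ^ 2)) := by
  have hM : 0 < ε + 1 := by linarith
  have hε1 : ε < 1 / 15 := by nlinarith
  have H : ∀ a b : X, ‖a + b‖ ^ 2 + ‖a - b‖ ^ 2 ≤ 2 * (ε + 1) * (‖a‖ ^ 2 + ‖b‖ ^ 2) := by
    intro a b
    by_cases h : a = 0 ∧ b = 0
    · simp [h.1, h.2]
    · have h2 := (hJ a b h).2
      have hp : 0 < 2 * (‖a‖ ^ 2 + ‖b‖ ^ 2) := by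
        rcases not_and_or.1 h with h | h
        · have := norm_pos_iff.2 h
          positivity
        · have := norm_pos_iff.2 h
          positivity
      rw [div_le_iff₀ hp] at h2
      linarith
  have hfd : FiniteDimensional ℝ X := Module.finite_of_finrank_eq_succ hdim
  have hnt : Nontrivial X := Module.nontrivial_of_finrank_pos (R := ℝ) (by omega)
  obtain ⟨u, hu⟩ : ∃ u : X, ‖u‖ = 1 := exists_norm_eq X zero_le_one
  have hrank : 1 < Module.rank ℝ X := by
    rw [← Module.finrank_eq_rank, hdim]
    norm_num
  obtain ⟨v, hv, huv⟩ : ∃ v : X, ‖v‖ = 1 ∧ ‖u + v‖ = ‖u - v‖ := by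
    have hc := (isConnected_sphere hrank (0 : X) zero_le_one).isPreconnected
    have hcont : ContinuousOn (fun v : X => ‖u + v‖ - ‖u - v‖) (Metric.sphere 0 1) := by
      fun_prop
    have := hc.intermediate_value (a := -u) (b := u) (by simp [hu]) (by simp [hu]) hcont
    obtain ⟨v, hv, h0⟩ := this (show (0 : ℝ) ∈ _ by
      constructor <;> simp)
    exact ⟨v, by simpa using hv, sub_eq_zero.1 h0⟩
  have aux := jvn_aux (ε + 1) (by linarith) H u v hu hv huv
  let L : ℂ →ₗ[ℝ] X :=
    { toFun := fun z => z.re • u + z.im • v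
      map_add' := by intro a b; simp only [Complex.add_re, Complex.add_im]; module
      map_smul' := by intro r a; simp; module }
  have hL : ∀ z, L z = z.re • u + z.im • v := fun z => rfl
  have hLc : Continuous fun z => ‖L z‖ ^ 2 := by
    have : Continuous L := L.continuous_of_finiteDimensional
    fun_prop
  have hsq : ∀ z : ℂ, L (z ^ 2) = (z.re ^ 2 - z.im ^ 2) • u + (2 * z.re * z.im) • v := by
    intro z
    rw [hL, pow_two, Complex.mul_re, Complex.mul_im]; module
  have hz1 : ∀ z ∈ Metric.sphere (0 : ℂ) 1, z.re ^ 2 + z.im ^ 2 = 1 := by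
    intro z hz
    have h1 : ‖z‖ = 1 := by simpa using hz
    have := Complex.sq_norm z
    rw [h1, Complex.normSq_apply] at this
    linarith
  have hz2 : ∀ z ∈ Metric.sphere (0 : ℂ) 1, z ^ 2 ∈ Metric.sphere (0 : ℂ) 1 := by
    intro z hz
    have h1 : ‖z‖ = 1 := by simpa using hz
    simp [h1]
  have hne : (Metric.sphere (0 : ℂ) 1).Nonempty := ⟨1, by simp⟩
  set K := 1 + 15 * ε + 13.5 * ε ^ 2 with hK
  set k := 1 - 15 * ε - 13.5 * ε ^ 2 with hk
  have hup : ∀ z ∈ Metric.sphere (0 : ℂ) 1, ‖L z‖ ^ 2 ≤ K := by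
    obtain ⟨z, hz, hmax⟩ := (isCompact_sphere (0 : ℂ) 1).exists_isMaxOn hne hLc.continuousOn
    intro y hy
    refine (hmax hy).trans ?_
    have h1 := (aux z.re z.im (hz1 z hz)).1
    rw [← hsq, ← hL] at h1
    have h2 : ‖L (z ^ 2)‖ ^ 2 ≤ ‖L z‖ ^ 2 := hmax (hz2 z hz)
    change ‖L z‖ ^ 2 ≤ K
    generalize ‖L z‖ ^ 2 = n at *
    generalize ‖L (z ^ 2)‖ ^ 2 = w at *
    have h3 : 2 * n * (ε + 1) ^ 2 ≤ (ε + 1) ^ 3 * (n + 1) + 4 * ((ε + 1) ^ 3 - 1) := by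
      have : 0 ≤ (ε + 1) ^ 3 := by positivity
      nlinarith
    have h4 : 0 < (ε + 1) ^ 2 * (1 - ε) := by
      have : 0 < 1 - ε := by linarith
      positivity
    have h5 : n * ((ε + 1) ^ 2 * (1 - ε)) ≤ K * ((ε + 1) ^ 2 * (1 - ε)) := by
      have h6 : (ε + 1) ^ 3 + 4 * ((ε + 1) ^ 3 - 1) ≤ K * ((ε + 1) ^ 2 * (1 - ε)) := by
        have e3 : 0 ≤ ε * (1 - 15 * ε) := by nlinarith
        rw [hK]
        nlinarith [mul_nonneg hε e3, mul_nonneg hε (mul_nonneg hε e3),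
          mul_nonneg hε (mul_nonneg hε (mul_nonneg hε e3)), pow_nonneg hε 2, pow_nonneg hε 3]
      linarith
    exact le_of_mul_le_mul_right h5 h4
  have hlo : ∀ z ∈ Metric.sphere (0 : ℂ) 1, k ≤ ‖L z‖ ^ 2 := by
    obtain ⟨z, hz, hmin⟩ := (isCompact_sphere (0 : ℂ) 1).exists_isMinOn hne hLc.continuousOn
    intro y hy
    refine le_trans ?_ (hmin hy)
    have h1 := (aux z.re z.im (hz1 z hz)).2
    rw [← hsq, ← hL] at h1
    have h2 : ‖L z‖ ^ 2 ≤ ‖L (z ^ 2)‖ ^ 2 := hmin (hz2 z hz)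
    change k ≤ ‖L z‖ ^ 2
    generalize ‖L z‖ ^ 2 = n at *
    generalize ‖L (z ^ 2)‖ ^ 2 = w at *
    have h4 : 0 < 1 + 2 * ε := by linarith
    have h5 : k * (1 + 2 * ε) ≤ n * (1 + 2 * ε) := by
      have h6 : k * (1 + 2 * ε) ≤ 1 - 4 * ((ε + 1) ^ 3 - 1) := by
        rw [hk]
        nlinarith [pow_nonneg hε 2, pow_nonneg hε 3]
      linarith
    exact le_of_mul_le_mul_right h5 h4
  have hKpos : 0 < K := by positivity
  have hscale : ∀ z : ℂ, z ≠ 0 → ∃ y ∈ Metric.sphere (0 : ℂ) 1, ‖L z‖ ^ 2 = ‖z‖ ^ 2 * ‖L y‖ ^ 2 := by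
    intro z hz
    have hzp : ‖z‖ ≠ 0 := norm_ne_zero_iff.2 hz
    refine ⟨(‖z‖⁻¹ : ℝ) • z, by simp [norm_smul, hzp], ?_⟩
    rw [map_smul, norm_smul, norm_inv, norm_norm]
    field_simp
  have hup' : ∀ z : ℂ, ‖L z‖ ≤ √K * ‖z‖ := by
    intro z
    by_cases hz : z = 0
    · simp [hz]
    · obtain ⟨y, hy, e⟩ := hscale z hz
      apply le_of_sq_le_sq _ (by positivity)
      rw [e, mul_pow, Real.sq_sqrt hKpos.le]
      nlinarith [hup y hy, sq_nonneg ‖z‖]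
  have hlo' : ∀ z : ℂ, √k * ‖z‖ ≤ ‖L z‖ := by
    intro z
    by_cases hz : z = 0
    · simp [hz]
    · obtain ⟨y, hy, e⟩ := hscale z hz
      apply le_of_sq_le_sq _ (by positivity)
      rw [e, mul_pow, Real.sq_sqrt hsmall.le]
      nlinarith [hlo y hy, sq_nonneg ‖z‖]
  have hkp : 0 < √k := Real.sqrt_pos.2 hsmall
  have hinj : Function.Injective L := by
    rw [injective_iff_map_eq_zero]
    intro z hz
    have := hlo' z
    rw [hz, norm_zero] at this
    by_contra h
    have := mul_pos hkp (norm_pos_iff.2 h)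
    linarith
  let e : ℂ ≃ₗ[ℝ] X := LinearMap.linearEquivOfInjective L hinj (by rw [hdim, Complex.finrank_real_complex])
  have he : ∀ z, e z = L z := fun z => rfl
  let J := Complex.orthonormalBasisOneI.repr
  let Λ : X ≃L[ℝ] EuclideanSpace ℝ (Fin 2) :=
    e.symm.toContinuousLinearEquiv.trans J.toContinuousLinearEquiv
  refine ⟨Λ, ?_⟩
  have b1 : ‖(Λ : X →L[ℝ] EuclideanSpace ℝ (Fin 2))‖ ≤ (√k)⁻¹ := by
    refine ContinuousLinearMap.opNorm_le_bound _ (by positivity) fun x => ?_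
    have h1 : (Λ : X →L[ℝ] EuclideanSpace ℝ (Fin 2)) x = J (e.symm x) := rfl
    rw [h1, J.norm_map]
    have h2 := hlo' (e.symm x)
    rw [← he, e.apply_symm_apply] at h2
    rw [inv_mul_eq_div, le_div_iff₀ hkp]
    linarith
  have b2 : ‖(Λ.symm : EuclideanSpace ℝ (Fin 2) →L[ℝ] X)‖ ≤ √K := by
    refine ContinuousLinearMap.opNorm_le_bound _ (by positivity) fun y => ?_
    have h1 : (Λ.symm : EuclideanSpace ℝ (Fin 2) →L[ℝ] X) y = L (J.symm y) := rfl
    rw [h1]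
    have h2 := hup' (J.symm y)
    rwa [J.symm.norm_map] at h2
  calc _ ≤ (√k)⁻¹ * √K := mul_le_mul b1 b2 (norm_nonneg _) (by positivity)
    _ = _ := by rw [Real.sqrt_div hKpos.le]; field_simp
end

section
/- Fix k ≥ 1. There exists a constant C > 0 (depending only on k) such that the following holds: for every real normed vector space X with von Neumann–Jordan constant at most ε + 1 (ε ≥ 0), every linear map Λ : ℝᵏ → X (ℝᵏ with the Euclidean norm) with ‖Λ‖ ≤ 1, writing x₁, …, x_k for the images of the standard basis vectors under Λ, every y ∈ X with ‖y‖ ≤ 1, and all real numbers a₁, …, a_k: |[∑ᵢ aᵢxᵢ, y] − ∑ᵢ aᵢ[xᵢ, y]| ≤ (36kε + Cε²)·(1 + ∑ᵢ aᵢ²). -/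
section helpers

variable {X : Type} [NormedAddCommGroup X] [NormedSpace ℝ X]

def brk (a b : X) : ℝ := ‖a + b‖ ^ 2 - ‖a - b‖ ^ 2

def PJ (X : Type) [NormedAddCommGroup X] (ε : ℝ) : Prop :=
  ∀ a b : X, |‖a + b‖ ^ 2 + ‖a - b‖ ^ 2 - 2 * (‖a‖ ^ 2 + ‖b‖ ^ 2)| ≤ 2 * ε * (‖a‖ ^ 2 + ‖b‖ ^ 2)

lemma pj_of (ε : ℝ) (hε : 0 ≤ ε) (h : ∀ a b : X, ¬(a = 0 ∧ b = 0) →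
          1 / (ε + 1) ≤ (‖a + b‖ ^ 2 + ‖a - b‖ ^ 2) / (2 * (‖a‖ ^ 2 + ‖b‖ ^ 2)) ∧
          (‖a + b‖ ^ 2 + ‖a - b‖ ^ 2) / (2 * (‖a‖ ^ 2 + ‖b‖ ^ 2)) ≤ ε + 1) : PJ X ε := by
  intro a b
  by_cases h0 : a = 0 ∧ b = 0
  · obtain ⟨rfl, rfl⟩ := h0
    simp
  obtain ⟨h1, h2⟩ := h a b h0
  have hpos : 0 < ‖a‖ ^ 2 + ‖b‖ ^ 2 := by
    by_cases ha : a = 0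
    · have hb : b ≠ 0 := fun hb => h0 ⟨ha, hb⟩
      have := norm_pos_iff.2 hb
      positivity
    · have := norm_pos_iff.2 ha
      positivity
  rw [div_le_iff₀ (by positivity)] at h2
  rw [div_le_div_iff₀ (by positivity) (by positivity)] at h1
  set S := ‖a + b‖ ^ 2 + ‖a - b‖ ^ 2
  set T := ‖a‖ ^ 2 + ‖b‖ ^ 2
  rw [abs_le]
  constructor
  · by_contra hc
    push Not at hc
    have : S * (ε + 1) < (2 * T - 2 * ε * T) * (ε + 1) :=
      mul_lt_mul_of_pos_right (by linarith) (by positivity)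
    nlinarith [mul_nonneg hpos.le (sq_nonneg ε)]
  · linarith

lemma brk_comm (a b : X) : brk a b = brk b a := by
  unfold brk
  rw [add_comm a b, norm_sub_rev]

lemma brk_neg (a b : X) : brk (-a) b = - brk a b := by
  unfold brk
  rw [show -a + b = -(a - b) by abel, show -a - b = -(a + b) by abel, norm_neg, norm_neg]
  ring

lemma brk_smul (t : ℝ) (a b : X) : brk (t • a) (t • b) = t ^ 2 * brk a b := by
  unfold brk
  rw [← smul_add, ← smul_sub, norm_smul, norm_smul, mul_pow, mul_pow, Real.norm_eq_abs, sq_abs]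
  ring

lemma brk_mid {ε : ℝ} (hε : 0 ≤ ε) (h : PJ X ε) (u v y : X) :
    |brk (u + v) y + brk (u - v) y - 2 * brk u y| ≤
      4 * ε * ((1 + ε) * (‖u‖ ^ 2 + ‖y‖ ^ 2) + ‖v‖ ^ 2) := by
  have h1 := abs_le.1 (h (u + y) v)
  have h2 := abs_le.1 (h (u - y) v)
  have h3 := (abs_le.1 (h u y)).2
  unfold brk
  rw [show u + v + y = u + y + v by abel, show u + v - y = u - y + v by abel,
    show u - v + y = u + y - v by abel, show u - v - y = u - y - v by abel]
  have h4 : 2 * ε * (‖u + y‖ ^ 2 + ‖u - y‖ ^ 2) ≤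
      2 * ε * (2 * (1 + ε) * (‖u‖ ^ 2 + ‖y‖ ^ 2)) :=
    mul_le_mul_of_nonneg_left (by linarith) (by positivity)
  rw [abs_le]
  constructor <;> linarith [h1.1, h1.2, h2.1, h2.2]

lemma brk_zero (y : X) : brk 0 y = 0 := by simp [brk]

lemma brk_bound (x y : X) (hx : ‖x‖ ≤ 1) (hy : ‖y‖ ≤ 1) : |brk x y| ≤ 4 := by
  have h1 := norm_add_le x y
  have h2 := norm_sub_le x y
  have h3 := norm_nonneg (x + y)
  have h4 := norm_nonneg (x - y)
  unfold brk
  rw [abs_le]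
  constructor <;> nlinarith

lemma hom_step {ε : ℝ} (hε : 0 ≤ ε) (h : PJ X ε) (x y : X) (hx : ‖x‖ ≤ 1) (hy : ‖y‖ ≤ 1)
    (B : ℝ) (hB : ∀ t : ℝ, 0 ≤ t → t ≤ 1 → |brk (t • x) y - t * brk x y| ≤ B)
    (t : ℝ) (ht0 : 0 ≤ t) (ht1 : t ≤ 1) :
    |brk (t • x) y - t * brk x y| ≤ B / 2 + 4 * ε * (1 + ε) := by
  have hx2 : ‖x‖ ^ 2 ≤ 1 := pow_le_one₀ (norm_nonneg _) hx
  have hy2 : ‖y‖ ^ 2 ≤ 1 := pow_le_one₀ (norm_nonneg _) hy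
  have key : ∀ s r : ℝ, s ^ 2 + r ^ 2 ≤ 1 →
      |brk ((s + r) • x) y + brk ((s - r) • x) y - 2 * brk (s • x) y| ≤ 8 * ε * (1 + ε) := by
    intro s r hsr
    have := brk_mid hε h (s • x) (r • x) y
    rw [← add_smul, ← sub_smul] at this
    refine this.trans ?_
    rw [norm_smul, norm_smul, mul_pow, mul_pow, Real.norm_eq_abs, Real.norm_eq_abs, sq_abs, sq_abs]
    have e1 : s ^ 2 * ‖x‖ ^ 2 ≤ s ^ 2 := mul_le_of_le_one_right (sq_nonneg _) hx2
    have e2 : r ^ 2 * ‖x‖ ^ 2 ≤ r ^ 2 := mul_le_of_le_one_right (sq_nonneg _) hx2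
    have e3 : (1 + ε) * (s ^ 2 * ‖x‖ ^ 2 + ‖y‖ ^ 2) ≤ (1 + ε) * (s ^ 2 + 1) :=
      mul_le_mul_of_nonneg_left (by linarith) (by positivity)
    have e4 : (1 + ε) * (s ^ 2 + 1) + r ^ 2 ≤ (1 + ε) * 2 := by
      nlinarith [sq_nonneg r, mul_nonneg hε (sq_nonneg r)]
    calc _ ≤ 4 * ε * ((1 + ε) * 2) :=
          mul_le_mul_of_nonneg_left (by linarith) (by positivity)
      _ = _ := by ring
  rcases le_total t (1 / 2) with h2 | h2
  · have k1 := abs_le.1 (key t t (by nlinarith))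
    have k2 := abs_le.1 (hB (t + t) (by linarith) (by linarith))
    rw [sub_self, zero_smul, brk_zero] at k1
    rw [abs_le]
    constructor <;> linarith [k1.1, k1.2, k2.1, k2.2]
  · have k1 := abs_le.1 (key t (1 - t) (by nlinarith))
    have k2 := abs_le.1 (hB (t - (1 - t)) (by linarith) (by linarith))
    rw [add_sub_cancel, one_smul] at k1
    rw [abs_le]
    constructor <;> linarith [k1.1, k1.2, k2.1, k2.2]

lemma hom_unit {ε : ℝ} (hε : 0 ≤ ε) (h : PJ X ε) (x y : X) (hx : ‖x‖ ≤ 1) (hy : ‖y‖ ≤ 1)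
    (t : ℝ) (ht0 : 0 ≤ t) (ht1 : t ≤ 1) :
    |brk (t • x) y - t * brk x y| ≤ 8 * ε * (1 + ε) := by
  have main : ∀ n : ℕ, ∀ t : ℝ, 0 ≤ t → t ≤ 1 →
      |brk (t • x) y - t * brk x y| ≤ 8 * (1 / 2) ^ n + 8 * ε * (1 + ε) := by
    intro n
    induction n with
    | zero =>
      intro t h0 h1
      have e1 := abs_le.1 (brk_bound (t • x) y (by
        rw [norm_smul, Real.norm_eq_abs, abs_of_nonneg h0]
        nlinarith [norm_nonneg x]) hy)
      have e2 := abs_le.1 (brk_bound x y hx hy)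
      have : 0 ≤ 8 * ε * (1 + ε) := by positivity
      rw [abs_le]
      constructor <;> nlinarith [e1.1, e1.2, e2.1, e2.2]
    | succ n ih =>
      intro t h0 h1
      have := hom_step hε h x y hx hy _ ih t h0 h1
      refine this.trans (le_of_eq ?_)
      rw [pow_succ]
      ring
  have lim : Filter.Tendsto (fun n : ℕ => 8 * (1 / 2 : ℝ) ^ n + 8 * ε * (1 + ε)) Filter.atTop
      (nhds (8 * 0 + 8 * ε * (1 + ε))) :=
    ((tendsto_pow_atTop_nhds_zero_of_lt_one (by norm_num) (by norm_num)).const_mul 8).add_const _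
  have := ge_of_tendsto' lim (fun n => main n t ht0 ht1)
  linarith

lemma hom_nonneg {ε : ℝ} (hε : 0 ≤ ε) (h : PJ X ε) (x y : X) (hx : ‖x‖ ≤ 1) (hy : ‖y‖ ≤ 1)
    (t : ℝ) (ht0 : 0 ≤ t) :
    |brk (t • x) y - t * brk x y| ≤ 8 * ε * (1 + ε) * (1 + t ^ 2) := by
  have hD : 0 ≤ 8 * ε * (1 + ε) := by positivity
  rcases le_total t 1 with h1 | h1
  · refine (hom_unit hε h x y hx hy t ht0 h1).trans ?_
    nlinarith [mul_nonneg hD (sq_nonneg t)]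
  · have htp : 0 < t := by linarith
    have e := hom_unit hε h y x hy hx t⁻¹ (by positivity) (inv_le_one_of_one_le₀ h1)
    have e1 : brk (t • x) y = t ^ 2 * brk (t⁻¹ • y) x := by
      rw [brk_comm (t⁻¹ • y), ← brk_smul, smul_smul, mul_inv_cancel₀ htp.ne', one_smul]
    have e2 : brk (t • x) y - t * brk x y = t ^ 2 * (brk (t⁻¹ • y) x - t⁻¹ * brk y x) := by
      rw [e1, brk_comm y x]
      field_simp
    rw [e2, abs_mul, abs_of_nonneg (sq_nonneg t)]
    nlinarith [mul_le_mul_of_nonneg_left e (sq_nonneg t)]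

lemma hom_all {ε : ℝ} (hε : 0 ≤ ε) (h : PJ X ε) (x y : X) (hx : ‖x‖ ≤ 1) (hy : ‖y‖ ≤ 1)
    (t : ℝ) :
    |brk (t • x) y - t * brk x y| ≤ 8 * ε * (1 + ε) * (1 + t ^ 2) := by
  rcases le_total 0 t with h0 | h0
  · exact hom_nonneg hε h x y hx hy t h0
  · have := hom_nonneg hε h x y hx hy (-t) (by linarith)
    rw [neg_smul, brk_neg, ← abs_neg] at this
    convert this using 2 <;> ring

lemma add_approx {ε : ℝ} (hε : 0 ≤ ε) (h : PJ X ε) (p q y : X) (hy : ‖y‖ ≤ 1) (A : ℝ)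
    (h1 : ‖p + q‖ ^ 2 ≤ A) (h2 : ‖p - q‖ ^ 2 ≤ A) :
    |brk (p + q) y - (brk p y + brk q y)| ≤ 8 * ε * (1 + ε) * (1 + A) := by
  have hy2 : ‖y‖ ^ 2 ≤ 1 := pow_le_one₀ (norm_nonneg _) hy
  have hA : 0 ≤ A := (sq_nonneg _).trans h1
  set u : X := (1 / 2 : ℝ) • (p + q) with hu
  set v : X := (1 / 2 : ℝ) • (p - q) with hv
  have nu : ‖u‖ ^ 2 ≤ A / 4 := by
    rw [hu, norm_smul, mul_pow]
    norm_num
    linarith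
  have nv : ‖v‖ ^ 2 ≤ A / 4 := by
    rw [hv, norm_smul, mul_pow]
    norm_num
    linarith
  have m1 := brk_mid hε h u v y
  have m2 := brk_mid hε h u u y
  have e1 : u + v = p := by rw [hu, hv]; module
  have e2 : u - v = q := by rw [hu, hv]; module
  have e3 : u + u = p + q := by rw [hu]; module
  rw [e1, e2] at m1
  rw [e3, sub_self, brk_zero] at m2
  have b : ∀ w : X, ‖w‖ ^ 2 ≤ A / 4 →
      4 * ε * ((1 + ε) * (‖u‖ ^ 2 + ‖y‖ ^ 2) + ‖w‖ ^ 2) ≤ 4 * ε * ((1 + ε) * (1 + A)) := by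
    intro w hw
    refine mul_le_mul_of_nonneg_left ?_ (by positivity)
    have : (1 + ε) * (‖u‖ ^ 2 + ‖y‖ ^ 2) ≤ (1 + ε) * (A / 4 + 1) :=
      mul_le_mul_of_nonneg_left (by linarith) (by positivity)
    nlinarith [mul_nonneg hε hA]
  have m1 := abs_le.1 (m1.trans (b v nv))
  have m2 := abs_le.1 (m2.trans (b u nu))
  rw [abs_le]
  constructor <;> linarith [m1.1, m1.2, m2.1, m2.2]

lemma norm_comb {k : ℕ} (Λ : EuclideanSpace ℝ (Fin k) →L[ℝ] X) (hΛ : ‖Λ‖ ≤ 1) (x : Fin k → X)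
    (hx : ∀ i, x i = Λ (EuclideanSpace.single i 1)) (c : Fin k → ℝ) :
    ‖∑ i, c i • x i‖ ^ 2 ≤ ∑ i, c i ^ 2 := by
  have e : ∑ i, c i • x i = Λ (WithLp.toLp 2 c) := by
    have : (WithLp.toLp 2 c : EuclideanSpace ℝ (Fin k)) =
        ∑ i, c i • EuclideanSpace.single i (1 : ℝ) := by
      ext j
      simp [Finset.sum_apply, Pi.single_apply]
    rw [this, map_sum]
    simp [hx]
  have e2 : ‖(WithLp.toLp 2 c : EuclideanSpace ℝ (Fin k))‖ ^ 2 = ∑ i, c i ^ 2 := by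
    rw [EuclideanSpace.norm_sq_eq]
    simp
  rw [e, ← e2]
  exact pow_le_pow_left₀ (norm_nonneg _) ((Λ.le_of_opNorm_le hΛ _).trans (by simp)) 2

lemma sum_approx {k : ℕ} {ε : ℝ} (hε : 0 ≤ ε) (h : PJ X ε)
    (Λ : EuclideanSpace ℝ (Fin k) →L[ℝ] X) (hΛ : ‖Λ‖ ≤ 1) (x : Fin k → X)
    (hx : ∀ i, x i = Λ (EuclideanSpace.single i 1)) (y : X) (hy : ‖y‖ ≤ 1) (a : Fin k → ℝ)
    (s : Finset (Fin k)) :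
    |brk (∑ i ∈ s, a i • x i) y - ∑ i ∈ s, brk (a i • x i) y| ≤
      s.card * (8 * ε * (1 + ε) * (1 + ∑ i, a i ^ 2)) := by
  classical
  induction s using Finset.induction_on with
  | empty => simp [brk_zero]
  | insert i s his ih =>
    have key : ∀ σ : ℝ, σ ^ 2 = 1 →
        ‖a i • x i + σ • ∑ j ∈ s, a j • x j‖ ^ 2 ≤ ∑ j, a j ^ 2 := by
      intro σ hσ
      have e : a i • x i + σ • ∑ j ∈ s, a j • x j =
          ∑ j, (if j = i then a i else if j ∈ s then σ * a j else 0) • x j := by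
        have : ∀ j, (if j = i then a i else if j ∈ s then σ * a j else 0) • x j =
            (if j = i then a i • x i else 0) + (if j ∈ s then σ • a j • x j else 0) := by
          intro j
          by_cases hj : j = i
          · subst hj; simp [his]
          · by_cases hs : j ∈ s <;> simp [hj, hs, mul_smul]
        rw [Finset.sum_congr rfl (fun j _ => this j), Finset.sum_add_distrib]
        simp [Finset.smul_sum]
      rw [e]
      refine (norm_comb Λ hΛ x hx _).trans (Finset.sum_le_sum fun j _ => ?_)
      by_cases hj : j = i
      · subst hj; simp
      · by_cases hs : j ∈ s
        · simp [hj, hs, mul_pow, hσ]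
        · simp [hj, hs, sq_nonneg]
    have k1 := key 1 (by norm_num)
    have k2 := key (-1) (by norm_num)
    rw [one_smul] at k1
    rw [neg_one_smul, ← sub_eq_add_neg] at k2
    have m := abs_le.1 (add_approx hε h _ _ y hy _ k1 k2)
    have ih := abs_le.1 ih
    rw [Finset.sum_insert his, Finset.sum_insert his, Finset.card_insert_of_notMem his]
    push_cast
    rw [abs_le]
    constructor <;> linarith [m.1, m.2, ih.1, ih.2]

end helpers

/-- **Approximate linearity of the bracket** (Lemma 3.1). For each `k ≥ 1` there is a
constant `C > 0` such that in any real normed vector space with von Neumann–Jordan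
constant at most `ε + 1`, if `x₁, …, x_k` are the images of the standard basis of
Euclidean `ℝᵏ` under a linear map of norm at most `1`, `‖y‖ ≤ 1`, and `a₁, …, a_k ∈ ℝ`,
then `|[∑ aᵢxᵢ, y] − ∑ aᵢ[xᵢ, y]| ≤ (36kε + Cε²)(1 + ∑ aᵢ²)`,
where `[a, b] = ‖a+b‖² − ‖a−b‖²`. -/
theorem bracket_approx_linear (k : ℕ) (hk : 1 ≤ k) :
    ∃ C : ℝ, 0 < C ∧
      ∀ (X : Type) (_ : NormedAddCommGroup X) (_ : NormedSpace ℝ X)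
        (ε : ℝ), 0 ≤ ε →
        (∀ a b : X, ¬(a = 0 ∧ b = 0) →
          1 / (ε + 1) ≤ (‖a + b‖ ^ 2 + ‖a - b‖ ^ 2) / (2 * (‖a‖ ^ 2 + ‖b‖ ^ 2)) ∧
          (‖a + b‖ ^ 2 + ‖a - b‖ ^ 2) / (2 * (‖a‖ ^ 2 + ‖b‖ ^ 2)) ≤ ε + 1) →
        ∀ Λ : EuclideanSpace ℝ (Fin k) →L[ℝ] X, ‖Λ‖ ≤ 1 →
        ∀ x : Fin k → X, (∀ i, x i = Λ (EuclideanSpace.single i 1)) →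
        ∀ y : X, ‖y‖ ≤ 1 →
        ∀ a : Fin k → ℝ,
          |(‖(∑ i, a i • x i) + y‖ ^ 2 - ‖(∑ i, a i • x i) - y‖ ^ 2) -
              ∑ i, a i * (‖x i + y‖ ^ 2 - ‖x i - y‖ ^ 2)| ≤
            (36 * k * ε + C * ε ^ 2) * (1 + ∑ i, (a i) ^ 2) := by
  have hk1 : (1 : ℝ) ≤ k := by exact_mod_cast hk
  refine ⟨16 * k, by positivity, ?_⟩
  intro X _ _ ε hε hJ Λ hΛ x hx y hy a
  have h : PJ X ε := pj_of ε hε hJ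
  have s1 := sum_approx hε h Λ hΛ x hx y hy a Finset.univ
  have hxn : ∀ i, ‖x i‖ ≤ 1 := by
    intro i
    rw [hx i]
    exact (Λ.le_of_opNorm_le hΛ _).trans (by simp)
  have s2 : |∑ i, brk (a i • x i) y - ∑ i, a i * brk (x i) y| ≤
      8 * ε * (1 + ε) * (k + ∑ i, a i ^ 2) := by
    rw [← Finset.sum_sub_distrib]
    refine (Finset.abs_sum_le_sum_abs _ _).trans ?_
    refine (Finset.sum_le_sum fun i _ => hom_all hε h (x i) y (hxn i) hy (a i)).trans ?_
    rw [← Finset.mul_sum, Finset.sum_add_distrib]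
    simp
  have hA : 0 ≤ ∑ i, a i ^ 2 := Finset.sum_nonneg fun i _ => sq_nonneg _
  have hD : 0 ≤ 8 * ε * (1 + ε) := by positivity
  rw [Finset.card_univ, Fintype.card_fin] at s1
  have s3 : 8 * ε * (1 + ε) * (k + ∑ i, a i ^ 2) ≤
      8 * ε * (1 + ε) * (k * (1 + ∑ i, a i ^ 2)) :=
    mul_le_mul_of_nonneg_left (by nlinarith) hD
  have s4 : 0 ≤ 20 * k * ε * (1 + ∑ i, a i ^ 2) := by positivity
  change |brk (∑ i, a i • x i) y - ∑ i, a i * brk (x i) y| ≤ _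
  have s5 := abs_sub_le (brk (∑ i, a i • x i) y) (∑ i, brk (a i • x i) y)
    (∑ i, a i * brk (x i) y)
  refine s5.trans ((add_le_add s1 (s2.trans s3)).trans ?_)
  linarith
end

section
/- Fix n ≥ 2. There exists a constant C > 0 (depending only on n) such that the following holds: let X be an n-dimensional real normed vector space with von Neumann–Jordan constant at most ε + 1 (ε ≥ 0), let Λ : ℝⁿ⁻¹ → X (ℝⁿ⁻¹ with the Euclidean norm) be an injective linear map onto a subspace Y of X with ‖Λ‖ ≤ 1 and ‖Λ⁻¹‖ ≤ K (where K ≥ 1), let x₁, …, x_{n−1} ∈ X be the images of the standard basis vectors under Λ, and let x_n ∈ X satisfy ‖x_n‖ = 1 and |[xᵢ, x_n]| ≤ δ for all i < n. Then for all real numbers a₁, …, a_{n−1}: |‖∑_{i<n} aᵢxᵢ + x_n‖²/(‖∑_{i<n} aᵢxᵢ‖² + 1) − 1| ≤ ε + (K²/2)·(√(n−1)·δ + 36(n−1)ε + Cε²). -/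
/-- The bracket. -/
noncomputable def br {X : Type} [NormedAddCommGroup X] (a b : X) : ℝ :=
  ‖a + b‖ ^ 2 - ‖a - b‖ ^ 2

lemma br_symm {X : Type} [NormedAddCommGroup X] (a b : X) : br a b = br b a := by
  unfold br
  rw [add_comm, norm_sub_rev]

lemma br_zero {X : Type} [NormedAddCommGroup X] (b : X) : br 0 b = 0 := by
  simp [br]

lemma br_neg {X : Type} [NormedAddCommGroup X] (a b : X) : br (-a) b = - br a b := by
  unfold br
  have h1 : ‖-a + b‖ = ‖a - b‖ := by rw [← norm_neg]; congr 1; abel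
  have h2 : ‖-a - b‖ = ‖a + b‖ := by rw [← norm_neg]; congr 1; abel
  rw [h1, h2]; ring

lemma br_smul {X : Type} [NormedAddCommGroup X] [NormedSpace ℝ X] (t : ℝ) (a b : X) :
    br (t • a) (t • b) = t ^ 2 * br a b := by
  unfold br
  rw [← smul_add, ← smul_sub, norm_smul, norm_smul, mul_pow, mul_pow, Real.norm_eq_abs, sq_abs]
  ring

lemma br_bound {X : Type} [NormedAddCommGroup X] (a b : X) :
    |br a b| ≤ 2 * (‖a‖ ^ 2 + ‖b‖ ^ 2) := by
  unfold br
  have h1 := norm_add_le a b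
  have h2 := norm_sub_le a b
  have h3 : ‖a + b‖ ^ 2 ≤ (‖a‖ + ‖b‖) ^ 2 := by gcongr
  have h4 : ‖a - b‖ ^ 2 ≤ (‖a‖ + ‖b‖) ^ 2 := by gcongr
  rw [abs_le]
  constructor <;> nlinarith [sq_nonneg (‖a‖ - ‖b‖), sq_nonneg ‖a + b‖, sq_nonneg ‖a - b‖]

lemma jensen {X : Type} [NormedAddCommGroup X] [NormedSpace ℝ X] (ε : ℝ) (h0 : 0 ≤ ε)
    (h1 : ε ≤ 1 / 18)
    (hP : ∀ a b : X, |‖a + b‖ ^ 2 + ‖a - b‖ ^ 2 - 2 * (‖a‖ ^ 2 + ‖b‖ ^ 2)| ≤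
      2 * ε * (‖a‖ ^ 2 + ‖b‖ ^ 2)) (w x y z : X) (hw : (2 : ℝ) • w = x + y) :
    |2 * br w z - br x z - br y z| ≤ 5 / 2 * ε * (‖x‖ ^ 2 + ‖y‖ ^ 2 + 2 * ‖z‖ ^ 2) := by
  have e1 := hP (x + z) (y + z)
  have e2 := hP (x - z) (y - z)
  have e3 := (abs_le.1 (hP x z)).2
  have e4 := (abs_le.1 (hP y z)).2
  have f1 : x + z + (y + z) = (2 : ℝ) • (w + z) := by
    rw [smul_add, hw, two_smul]; abel
  have f2 : x - z + (y - z) = (2 : ℝ) • (w - z) := by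
    rw [smul_sub, hw, two_smul]; abel
  have f3 : x + z - (y + z) = x - y := by abel
  have f4 : x - z - (y - z) = x - y := by abel
  rw [f1, f3, norm_smul, mul_pow] at e1
  rw [f2, f4, norm_smul, mul_pow] at e2
  norm_num at e1 e2
  unfold br
  rw [abs_le] at e1 e2
  set S := ‖x‖ ^ 2 + ‖y‖ ^ 2 + 2 * ‖z‖ ^ 2 with hS
  have hS0 : 0 ≤ S := by positivity
  have hT : ‖x + z‖ ^ 2 + ‖x - z‖ ^ 2 + ‖y + z‖ ^ 2 + ‖y - z‖ ^ 2 ≤ 5 / 2 * S := by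
    have : ε * S ≤ 1 / 18 * S := by gcongr
    nlinarith
  have hT2 := mul_le_mul_of_nonneg_left hT h0
  rw [abs_le]
  constructor <;> nlinarith

lemma dyadic (g : ℝ → ℝ) (e B : ℝ) (hb : ∀ a, 0 ≤ a → a ≤ 1 → |g a| ≤ B)
    (h1 : ∀ a, 0 ≤ a → a ≤ 1 → |2 * g (a / 2) - g a| ≤ e)
    (h2 : ∀ a, 0 ≤ a → a ≤ 1 → |2 * g ((a + 1) / 2) - g a| ≤ e) :
    ∀ a, 0 ≤ a → a ≤ 1 → |g a| ≤ e := by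
  have key : ∀ k : ℕ, ∀ a, 0 ≤ a → a ≤ 1 → |g a| ≤ e + B * (1 / 2) ^ k := by
    have he : 0 ≤ e := le_trans (abs_nonneg _) (h1 0 le_rfl zero_le_one)
    intro k
    induction k with
    | zero => intro a ha ha'; have := hb a ha ha'; simp; linarith
    | succ k ih =>
      intro a ha ha'
      rw [pow_succ]
      by_cases h : a ≤ 1 / 2
      · have i1 := ih (2 * a) (by linarith) (by linarith)
        have i2 := h1 (2 * a) (by linarith) (by linarith)
        rw [show 2 * a / 2 = a by ring] at i2
        rw [abs_le] at *
        constructor <;> linarith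
      · push Not at h
        have i1 := ih (2 * a - 1) (by linarith) (by linarith)
        have i2 := h2 (2 * a - 1) (by linarith) (by linarith)
        rw [show (2 * a - 1 + 1) / 2 = a by ring] at i2
        rw [abs_le] at *
        constructor <;> linarith
  intro a ha ha'
  have ht : Filter.Tendsto (fun k : ℕ => e + B * (1 / 2 : ℝ) ^ k) Filter.atTop (nhds (e + B * 0)) :=
    ((tendsto_pow_atTop_nhds_zero_of_lt_one (by norm_num) (by norm_num)).const_mul B).const_add e
  have := ge_of_tendsto' ht (fun k => key k a ha ha')
  linarith

lemma homog1 {X : Type} [NormedAddCommGroup X] [NormedSpace ℝ X] (ε : ℝ) (h0 : 0 ≤ ε)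
    (h1 : ε ≤ 1 / 18)
    (hP : ∀ a b : X, |‖a + b‖ ^ 2 + ‖a - b‖ ^ 2 - 2 * (‖a‖ ^ 2 + ‖b‖ ^ 2)| ≤
      2 * ε * (‖a‖ ^ 2 + ‖b‖ ^ 2)) (x z : X) (a : ℝ) (ha : 0 ≤ a) (ha' : a ≤ 1) :
    |br (a • x) z - a * br x z| ≤ 5 * ε * (‖x‖ ^ 2 + ‖z‖ ^ 2) := by
  have hn : ∀ a : ℝ, 0 ≤ a → a ≤ 1 → ‖a • x‖ ^ 2 ≤ ‖x‖ ^ 2 := by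
    intro a ha ha'
    rw [norm_smul, Real.norm_of_nonneg ha]
    have : a * ‖x‖ ≤ ‖x‖ := mul_le_of_le_one_left (norm_nonneg _) ha'
    gcongr
  refine dyadic (fun a => br (a • x) z - a * br x z) _ (4 * (‖x‖ ^ 2 + ‖z‖ ^ 2))
    ?_ ?_ ?_ a ha ha'
  · intro a ha ha'
    have i1 := br_bound (a • x) z
    have i2 := br_bound x z
    have i3 := hn a ha ha'
    have i4 : |a * br x z| ≤ |br x z| := by
      rw [abs_mul, abs_of_nonneg ha]; exact mul_le_of_le_one_left (abs_nonneg _) ha'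
    have i5 := abs_sub (br (a • x) z) (a * br x z)
    linarith
  · intro a ha ha'
    have i := jensen ε h0 h1 hP ((a / 2) • x) (a • x) 0 z (by rw [smul_smul, add_zero]; congr 1; ring)
    have i3 := mul_le_mul_of_nonneg_left (hn a ha ha') h0
    have i4 : 0 ≤ ε * ‖x‖ ^ 2 := by positivity
    simp only [br_zero, norm_zero] at i ⊢
    rw [abs_le] at *
    constructor <;> nlinarith
  · intro a ha ha'
    have i := jensen ε h0 h1 hP (((a + 1) / 2) • x) (a • x) x z
      (by rw [smul_smul, show 2 * ((a + 1) / 2) = a + 1 by ring, add_smul, one_smul])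
    have i3 := mul_le_mul_of_nonneg_left (hn a ha ha') h0
    rw [abs_le] at *
    constructor <;> nlinarith

lemma homog2 {X : Type} [NormedAddCommGroup X] [NormedSpace ℝ X] (ε : ℝ) (h0 : 0 ≤ ε)
    (h1 : ε ≤ 1 / 18)
    (hP : ∀ a b : X, |‖a + b‖ ^ 2 + ‖a - b‖ ^ 2 - 2 * (‖a‖ ^ 2 + ‖b‖ ^ 2)| ≤
      2 * ε * (‖a‖ ^ 2 + ‖b‖ ^ 2)) (x z : X) (a : ℝ) (ha : 0 ≤ a) :
    |br (a • x) z - a * br x z| ≤ 5 * ε * (‖x‖ ^ 2 + ‖z‖ ^ 2) * (1 + a ^ 2) := by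
  have hp : 0 ≤ 5 * ε * (‖x‖ ^ 2 + ‖z‖ ^ 2) := by positivity
  by_cases h : a ≤ 1
  · have := homog1 ε h0 h1 hP x z a ha h
    nlinarith [mul_nonneg hp (sq_nonneg a)]
  · push Not at h
    have i := homog1 ε h0 h1 hP z x a⁻¹ (by positivity) (inv_le_one_of_one_le₀ h.le)
    have hz : a • (a⁻¹ • z) = z := by rw [smul_smul, mul_inv_cancel₀ (by positivity), one_smul]
    have e := br_smul a x (a⁻¹ • z)
    rw [hz] at e
    rw [br_symm, br_symm z x] at i
    have e2 : br (a • x) z - a * br x z = a ^ 2 * (br x (a⁻¹ • z) - a⁻¹ * br x z) := by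
      rw [e]; field_simp
    rw [e2, abs_mul, abs_of_nonneg (sq_nonneg a)]
    have := mul_le_mul_of_nonneg_left i (sq_nonneg a)
    nlinarith

lemma homog {X : Type} [NormedAddCommGroup X] [NormedSpace ℝ X] (ε : ℝ) (h0 : 0 ≤ ε)
    (h1 : ε ≤ 1 / 18)
    (hP : ∀ a b : X, |‖a + b‖ ^ 2 + ‖a - b‖ ^ 2 - 2 * (‖a‖ ^ 2 + ‖b‖ ^ 2)| ≤
      2 * ε * (‖a‖ ^ 2 + ‖b‖ ^ 2)) (x z : X) (a : ℝ) :
    |br (a • x) z - a * br x z| ≤ 5 * ε * (‖x‖ ^ 2 + ‖z‖ ^ 2) * (1 + a ^ 2) := by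
  by_cases h : 0 ≤ a
  · exact homog2 ε h0 h1 hP x z a h
  · push Not at h
    have i := homog2 ε h0 h1 hP x z (-a) (by linarith)
    rw [neg_smul, br_neg] at i
    rw [← abs_neg]
    convert i using 2 <;> ring

lemma addit {X : Type} [NormedAddCommGroup X] [NormedSpace ℝ X] (ε : ℝ) (h0 : 0 ≤ ε)
    (h1 : ε ≤ 1 / 18)
    (hP : ∀ a b : X, |‖a + b‖ ^ 2 + ‖a - b‖ ^ 2 - 2 * (‖a‖ ^ 2 + ‖b‖ ^ 2)| ≤
      2 * ε * (‖a‖ ^ 2 + ‖b‖ ^ 2)) (x y z : X) :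
    |br (x + y) z - br x z - br y z| ≤
      5 / 2 * ε * (‖x‖ ^ 2 + ‖y‖ ^ 2 + ‖x + y‖ ^ 2 + 4 * ‖z‖ ^ 2) := by
  have i1 := jensen ε h0 h1 hP ((1 / 2 : ℝ) • (x + y)) x y z (by rw [smul_smul]; norm_num)
  have i2 := jensen ε h0 h1 hP ((1 / 2 : ℝ) • (x + y)) (x + y) 0 z (by rw [smul_smul]; norm_num)
  simp only [br_zero, norm_zero] at i2
  rw [abs_le] at *
  constructor <;> linarith

lemma sumbr {X : Type} [NormedAddCommGroup X] [NormedSpace ℝ X] (ε : ℝ) (h0 : 0 ≤ ε)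
    (h1 : ε ≤ 1 / 18)
    (hP : ∀ a b : X, |‖a + b‖ ^ 2 + ‖a - b‖ ^ 2 - 2 * (‖a‖ ^ 2 + ‖b‖ ^ 2)| ≤
      2 * ε * (‖a‖ ^ 2 + ‖b‖ ^ 2)) {ι : Type} (v : ι → X) (z : X) (hz : ‖z‖ = 1) (R : ℝ)
    (hR : ∀ s : Finset ι, ‖∑ i ∈ s, v i‖ ^ 2 ≤ R) (s : Finset ι) :
    |br (∑ i ∈ s, v i) z - ∑ i ∈ s, br (v i) z| ≤ s.card * (5 / 2 * ε * (3 * R + 4)) := by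
  classical
  induction s using Finset.induction_on with
  | empty => simp [br_zero]
  | insert a s ha ih =>
    have r1 := hR s
    have r2 := hR {a}
    have r3 := hR (insert a s)
    rw [Finset.sum_insert ha] at r3 ⊢
    rw [Finset.sum_singleton] at r2
    rw [Finset.sum_insert ha, Finset.card_insert_of_notMem ha]
    have i := addit ε h0 h1 hP (v a) (∑ i ∈ s, v i) z
    rw [hz] at i
    have j : 5 / 2 * ε * (‖v a‖ ^ 2 + ‖∑ i ∈ s, v i‖ ^ 2 + ‖v a + ∑ i ∈ s, v i‖ ^ 2 + 4 * 1 ^ 2)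
      ≤ 5 / 2 * ε * (3 * R + 4) :=
      mul_le_mul_of_nonneg_left (by linarith) (by positivity)
    push_cast
    rw [abs_le] at *
    constructor <;> linarith

theorem aux (m : ℕ) (hn : 2 ≤ m + 1) :
    ∃ C : ℝ, 0 < C ∧
      ∀ (X : Type) (_ : NormedAddCommGroup X) (_ : NormedSpace ℝ X),
        Module.finrank ℝ X = m + 1 →
        ∀ (ε : ℝ), 0 ≤ ε →
        (∀ a b : X, ¬(a = 0 ∧ b = 0) →
          1 / (ε + 1) ≤ (‖a + b‖ ^ 2 + ‖a - b‖ ^ 2) / (2 * (‖a‖ ^ 2 + ‖b‖ ^ 2)) ∧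
          (‖a + b‖ ^ 2 + ‖a - b‖ ^ 2) / (2 * (‖a‖ ^ 2 + ‖b‖ ^ 2)) ≤ ε + 1) →
        ∀ (K δ : ℝ), 1 ≤ K →
        ∀ Λ : EuclideanSpace ℝ (Fin m) →L[ℝ] X,
          Function.Injective Λ → ‖Λ‖ ≤ 1 →
          (∀ v : EuclideanSpace ℝ (Fin m), ‖v‖ ≤ K * ‖Λ v‖) →
        ∀ x : Fin m → X, (∀ i, x i = Λ (EuclideanSpace.single i 1)) →
        ∀ xn : X, ‖xn‖ = 1 →
          (∀ i, |‖x i + xn‖ ^ 2 - ‖x i - xn‖ ^ 2| ≤ δ) →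
        ∀ a : Fin m → ℝ,
          |‖(∑ i, a i • x i) + xn‖ ^ 2 / (‖∑ i, a i • x i‖ ^ 2 + 1) - 1| ≤
            ε + K ^ 2 / 2 *
              (Real.sqrt (((m + 1 : ℕ) : ℝ) - 1) * δ + 36 * (((m + 1 : ℕ) : ℝ) - 1) * ε + C * ε ^ 2) := by
  refine ⟨1, one_pos, ?_⟩
  intro X _ _ _ ε h0 hvN K δ hK Λ _ hΛ hΛK x hx z hz hδ a
  change ∀ i, |br (x i) z| ≤ δ at hδ
  have hm : (1 : ℝ) ≤ m := by exact_mod_cast (by omega : 1 ≤ m)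
  have hδ0 : 0 ≤ δ := (abs_nonneg _).trans (hδ ⟨0, by omega⟩)
  have hP : ∀ a b : X, |‖a + b‖ ^ 2 + ‖a - b‖ ^ 2 - 2 * (‖a‖ ^ 2 + ‖b‖ ^ 2)| ≤
      2 * ε * (‖a‖ ^ 2 + ‖b‖ ^ 2) := by
    intro a b
    by_cases h : a = 0 ∧ b = 0
    · simp [h.1, h.2]
    · obtain ⟨l, u⟩ := hvN a b h
      have hpos : 0 < ‖a‖ ^ 2 + ‖b‖ ^ 2 := by
        by_cases ha : a = 0
        · have hb : b ≠ 0 := fun hb => h ⟨ha, hb⟩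
          have := norm_pos_iff.2 hb
          positivity
        · have := norm_pos_iff.2 ha
          positivity
      have l' : 1 - ε ≤ 1 / (ε + 1) := by
        rw [le_div_iff₀ (by linarith)]; nlinarith
      have l2 := l'.trans l
      rw [le_div_iff₀ (by positivity)] at l2
      rw [div_le_iff₀ (by positivity)] at u
      rw [abs_le]
      constructor <;> linarith
  set y := ∑ i, a i • x i with hy
  set A : EuclideanSpace ℝ (Fin m) := WithLp.toLp 2 a with hA
  have hsum : ∀ s : Finset (Fin m), ‖∑ i ∈ s, a i • x i‖ ^ 2 ≤ ∑ i ∈ s, a i ^ 2 := by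
    intro s
    have e : ∑ i ∈ s, a i • x i = Λ (WithLp.toLp 2 (fun i => if i ∈ s then a i else 0)) := by
      have : (WithLp.toLp 2 (fun i => if i ∈ s then a i else 0) : EuclideanSpace ℝ (Fin m))
          = ∑ i ∈ s, a i • EuclideanSpace.single i (1 : ℝ) := by
        ext j
        simp [Finset.sum_apply, Pi.single_apply]
      rw [this, map_sum]
      simp [hx]
    rw [e]
    have := Λ.le_of_opNorm_le hΛ (WithLp.toLp 2 (fun i => if i ∈ s then a i else 0))
    rw [one_mul] at this
    refine (pow_le_pow_left₀ (norm_nonneg _) this 2).trans ?_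
    rw [EuclideanSpace.norm_sq_eq]
    simp [ite_pow, Finset.sum_ite_mem]
  have hAy : Λ A = y := by
    have : A = ∑ i, a i • EuclideanSpace.single i (1 : ℝ) := by
      ext j
      simp [hA, Finset.sum_apply, Pi.single_apply]
    rw [this, map_sum]
    simp [hx, hy]
  set R := ∑ i, a i ^ 2 with hR
  have hAR : ‖A‖ ^ 2 = R := by
    rw [EuclideanSpace.norm_sq_eq]; simp [hA, hR]
  have hR0 : 0 ≤ R := by rw [← hAR]; positivity
  have hRK : R ≤ K ^ 2 * ‖y‖ ^ 2 := by
    rw [← hAR, ← mul_pow, ← hAy]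
    exact pow_le_pow_left₀ (norm_nonneg _) (hΛK A) 2
  have hsq : ∑ i, |a i| ≤ Real.sqrt m * (K * ‖y‖) := by
    have : (∑ i, |a i|) ^ 2 ≤ m * R := by
      have := sq_sum_le_card_mul_sum_sq (s := Finset.univ) (f := fun i => |a i|)
      simpa using this
    rw [← hAy]
    refine le_trans ?_ (mul_le_mul_of_nonneg_left (hΛK A) (Real.sqrt_nonneg _))
    refine abs_le_of_sq_le_sq' ?_ (by positivity) |>.2
    rw [mul_pow, Real.sq_sqrt (by positivity), hAR]
    exact this
  have hK2 : 1 ≤ K ^ 2 := one_le_pow₀ hK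
  have hx1 : ∀ i, ‖x i‖ ^ 2 ≤ 1 := by
    intro i
    rw [hx i]
    have := Λ.le_of_opNorm_le hΛ (EuclideanSpace.single i (1 : ℝ))
    simp at this
    exact pow_le_one₀ (norm_nonneg _) this
  have main : |br y z| ≤ (‖y‖ ^ 2 + 1) *
      (K ^ 2 * (Real.sqrt m * δ + 36 * m * ε + 1 * ε ^ 2)) := by
    have hs : 0 ≤ Real.sqrt m * δ := by positivity
    by_cases hε : ε ≤ 1 / 18
    · have b1 := sumbr ε h0 hε hP (fun i => a i • x i) z hz R
        (fun s => (hsum s).trans (Finset.sum_le_univ_sum_of_nonneg (fun i => sq_nonneg _)))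
        Finset.univ
      rw [Finset.card_univ, Fintype.card_fin] at b1
      have b2 : |∑ i, br (a i • x i) z| ≤ ∑ i, (|a i| * δ + 10 * ε * (1 + a i ^ 2)) := by
        refine (Finset.abs_sum_le_sum_abs _ _).trans (Finset.sum_le_sum fun i _ => ?_)
        have i1 := homog ε h0 hε hP (x i) z (a i)
        have i2 : |a i * br (x i) z| ≤ |a i| * δ := by
          rw [abs_mul]; exact mul_le_mul_of_nonneg_left (hδ i) (abs_nonneg _)
        have i3 : 5 * ε * (‖x i‖ ^ 2 + ‖z‖ ^ 2) * (1 + a i ^ 2) ≤ 10 * ε * (1 + a i ^ 2) := by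
          have : 5 * ε * (‖x i‖ ^ 2 + ‖z‖ ^ 2) ≤ 5 * ε * (1 + 1) := by
            rw [hz]; have := hx1 i; gcongr; norm_num
          have := mul_le_mul_of_nonneg_right this (by positivity : 0 ≤ 1 + a i ^ 2)
          linarith
        rw [abs_le] at *
        constructor <;> linarith
      have b3 : ∑ i, (|a i| * δ + 10 * ε * (1 + a i ^ 2)) = (∑ i, |a i|) * δ + 10 * ε * (m + R) := by
        rw [Finset.sum_add_distrib, ← Finset.sum_mul, ← Finset.mul_sum, Finset.sum_add_distrib]
        simp [hR]
      rw [b3] at b2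
      have b4 : |br y z| ≤ m * (5 / 2 * ε * (3 * R + 4)) + ((∑ i, |a i|) * δ + 10 * ε * (m + R)) := by
        simp only [← hy] at b1
        rw [abs_le] at *
        constructor <;> linarith
      have c1 : (∑ i, |a i|) * δ ≤ (‖y‖ ^ 2 + 1) * (K ^ 2 * (Real.sqrt m * δ)) := by
        have d1 : K * ‖y‖ ≤ K ^ 2 * (‖y‖ ^ 2 + 1) := by
          have : ‖y‖ ≤ ‖y‖ ^ 2 + 1 := by nlinarith [sq_nonneg (‖y‖ - 1), norm_nonneg y]
          have hKK : K ≤ K ^ 2 := by nlinarith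
          exact mul_le_mul hKK this (norm_nonneg _) (by positivity)
        calc _ ≤ Real.sqrt m * (K * ‖y‖) * δ := by gcongr
          _ = (Real.sqrt m * δ) * (K * ‖y‖) := by ring
          _ ≤ (Real.sqrt m * δ) * (K ^ 2 * (‖y‖ ^ 2 + 1)) := by gcongr
          _ = _ := by ring
      have c2 : m * (5 / 2 * ε * (3 * R + 4)) + 10 * ε * (m + R) ≤
          (‖y‖ ^ 2 + 1) * (K ^ 2 * (36 * m * ε)) := by
        have d1 : 1 + R ≤ K ^ 2 * (‖y‖ ^ 2 + 1) := by linarith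
        have d2 : m + R ≤ m * (1 + R) := by nlinarith
        calc m * (5 / 2 * ε * (3 * R + 4)) + 10 * ε * (m + R)
            ≤ m * (5 / 2 * ε * (3 * R + 4)) + 10 * ε * (m * (1 + R)) := by gcongr
          _ = m * ε * (17.5 * R + 20) := by ring
          _ ≤ m * ε * (36 * (1 + R)) := by gcongr; linarith
          _ ≤ m * ε * (36 * (K ^ 2 * (‖y‖ ^ 2 + 1))) := by gcongr
          _ = _ := by ring
      have c3 : 0 ≤ (‖y‖ ^ 2 + 1) * (K ^ 2 * (1 * ε ^ 2)) := by positivity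
      linarith
    · push Not at hε
      have b := br_bound y z
      rw [hz] at b
      have e1 : 2 ≤ 36 * m * ε := by nlinarith
      have e2 : 2 ≤ Real.sqrt m * δ + 36 * m * ε + 1 * ε ^ 2 := by nlinarith [sq_nonneg ε]
      have e3 : 2 ≤ K ^ 2 * (Real.sqrt m * δ + 36 * m * ε + 1 * ε ^ 2) := by nlinarith
      have := mul_le_mul_of_nonneg_left e3 (by positivity : 0 ≤ ‖y‖ ^ 2 + 1)
      linarith
  have hp := hP y z
  rw [hz] at hp
  push_cast
  rw [show (m : ℝ) + 1 - 1 = m by ring]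
  have hD : 0 < ‖y‖ ^ 2 + 1 := by positivity
  rw [div_sub_one hD.ne', abs_div, abs_of_pos hD, div_le_iff₀ hD]
  unfold br at main
  rw [abs_le] at *
  constructor <;> linarith


/-- **Inductive step** (Lemma 3.2). For each `n ≥ 2` there is a constant `C > 0` such
that: if `X` is an `n`-dimensional real normed vector space with von Neumann–Jordan
constant at most `ε + 1`, `Λ : ℝⁿ⁻¹ → X` is an injective linear map with `‖Λ‖ ≤ 1` whose
inverse (on its image) has norm at most `K` (`K ≥ 1`), `x₁, …, x_{n−1}` are the images of
the standard basis vectors, and `x_n` satisfies `‖x_n‖ = 1` and `|[xᵢ, x_n]| ≤ δ` for all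
`i < n`, then for all `a₁, …, a_{n−1} ∈ ℝ`,
`|‖∑ aᵢxᵢ + x_n‖²/(‖∑ aᵢxᵢ‖² + 1) − 1| ≤ ε + (K²/2)(√(n−1)·δ + 36(n−1)ε + Cε²)`,
where `[a, b] = ‖a+b‖² − ‖a−b‖²`. -/
theorem induct_step (n : ℕ) (hn : 2 ≤ n) :
    ∃ C : ℝ, 0 < C ∧
      ∀ (X : Type) (_ : NormedAddCommGroup X) (_ : NormedSpace ℝ X),
        Module.finrank ℝ X = n →
        ∀ (ε : ℝ), 0 ≤ ε →
        (∀ a b : X, ¬(a = 0 ∧ b = 0) →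
          1 / (ε + 1) ≤ (‖a + b‖ ^ 2 + ‖a - b‖ ^ 2) / (2 * (‖a‖ ^ 2 + ‖b‖ ^ 2)) ∧
          (‖a + b‖ ^ 2 + ‖a - b‖ ^ 2) / (2 * (‖a‖ ^ 2 + ‖b‖ ^ 2)) ≤ ε + 1) →
        ∀ (K δ : ℝ), 1 ≤ K →
        ∀ Λ : EuclideanSpace ℝ (Fin (n - 1)) →L[ℝ] X,
          Function.Injective Λ → ‖Λ‖ ≤ 1 →
          (∀ v : EuclideanSpace ℝ (Fin (n - 1)), ‖v‖ ≤ K * ‖Λ v‖) →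
        ∀ x : Fin (n - 1) → X, (∀ i, x i = Λ (EuclideanSpace.single i 1)) →
        ∀ xn : X, ‖xn‖ = 1 →
          (∀ i, |‖x i + xn‖ ^ 2 - ‖x i - xn‖ ^ 2| ≤ δ) →
        ∀ a : Fin (n - 1) → ℝ,
          |‖(∑ i, a i • x i) + xn‖ ^ 2 / (‖∑ i, a i • x i‖ ^ 2 + 1) - 1| ≤
            ε + K ^ 2 / 2 *
              (Real.sqrt ((n : ℝ) - 1) * δ + 36 * ((n : ℝ) - 1) * ε + C * ε ^ 2) := by
  obtain ⟨m, rfl⟩ : ∃ m, n = m + 1 := ⟨n - 1, by omega⟩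
  exact aux m hn
end

section
/- Let X be an n-dimensional real normed vector space (n ≥ 1) and let x₁, …, x_{n−1} ∈ X. Then there exists x_n ∈ X with ‖x_n‖ = 1 and [x_n, xᵢ] = 0 for all i < n. -/
theorem real_odd_root (p : Polynomial ℝ) (hm : p.Monic) (h : Odd p.natDegree) : ∃ x, p.IsRoot x := by
  have hdeg : 0 < p.degree := Polynomial.natDegree_pos_iff_degree_pos.mp h.pos
  have h1 := p.tendsto_atTop_of_leadingCoeff_nonneg hdeg (by rw [hm.leadingCoeff]; norm_num)
  have hn : (p.comp (-Polynomial.X)).natDegree = p.natDegree := by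
    rw [Polynomial.natDegree_comp]; simp
  have h2 := (p.comp (-Polynomial.X)).tendsto_atBot_of_leadingCoeff_nonpos
    (Polynomial.natDegree_pos_iff_degree_pos.mp (by rw [hn]; exact h.pos))
    (by rw [Polynomial.leadingCoeff_comp (by simp), hm.leadingCoeff]; simp [h.neg_one_pow])
  obtain ⟨a, ha⟩ := (h1.eventually (Filter.eventually_ge_atTop 0)).exists
  obtain ⟨b, hb⟩ := (h2.eventually (Filter.eventually_le_atBot 0)).exists
  simp only [Polynomial.eval_comp, Polynomial.eval_neg, Polynomial.eval_X] at hb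
  obtain ⟨x, hx⟩ := mem_range_of_exists_le_of_exists_ge p.continuous ⟨_, hb⟩ ⟨_, ha⟩
  exact ⟨x, hx⟩

theorem common_eigen {ι : Type*} (N : ℕ) : ∀ {V : Type} [AddCommGroup V] [Module ℝ V]
    [FiniteDimensional ℝ V] (_ : Module.finrank ℝ V = N) (_ : Odd N)
    (T : ι → Module.End ℝ V) (_ : ∀ i j, Commute (T i) (T j)),
    ∃ v : V, v ≠ 0 ∧ ∀ i, ∃ μ : ℝ, T i v = μ • v := by
  induction N using Nat.strong_induction_on with
  | _ N ih =>
  intro V _ _ _ hV hN T hT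
  have key : ∀ K : Submodule ℝ V, Odd (Module.finrank ℝ K) → K ≠ ⊤ →
      (∀ i, ∀ x ∈ K, T i x ∈ K) → ∃ v : V, v ≠ 0 ∧ ∀ i, ∃ μ : ℝ, T i v = μ • v := by
    intro K hK hKt hinv
    obtain ⟨v, hv, h⟩ := ih _ (hV ▸ Submodule.finrank_lt hKt) (V := K) rfl hK
      (fun i => (T i).restrict (hinv i)) (by
        intro i j
        ext x
        have := congrArg (fun f => f (x : V)) (hT i j).eq
        simpa using this)
    refine ⟨v, by simpa using hv, fun i => ?_⟩
    obtain ⟨μ, h⟩ := h i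
    exact ⟨μ, by simpa using congrArg Subtype.val h⟩
  by_cases hs : ∀ i, ∃ μ : ℝ, T i = algebraMap ℝ _ μ
  · have : Nontrivial V := Module.finrank_pos_iff.mp (hV ▸ hN.pos)
    obtain ⟨v, hv⟩ := exists_ne (0 : V)
    refine ⟨v, hv, fun i => ?_⟩
    obtain ⟨μ, h⟩ := hs i
    exact ⟨μ, by rw [h]; rfl⟩
  · push Not at hs
    obtain ⟨i, hi⟩ := hs
    obtain ⟨μ, hμ⟩ := real_odd_root (T i).charpoly (T i).charpoly_monic
      (by rw [LinearMap.charpoly_natDegree, hV]; exact hN)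
    rw [← Module.End.hasEigenvalue_iff_isRoot_charpoly] at hμ
    obtain ⟨v, hv⟩ := hμ.exists_hasEigenvector
    let g : Module.End ℝ V := T i - algebraMap ℝ _ μ
    have hgv : g v = 0 := by
      have := hv.apply_eq_smul
      simp [g, this]
    have hg0 : g ≠ 0 := sub_ne_zero.mpr (hi μ)
    have hcomm : ∀ j, Commute (T j) g := fun j =>
      (hT j i).sub_right (Algebra.commutes μ (T j)).symm
    have hc : ∀ j x, T j (g x) = g (T j x) := fun j x =>
      congrArg (fun f => f x) (hcomm j).eq
    have hsum := LinearMap.finrank_range_add_finrank_ker g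
    have hkt : LinearMap.ker g ≠ ⊤ := by rwa [Ne, LinearMap.ker_eq_top]
    have hrt : LinearMap.range g ≠ ⊤ := by
      intro h
      have := LinearMap.injective_iff_surjective.mpr (LinearMap.range_eq_top.mp h)
      exact hv.2 (this (by rw [hgv, map_zero]))
    rw [hV] at hsum
    rcases Nat.even_or_odd (Module.finrank ℝ (LinearMap.ker g)) with he | ho
    · refine key (LinearMap.range g) ?_ hrt ?_
      · rw [← hsum] at hN
        by_contra hh
        rw [Nat.not_odd_iff_even] at hh
        exact Nat.not_odd_iff_even.mpr (hh.add he) hN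
      · rintro j _ ⟨x, rfl⟩
        exact ⟨T j x, (hc j x).symm⟩
    · refine key (LinearMap.ker g) ho hkt ?_
      intro j x hx
      rw [LinearMap.mem_ker] at hx ⊢
      rw [← hc, hx, map_zero]
section nf
set_option linter.unusedSectionVars false
open MvPolynomial Finsupp
variable {σ : Type} [Fintype σ] [DecidableEq σ]

/-- reduction data -/
structure RedData (σ : Type) where
  e : σ → ℕ
  w : σ → ℕ
  L : σ → MvPolynomial σ ℝ
  hL : ∀ i, ∀ b ∈ (L i).support, Finsupp.weight w b < w i * e i
  hp : ∀ i, ∀ b ∈ (L i).support, (Even b.degree ↔ Even (e i))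

open Classical in
noncomputable def nfMon (R : RedData σ) (a : σ →₀ ℕ) : MvPolynomial σ ℝ :=
  if h : ∃ i, R.e i ≤ a i then
    ∑ b ∈ (R.L h.choose).support.attach,
      coeff b.1 (R.L h.choose) • nfMon R (a - single h.choose (R.e h.choose) + b.1)
  else monomial a 1
termination_by Finsupp.weight R.w a
decreasing_by
  have h1 := R.hL _ b.1 b.2
  have h2 : single h.choose (R.e h.choose) ≤ a := by
    rw [Finsupp.single_le_iff]; exact h.choose_spec
  have h3 : Finsupp.weight R.w a = Finsupp.weight R.w (a - single h.choose (R.e h.choose)) +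
      Finsupp.weight R.w (single h.choose (R.e h.choose)) := by
    rw [← map_add, tsub_add_cancel_of_le h2]
  rw [h3, map_add, Finsupp.weight_single, smul_eq_mul, mul_comm (R.e _)]
  omega

noncomputable def NF (R : RedData σ) : MvPolynomial σ ℝ →ₗ[ℝ] MvPolynomial σ ℝ :=
  (basisMonomials σ ℝ).constr ℝ (nfMon R)

theorem NF_mon (R : RedData σ) (a) : NF R (monomial a 1) = nfMon R a := by
  have := (basisMonomials σ ℝ).constr_basis ℝ (nfMon R) a
  rwa [coe_basisMonomials] at this

theorem monomial_smul_one (a : σ →₀ ℕ) (c : ℝ) :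
    (monomial a c : MvPolynomial σ ℝ) = c • monomial a 1 := by
  rw [smul_monomial, smul_eq_mul, mul_one]

theorem map_mon_mul (f : MvPolynomial σ ℝ →ₗ[ℝ] MvPolynomial σ ℝ) (c : σ →₀ ℕ)
    (p : MvPolynomial σ ℝ) :
    f (monomial c 1 * p) = ∑ b ∈ p.support, coeff b p • f (monomial (c + b) 1) := by
  conv_lhs => rw [p.as_sum]
  rw [Finset.mul_sum, map_sum]
  refine Finset.sum_congr rfl fun b _ => ?_
  rw [monomial_mul, one_mul, monomial_smul_one, map_smul]

theorem NF_reduced (R : RedData σ) (a : σ →₀ ℕ) (h : ∀ i, a i < R.e i) :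
    NF R (monomial a 1) = monomial a 1 := by
  rw [NF_mon, nfMon, dif_neg]
  push Not
  exact h

theorem NF_step_exists (R : RedData σ) (a : σ →₀ ℕ) (h : ∃ i, R.e i ≤ a i) :
    ∃ i c, a = c + single i (R.e i) ∧ NF R (monomial a 1) = NF R (monomial c 1 * R.L i) := by
  refine ⟨h.choose, a - single h.choose (R.e h.choose), ?_, ?_⟩
  · rw [tsub_add_cancel_of_le]
    rw [Finsupp.single_le_iff]; exact h.choose_spec
  · rw [map_mon_mul, NF_mon, nfMon, dif_pos h]
    simp_rw [NF_mon]
    exact Finset.sum_attach (R.L h.choose).support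
      (fun b => coeff b (R.L h.choose) • nfMon R (a - single h.choose (R.e h.choose) + b))

theorem NF_step (R : RedData σ) (N : ℕ) : ∀ (c : σ →₀ ℕ) (i : σ),
    Finsupp.weight R.w (c + single i (R.e i)) = N →
    NF R (monomial (c + single i (R.e i)) 1) = NF R (monomial c 1 * R.L i) := by
  induction N using Nat.strong_induction_on with
  | _ N ih =>
  have aux : ∀ (d : σ →₀ ℕ) (i j : σ),
      Finsupp.weight R.w (d + single i (R.e i) + single j (R.e j)) = N →
      NF R (monomial (d + single i (R.e i)) 1 * R.L j) =
        NF R (monomial d 1 * (R.L j * R.L i)) := by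
    intro d i j hN
    have e1 : NF R (monomial d 1 * (R.L j * R.L i)) =
        ((NF R).comp (LinearMap.mulRight ℝ (R.L i))) (monomial d 1 * R.L j) := by
      simp [mul_assoc]
    rw [e1, map_mon_mul, map_mon_mul]
    refine Finset.sum_congr rfl fun b hb => ?_
    congr 1
    rw [add_right_comm]
    simp only [LinearMap.comp_apply, LinearMap.mulRight_apply]
    refine ih _ ?_ _ _ rfl
    have := R.hL j b hb
    simp only [map_add, Finsupp.weight_single, smul_eq_mul] at hN ⊢
    rw [mul_comm] at this
    omega
  intro c i hN
  obtain ⟨j, d, hd, hj⟩ := NF_step_exists R (c + single i (R.e i)) ⟨i, by simp⟩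
  rw [hj]
  by_cases hij : j = i
  · subst hij
    rw [add_right_cancel hd]
  · have hle : single j (R.e j) ≤ c := by
      rw [Finsupp.single_le_iff]
      have := congrArg (fun f => f j) hd
      simp [Ne.symm hij] at this
      omega
    obtain ⟨d', rfl⟩ := exists_add_of_le hle
    have hd' : d = d' + single i (R.e i) := by
      apply add_right_cancel (b := single j (R.e j))
      rw [← hd]; abel
    subst hd'
    rw [aux d' i j (by rw [← hN, hd]), add_comm (single j _) d',
      aux d' j i (by rw [← hN]; congr 1; abel), mul_comm (R.L i)]

theorem NF_mul_gen (R : RedData σ) (p : MvPolynomial σ ℝ) (i : σ) :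
    NF R (p * monomial (single i (R.e i)) 1) = NF R (p * R.L i) := by
  induction p using MvPolynomial.induction_on' with
  | monomial a c =>
    rw [monomial_smul_one, smul_mul_assoc, smul_mul_assoc, map_smul, map_smul, monomial_mul,
      one_mul, NF_step R _ a i rfl]
  | add p q hp hq => rw [add_mul, add_mul, map_add, map_add, hp, hq]

theorem NF_mul_NF_mon (R : RedData σ) (p : MvPolynomial σ ℝ) (N : ℕ) : ∀ (a : σ →₀ ℕ),
    Finsupp.weight R.w a = N →
    NF R (p * NF R (monomial a 1)) = NF R (p * monomial a 1) := by
  induction N using Nat.strong_induction_on with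
  | _ N ih =>
  intro a ha
  by_cases h : ∃ i, R.e i ≤ a i
  · obtain ⟨i, c, rfl, h2⟩ := NF_step_exists R a h
    have e1 : monomial (c + single i (R.e i)) (1:ℝ) =
      monomial c 1 * monomial (single i (R.e i)) 1 := by rw [monomial_mul, one_mul]
    rw [h2]
    conv_rhs => rw [e1, ← mul_assoc, NF_mul_gen, mul_assoc]
    have f1 := map_mon_mul ((NF R).comp ((LinearMap.mulLeft ℝ p).comp (NF R))) c (R.L i)
    have f2 := map_mon_mul ((NF R).comp (LinearMap.mulLeft ℝ p)) c (R.L i)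
    simp only [LinearMap.comp_apply, LinearMap.mulLeft_apply] at f1 f2
    rw [f1, f2]
    refine Finset.sum_congr rfl fun b hb => ?_
    congr 1
    refine ih _ ?_ _ rfl
    have := R.hL i b hb
    simp only [map_add, Finsupp.weight_single, smul_eq_mul] at ha ⊢
    rw [mul_comm] at this
    omega
  · rw [NF_reduced R a (by push Not at h; exact h)]

theorem NF_mul_NF (R : RedData σ) (p q : MvPolynomial σ ℝ) :
    NF R (p * NF R q) = NF R (p * q) := by
  induction q using MvPolynomial.induction_on' with
  | monomial a c =>
    rw [monomial_smul_one, map_smul, mul_smul_comm, mul_smul_comm, map_smul, map_smul,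
      NF_mul_NF_mon R p _ a rfl]
  | add q r hq hr => rw [map_add, mul_add, mul_add, map_add, map_add, hq, hr]

/-- exponents of reduced even monomials -/
def redSet (R : RedData σ) : Set (σ →₀ ℕ) := {a | (∀ i, a i < R.e i) ∧ Even a.degree}

/-- exponents of even monomials -/
def evSet (σ : Type) : Set (σ →₀ ℕ) := {a | Even a.degree}

theorem NF_mon_mem (R : RedData σ) (N : ℕ) : ∀ (a : σ →₀ ℕ),
    Finsupp.weight R.w a = N → Even a.degree →
    NF R (monomial a 1) ∈ restrictSupport ℝ (redSet R) := by
  induction N using Nat.strong_induction_on with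
  | _ N ih =>
  intro a ha hev
  by_cases h : ∃ i, R.e i ≤ a i
  · obtain ⟨i, c, rfl, h2⟩ := NF_step_exists R a h
    rw [h2, map_mon_mul]
    refine Submodule.sum_mem _ fun b hb => Submodule.smul_mem _ _ (ih _ ?_ _ rfl ?_)
    · have := R.hL i b hb
      simp only [map_add, Finsupp.weight_single, smul_eq_mul] at ha ⊢
      rw [mul_comm] at this
      omega
    · have := R.hp i b hb
      simp only [map_add, Finsupp.degree_single, Nat.even_add] at hev ⊢
      tauto
  · push Not at h
    rw [NF_reduced R a h, monomial_mem_restrictSupport]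
    exact Or.inl ⟨h, hev⟩

theorem NF_mem (R : RedData σ) (p : MvPolynomial σ ℝ) (hp : p ∈ restrictSupport ℝ (evSet σ)) :
    NF R p ∈ restrictSupport ℝ (redSet R) := by
  rw [p.as_sum, map_sum]
  refine Submodule.sum_mem _ fun b hb => ?_
  rw [monomial_smul_one, map_smul]
  exact Submodule.smul_mem _ _ (NF_mon_mem R _ b rfl (hp hb))

theorem NF_id (R : RedData σ) (p : MvPolynomial σ ℝ) (hp : p ∈ restrictSupport ℝ (redSet R)) :
    NF R p = p := by
  conv_rhs => rw [p.as_sum]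
  conv_lhs => rw [p.as_sum, map_sum]
  refine Finset.sum_congr rfl fun b hb => ?_
  rw [monomial_smul_one, map_smul, NF_reduced R b (hp hb).1]

theorem ev_mul (p q : MvPolynomial σ ℝ) (hp : p ∈ restrictSupport ℝ (evSet σ))
    (hq : q ∈ restrictSupport ℝ (evSet σ)) : p * q ∈ restrictSupport ℝ (evSet σ) := by
  intro a ha
  obtain ⟨b, hb, c, hc, rfl⟩ := Finset.mem_add.mp (support_mul p q ha)
  have h1 : Even b.degree := hp hb
  have h2 : Even c.degree := hq hc
  show Even _
  rw [map_add]; exact h1.add h2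

theorem XX_ev (i j : σ) : (X i * X j : MvPolynomial σ ℝ) ∈ restrictSupport ℝ (evSet σ) := by
  rw [X, X, monomial_mul, monomial_mem_restrictSupport]
  left
  show Even _
  simp

noncomputable def opT (R : RedData σ) (ij : σ × σ) : Module.End ℝ (restrictSupport ℝ (redSet R)) :=
  ((NF R).comp (LinearMap.mulLeft ℝ (X ij.1 * X ij.2))).restrict (fun p hp => by
    refine NF_mem R _ (ev_mul _ _ (XX_ev _ _) ?_)
    exact restrictSupport_mono ℝ (fun a ha => ha.2) hp)

theorem opT_coe (R : RedData σ) (ij : σ × σ) (x : restrictSupport ℝ (redSet R)) :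
    (opT R ij x : MvPolynomial σ ℝ) = NF R (X ij.1 * X ij.2 * (x : MvPolynomial σ ℝ)) := rfl

theorem opT_comm (R : RedData σ) (i j : σ × σ) : Commute (opT R i) (opT R j) := by
  refine LinearMap.ext fun x => Subtype.ext ?_
  rw [Module.End.mul_apply, Module.End.mul_apply, opT_coe, opT_coe, opT_coe, opT_coe,
    NF_mul_NF, NF_mul_NF, mul_left_comm]

theorem red_eigen (R : RedData σ) [Finite (redSet R)] (hodd : Odd (Nat.card (redSet R))) :
    ∃ w : MvPolynomial σ ℝ, w ≠ 0 ∧ NF R w = w ∧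
      ∃ l : σ → σ → ℝ, ∀ i j, NF R (X i * X j * w) = l i j • w := by
  have := Module.Basis.finiteDimensional_of_finite (basisRestrictSupport ℝ (redSet R))
  have hfr := Module.finrank_eq_nat_card_basis (basisRestrictSupport ℝ (redSet R))
  obtain ⟨w, hw, h⟩ := common_eigen _ hfr hodd (opT R) (opT_comm R)
  choose μ hμ using h
  refine ⟨w, by simpa using hw, NF_id R _ w.2, fun i j => μ (i, j), fun i j => ?_⟩
  have := congrArg Subtype.val (hμ (i, j))
  rw [opT_coe] at this
  exact this

theorem rank_one (l : σ → σ → ℝ)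
    (hr : ∀ i j k m, l i j * l k m = l i k * l j m) (ht : ∑ i, l i i = 1) :
    ∃ v : σ → ℝ, ∀ i j, l i j = v i * v j := by
  obtain ⟨k, -, hk⟩ : ∃ k ∈ Finset.univ, 0 < l k k := by
    apply Finset.exists_lt_of_sum_lt (s := Finset.univ) (f := fun _ => (0:ℝ))
    simp [ht]
  refine ⟨fun i => l i k / √(l k k), fun i j => ?_⟩
  have := Real.mul_self_sqrt hk.le
  rw [div_mul_div_comm, this, eq_div_iff hk.ne', hr]

theorem red_point (R : RedData σ) [Finite (redSet R)] (hodd : Odd (Nat.card (redSet R)))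
    (i₀ : σ) (he : R.e i₀ = 2) (hL : R.L i₀ = X i₀ ^ 2 - ∑ i, X i ^ 2 + 1)
    (ho : ∀ i, i ≠ i₀ → Odd (R.e i)) :
    ∃ v : σ → ℝ, ∑ i, v i ^ 2 = 1 ∧ ∀ i, i ≠ i₀ → v i ^ (R.e i) = eval v (R.L i) := by
  obtain ⟨w, hw, hNw, l, hl⟩ := red_eigen R hodd
  have inj : ∀ a b : ℝ, a • w = b • w → a = b := fun a b h => smul_left_injective ℝ hw h
  have hl4 : ∀ i j k m, NF R (X i * X j * (X k * X m * w)) = (l k m * l i j) • w := by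
    intro i j k m
    rw [← NF_mul_NF, hl k m, mul_smul_comm, map_smul, hl, smul_smul]
  have hr : ∀ i j k m, l i j * l k m = l i k * l j m := fun i j k m => inj _ _ (by
    rw [← hl4, ← hl4]; congr 1; ring)
  have ht : ∑ i, l i i = 1 := inj _ _ (by
    have := NF_mul_gen R w i₀
    rw [he, hL, ← X_pow_eq_monomial] at this
    have h2 : NF R (w * ∑ i, X i ^ 2) = NF R w := by
      rw [mul_add, mul_sub, map_add, map_sub, mul_one] at this
      linear_combination (exp := 1) this
    rw [Finset.sum_smul, one_smul]
    conv_rhs => rw [← hNw, ← h2]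
    rw [Finset.mul_sum, map_sum]
    refine Finset.sum_congr rfl fun i _ => ?_
    rw [← hl]; congr 1; ring)
  obtain ⟨v, hv⟩ := rank_one l hr ht
  have hv1 : ∑ i, v i ^ 2 = 1 := by
    rw [← ht]; exact Finset.sum_congr rfl fun i _ => by rw [hv]; ring
  have hmon : ∀ N : ℕ, ∀ a : σ →₀ ℕ, a.degree = 2 * N →
      NF R (monomial a 1 * w) = eval v (monomial a 1) • w := by
    intro N
    induction N with
    | zero =>
      intro a ha
      rw [mul_zero, Finsupp.degree_eq_zero_iff] at ha
      subst ha
      simp [hNw]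
    | succ N ih =>
      intro a ha
      have ex : ∀ (b : σ →₀ ℕ) (n : ℕ), b.degree = n + 1 → ∃ i c, b = single i 1 + c := by
        intro b n hb
        have : b ≠ 0 := by rintro rfl; simp at hb
        obtain ⟨i, hi⟩ := Finsupp.ne_iff.mp this
        have : single i 1 ≤ b := by
          rw [Finsupp.single_le_iff]; simp at hi; omega
        obtain ⟨c, hc⟩ := exists_add_of_le this
        exact ⟨i, c, hc⟩
      obtain ⟨i, b, rfl⟩ := ex a (2 * N + 1) (by rw [ha]; ring)
      simp only [map_add, Finsupp.degree_single] at ha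
      obtain ⟨j, c, rfl⟩ := ex b (2 * N) (by omega)
      simp only [map_add, Finsupp.degree_single] at ha
      have e1 : (monomial (single i 1 + (single j 1 + c)) (1:ℝ) : MvPolynomial σ ℝ) =
          X i * X j * monomial c 1 := by
        rw [X, X, monomial_mul, monomial_mul]; simp [add_assoc]
      rw [e1, mul_assoc, ← NF_mul_NF, ih c (by omega), mul_smul_comm, map_smul, hl, hv, smul_smul]
      congr 1
      simp only [map_mul, eval_X]
      ring
  have hev : ∀ p ∈ restrictSupport ℝ (evSet σ), NF R (p * w) = eval v p • w := by
    intro p hp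
    have : NF R (p * w) = ∑ b ∈ p.support, coeff b p • NF R (monomial b 1 * w) := by
      conv_lhs => rw [p.as_sum]
      rw [Finset.sum_mul, map_sum]
      refine Finset.sum_congr rfl fun b _ => ?_
      rw [monomial_smul_one, smul_mul_assoc, map_smul]
    rw [this]
    conv_rhs => rw [p.as_sum]
    rw [map_sum, Finset.sum_smul]
    refine Finset.sum_congr rfl fun b hb => ?_
    obtain ⟨N, hN⟩ : Even b.degree := hp hb
    rw [hmon N b (by omega), monomial_smul_one b (coeff b p), smul_eval, smul_smul]
  refine ⟨v, hv1, fun i hi => ?_⟩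
  have hj : ∀ j, v j * v i ^ (R.e i) = v j * eval v (R.L i) := by
    intro j
    have h1 := NF_mul_gen R (X j * w) i
    rw [mul_right_comm (X j) w, mul_right_comm (X j) w, hev, hev] at h1
    · have := inj _ _ h1
      rw [← X_pow_eq_monomial] at this
      simpa using this
    · intro a ha
      obtain ⟨b, hb, c, hc, rfl⟩ := Finset.mem_add.mp (support_mul _ _ ha)
      rw [support_X, Finset.mem_singleton] at hb
      subst hb
      have := (R.hp i c hc)
      have h3 := ho i hi
      rw [← Nat.not_even_iff_odd] at h3
      show Even _
      simp only [map_add, Finsupp.degree_single, Nat.even_add]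
      simp only [Nat.not_even_one, false_iff]; tauto
    · rw [X, monomial_mul, monomial_mem_restrictSupport]
      left
      show Even _
      simpa using odd_one.add_odd (ho i hi)
  by_contra hne
  have : ∀ j, v j = 0 := fun j => by
    by_contra hj0
    exact hne (mul_left_cancel₀ hj0 (hj j))
  simp [this] at hv1
end nf
section bu
open MvPolynomial Finsupp

theorem L0_supp (m : ℕ) (b : Fin (m + 1) →₀ ℕ)
    (hb : b ∈ (X 0 ^ 2 - ∑ i, X i ^ 2 + 1 : MvPolynomial (Fin (m + 1)) ℝ).support) :
    b = 0 ∨ ∃ i : Fin m, b = single i.succ 2 := by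
  have h : (X 0 ^ 2 - ∑ i, X i ^ 2 + 1 : MvPolynomial (Fin (m + 1)) ℝ) ∈
      restrictSupport ℝ {b | b = 0 ∨ ∃ i : Fin m, b = single i.succ 2} := by
    have e : (X 0 ^ 2 - ∑ i, X i ^ 2 + 1 : MvPolynomial (Fin (m + 1)) ℝ) =
      1 - ∑ i : Fin m, X i.succ ^ 2 := by rw [Fin.sum_univ_succ]; ring
    rw [e]
    refine Submodule.sub_mem _ ?_ (Submodule.sum_mem _ fun i _ => ?_)
    · rw [← C_1, ← monomial_zero', monomial_mem_restrictSupport]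
      simp
    · rw [X_pow_eq_monomial, monomial_mem_restrictSupport]
      left; right; exact ⟨i, rfl⟩
  exact h hb

noncomputable def buData (m D : ℕ) (L : Fin m → MvPolynomial (Fin (m + 1)) ℝ) (hD : Odd D)
    (hL : ∀ i, ∀ b ∈ (L i).support, Odd b.degree ∧ 2 * b.degree < D) : RedData (Fin (m + 1)) where
  e := Fin.cons 2 (fun _ => D)
  w := Fin.cons 2 (fun _ => 1)
  L := Fin.cons (X 0 ^ 2 - ∑ i, X i ^ 2 + 1) L
  hL := by
    intro i
    refine Fin.cases ?_ (fun i => ?_) i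
    · intro b hb
      rcases L0_supp m b hb with rfl | ⟨i, rfl⟩
      · simp
      · simp [Finsupp.weight_single]
    · intro b hb
      have h := (hL i b hb).2
      have : Finsupp.weight (Fin.cons 2 (fun _ => 1) : Fin (m + 1) → ℕ) b ≤ 2 * b.degree := by
        rw [Finsupp.weight_eq_sum, Finsupp.degree_eq_sum, Finset.mul_sum]
        refine Finset.sum_le_sum fun j _ => ?_
        refine Fin.cases ?_ (fun j => ?_) j
        · simp [mul_comm]
        · simp; omega
      simp only [Fin.cons_succ]
      omega
  hp := by
    intro i
    refine Fin.cases ?_ (fun i => ?_) i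
    · intro b hb
      rcases L0_supp m b hb with rfl | ⟨i, rfl⟩
      · simp
      · simp
    · intro b hb
      have h := (hL i b hb).1
      simp only [Fin.cons_succ]
      rw [← Nat.not_odd_iff_even, ← Nat.not_odd_iff_even]
      tauto

theorem bu_bij (m D : ℕ) (L : Fin m → MvPolynomial (Fin (m + 1)) ℝ) (hD : Odd D)
    (hL : ∀ i, ∀ b ∈ (L i).support, Odd b.degree ∧ 2 * b.degree < D) :
    Function.Bijective (fun (a : redSet (buData m D L hD hL)) (i : Fin m) =>
      (⟨a.1 i.succ, a.2.1 i.succ⟩ : Fin D)) := by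
  constructor
  · rintro ⟨a, ha, ha2⟩ ⟨b, hb, hb2⟩ h
    have h1 : ∀ i : Fin m, a i.succ = b i.succ := fun i => by
      have := congrFun h i
      exact congrArg Fin.val this
    have ha0 : a 0 < 2 := ha 0
    have hb0 : b 0 < 2 := hb 0
    rw [Finsupp.degree_eq_sum, Fin.sum_univ_succ] at ha2 hb2
    simp only [h1, Nat.even_iff] at ha2 hb2
    apply Subtype.ext
    ext i
    refine Fin.cases ?_ (fun i => ?_) i
    · show a 0 = b 0
      omega
    · exact h1 i
  · intro f
    refine ⟨⟨Finsupp.equivFunOnFinite.symm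
      (Fin.cons ((∑ i, (f i : ℕ)) % 2) (fun i => (f i : ℕ))), ?_, ?_⟩, ?_⟩
    · intro i
      refine Fin.cases ?_ (fun i => ?_) i
      · exact Nat.mod_lt _ (by norm_num)
      · exact (f i).2
    · rw [Finsupp.degree_eq_sum, Fin.sum_univ_succ]
      simp only [Finsupp.equivFunOnFinite_symm_apply_apply, Fin.cons_zero, Fin.cons_succ,
        Nat.even_iff]
      omega
    · ext i
      simp

theorem poly_bu (m D : ℕ) (L : Fin m → MvPolynomial (Fin (m + 1)) ℝ) (hD : Odd D)
    (hL : ∀ i, ∀ b ∈ (L i).support, Odd b.degree ∧ 2 * b.degree < D) :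
    ∃ v : Fin (m + 1) → ℝ, ∑ i, v i ^ 2 = 1 ∧ ∀ i : Fin m, v i.succ ^ D = eval v (L i) := by
  have hb := bu_bij m D L hD hL
  have : Finite (redSet (buData m D L hD hL)) := Finite.of_injective _ hb.1
  have hc := Nat.card_congr (Equiv.ofBijective _ hb)
  obtain ⟨v, h1, h2⟩ := red_point (buData m D L hD hL)
    (by rw [hc]; simp [hD.pow]) 0 rfl rfl
    (by
      intro i
      refine Fin.cases ?_ (fun i => ?_) i
      · simp
      · intro _; exact hD)
  exact ⟨v, h1, fun i => h2 i.succ (Fin.succ_ne_zero i)⟩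

noncomputable def oddPart {k : ℕ} (p : MvPolynomial (Fin k) ℝ) : MvPolynomial (Fin k) ℝ :=
  ∑ b ∈ p.support.filter (fun b => Odd b.degree), monomial b (coeff b p)

theorem oddPart_supp {k : ℕ} (p : MvPolynomial (Fin k) ℝ) (b) (hb : b ∈ (oddPart p).support) :
    Odd b.degree ∧ b.degree ≤ p.totalDegree := by
  have h : oddPart p ∈ restrictSupport ℝ {b | Odd b.degree ∧ b.degree ≤ p.totalDegree} := by
    refine Submodule.sum_mem _ fun b hb => ?_
    rw [Finset.mem_filter] at hb
    rw [monomial_mem_restrictSupport]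
    left
    exact ⟨hb.2, le_totalDegree hb.1⟩
  exact h hb

theorem oddPart_eval {k : ℕ} (p : MvPolynomial (Fin k) ℝ) (v : Fin k → ℝ) :
    eval v (oddPart p) = (eval v p - eval (-v) p) / 2 := by
  rw [eval_eq' v p, eval_eq' (-v) p, ← Finset.sum_sub_distrib, Finset.sum_div, oddPart, map_sum,
    Finset.sum_filter]
  refine Finset.sum_congr rfl fun b _ => ?_
  have : ∏ i, (-v) i ^ b i = (-1) ^ b.degree * ∏ i, v i ^ b i := by
    rw [Finsupp.degree_eq_sum, ← Finset.prod_pow_eq_pow_sum, ← Finset.prod_mul_distrib]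
    refine Finset.prod_congr rfl fun i _ => ?_
    rw [Pi.neg_apply, neg_pow]
  rw [this]
  split_ifs with h
  · rw [h.neg_one_pow, eval_monomial, Finsupp.prod_fintype _ _ (by simp)]
    ring
  · rw [Nat.not_odd_iff_even] at h
    rw [h.neg_one_pow]
    ring

theorem poly_approx {k : ℕ} (f : (Fin k → ℝ) → ℝ) (hf : Continuous f) (K : Set (Fin k → ℝ))
    (hK : IsCompact K) (ε : ℝ) (hε : 0 < ε) :
    ∃ p : MvPolynomial (Fin k) ℝ, ∀ v ∈ K, |eval v p - f v| < ε := by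
  let φ : MvPolynomial (Fin k) ℝ →ₐ[ℝ] C(Fin k → ℝ, ℝ) :=
    aeval (fun i => (⟨fun v => v i, continuous_apply i⟩ : C(Fin k → ℝ, ℝ)))
  have hφ : ∀ p v, φ p v = eval v p := by
    intro p v
    induction p using MvPolynomial.induction_on with
    | C a => simp [φ]
    | add p q hp hq => rw [map_add, ContinuousMap.add_apply, hp, hq, map_add]
    | mul_X p i hp => rw [map_mul, ContinuousMap.mul_apply, hp, map_mul]; simp [φ]
  have hsep : φ.range.SeparatesPoints := by
    intro x y hxy
    obtain ⟨i, hi⟩ := Function.ne_iff.mp hxy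
    exact ⟨φ (X i), ⟨φ (X i), ⟨X i, rfl⟩, rfl⟩, by simpa [hφ] using hi⟩
  obtain ⟨g, ⟨p, hp⟩, hg⟩ :=
    ContinuousMap.exists_mem_subalgebra_near_continuous_of_isCompact_of_separatesPoints
      hsep ⟨f, hf⟩ hK hε
  refine ⟨p, fun v hv => ?_⟩
  have := hg v hv
  rw [← hp] at this
  have h2 : φ p v = eval v p := hφ p v
  rw [← h2]
  exact this

theorem borsuk_ulam (m : ℕ) (f : Fin m → (Fin (m + 1) → ℝ) → ℝ) (hf : ∀ i, Continuous (f i))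
    (hodd : ∀ i v, f i (-v) = - f i v) :
    ∃ v : Fin (m + 1) → ℝ, ∑ i, v i ^ 2 = 1 ∧ ∀ i, f i v = 0 := by
  let K : Set (Fin (m + 1) → ℝ) := {v | ∑ i, v i ^ 2 = 1}
  have hle : ∀ v ∈ K, ∀ i, |v i| ≤ 1 := by
    intro v hv i
    rw [← sq_le_one_iff_abs_le_one]
    have h : ∑ i, v i ^ 2 = 1 := hv
    rw [← h]
    exact Finset.single_le_sum (f := fun i => v i ^ 2) (fun i _ => sq_nonneg _) (Finset.mem_univ i)
  have hK : IsCompact K := by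
    refine Metric.isCompact_of_isClosed_isBounded
      (isClosed_eq (by fun_prop) continuous_const) ?_
    rw [isBounded_iff_forall_norm_le]
    exact ⟨1, fun v hv => (pi_norm_le_iff_of_nonneg zero_le_one).mpr (hle v hv)⟩
  have hneg : ∀ v ∈ K, -v ∈ K := by
    intro v hv
    have h : ∑ i, v i ^ 2 = 1 := hv
    show ∑ i, (-v) i ^ 2 = 1
    simpa using h
  have approx : ∀ ε : ℝ, 0 < ε → ∃ v ∈ K, ∀ i, |f i v| ≤ ε := by
    intro ε hε
    choose p hp using fun i => poly_approx (f i) (hf i) K hK (ε / 2) (half_pos hε)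
    let T := ∑ i, (p i).totalDegree
    obtain ⟨v, hv, h⟩ := poly_bu m (2 * T + 1) (fun i => (-(2 / ε)) • oddPart (p i)) ⟨T, rfl⟩ (by
      intro i b hb
      have h1 := oddPart_supp (p i) b (MvPolynomial.support_smul hb)
      have h2 : (p i).totalDegree ≤ T :=
        Finset.single_le_sum (f := fun i => (p i).totalDegree) (fun i _ => Nat.zero_le _)
          (Finset.mem_univ i)
      exact ⟨h1.1, by omega⟩)
    refine ⟨v, hv, fun i => ?_⟩
    have h1 := h i
    rw [smul_eval, oddPart_eval] at h1
    have h2 := hp i v hv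
    have h3 := hp i (-v) (hneg v hv)
    rw [hodd] at h3
    have h4 : |v i.succ ^ (2 * T + 1)| ≤ 1 := by
      rw [abs_pow]; exact pow_le_one₀ (abs_nonneg _) (hle v hv _)
    have h5 : (eval v (p i) - eval (-v) (p i)) / 2 = - (ε / 2) * v i.succ ^ (2 * T + 1) := by
      rw [h1]; field_simp
    have h6 : |(eval v (p i) - eval (-v) (p i)) / 2| ≤ ε / 2 := by
      rw [h5, abs_mul, abs_neg, abs_of_pos (half_pos hε)]
      nlinarith
    rw [abs_lt] at h2 h3
    rw [abs_le] at h6 ⊢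
    constructor <;> linarith [h2.1, h2.2, h3.1, h3.2, h6.1, h6.2]
  have hne : K.Nonempty := by
    obtain ⟨v, hv, -⟩ := approx 1 one_pos
    exact ⟨v, hv⟩
  obtain ⟨v, hv, hmin⟩ := hK.exists_isMinOn hne
    (f := fun v => ∑ i, |f i v|) (by fun_prop)
  refine ⟨v, hv, ?_⟩
  have hz : ∑ i, |f i v| ≤ 0 := by
    apply le_of_forall_pos_le_add
    intro ε hε
    obtain ⟨u, hu, hu2⟩ := approx (ε / (m + 1)) (by positivity)
    have h1 : ∑ i, |f i v| ≤ ∑ i, |f i u| := hmin hu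
    have h2 : ∑ i, |f i u| ≤ ∑ i : Fin m, ε / (m + 1) := Finset.sum_le_sum fun i _ => hu2 i
    rw [Finset.sum_const, Finset.card_univ, Fintype.card_fin, nsmul_eq_mul] at h2
    have h3 : (m : ℝ) * (ε / (m + 1)) ≤ ε := by
      rw [mul_div_assoc', div_le_iff₀ (by positivity)]
      nlinarith
    linarith
  intro i
  have h1 : |f i v| ≤ ∑ i, |f i v| :=
    Finset.single_le_sum (f := fun i => |f i v|) (fun i _ => abs_nonneg _) (Finset.mem_univ i)
  exact abs_eq_zero.mp (le_antisymm (h1.trans hz) (abs_nonneg _))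
end bu

/-- **Borsuk–Ulam orthogonalization** (Lemma 3.3). In an `n`-dimensional real normed
vector space (`n ≥ 1`), given `x₁, …, x_{n−1}`, there is a unit vector `x_n` with
`[x_n, xᵢ] = ‖x_n + xᵢ‖² − ‖x_n − xᵢ‖² = 0` for all `i < n`. -/
theorem exists_unit_bracket_orthogonal_all {X : Type*} [NormedAddCommGroup X]
    [NormedSpace ℝ X] (n : ℕ) (hn : 1 ≤ n) (hdim : Module.finrank ℝ X = n)
    (x : Fin (n - 1) → X) :
    ∃ xn : X, ‖xn‖ = 1 ∧ ∀ i, ‖xn + x i‖ ^ 2 - ‖xn - x i‖ ^ 2 = 0 := by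
  obtain ⟨m, rfl⟩ : ∃ m, n = m + 1 := ⟨n - 1, by omega⟩
  have hfd : FiniteDimensional ℝ X := Module.finite_of_finrank_pos (by omega)
  let B := Module.finBasisOfFinrankEq ℝ X hdim
  let g : (Fin (m + 1) → ℝ) →ₗ[ℝ] X := B.equivFun.symm.toLinearMap
  have hgc : Continuous g := g.continuous_of_finiteDimensional
  obtain ⟨v, hv, h⟩ := borsuk_ulam m
    (fun i v => ‖g v + ‖g v‖ • x i‖ ^ 2 - ‖g v - ‖g v‖ • x i‖ ^ 2)
    (fun i => by fun_prop) (by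
      intro i v
      have e1 : ‖-g v + ‖g v‖ • x i‖ = ‖g v - ‖g v‖ • x i‖ := by
        rw [← norm_neg]; congr 1; abel
      have e2 : ‖-g v - ‖g v‖ • x i‖ = ‖g v + ‖g v‖ • x i‖ := by
        rw [← norm_neg]; congr 1; abel
      simp only [map_neg, norm_neg, e1, e2]
      ring)
  have hg0 : g v ≠ 0 := by
    intro h0
    have : v = 0 := B.equivFun.symm.injective (by rw [map_zero]; exact h0)
    simp [this] at hv
  have hN : ‖g v‖ ≠ 0 := norm_ne_zero_iff.mpr hg0
  refine ⟨‖g v‖⁻¹ • g v, by rw [norm_smul, norm_inv, norm_norm, inv_mul_cancel₀ hN], fun i => ?_⟩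
  have e1 : ‖g v‖⁻¹ • g v + x i = ‖g v‖⁻¹ • (g v + ‖g v‖ • x i) := by
    rw [smul_add, smul_smul, inv_mul_cancel₀ hN, one_smul]
  have e2 : ‖g v‖⁻¹ • g v - x i = ‖g v‖⁻¹ • (g v - ‖g v‖ • x i) := by
    rw [smul_sub, smul_smul, inv_mul_cancel₀ hN, one_smul]
  have hi : ‖g v + ‖g v‖ • x i‖ ^ 2 - ‖g v - ‖g v‖ • x i‖ ^ 2 = 0 := h i
  rw [e1, e2, norm_smul, norm_smul, mul_pow, mul_pow, ← mul_sub, hi, mul_zero]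
end

section
/- Fix n ≥ 2. There exist constants C > 0 and ε₀ > 0 (depending only on n) such that for every ε ∈ [0, ε₀] and every n-dimensional real normed vector space X with von Neumann–Jordan constant at most ε + 1, there exists a linear isomorphism Λ from X onto the Euclidean space ℝⁿ with ‖Λ‖·‖Λ⁻¹‖ ≤ 1 + (18n² − 17n + 14)ε + Cε². In particular the Banach–Mazur distance satisfies d(X, ℝⁿ) ≤ 1 + (18n² − 17n + 14)ε + Cε². -/
/-- planar lemma -/
lemma plane_step (F : ℝ → ℝ → ℝ) (δ T : ℝ)
    (hom : ∀ t a b, F (t * a) (t * b) = t ^ 2 * F a b)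
    (par : ∀ a b c d, |F (a + c) (b + d) + F (a - c) (b - d) - 2 * F a b - 2 * F c d|
      ≤ 2 * δ * (a ^ 2 + b ^ 2 + (c ^ 2 + d ^ 2)))
    (h1 : F 1 0 = 0) (h2 : F 0 1 = 0) (h3 : F 1 1 = F 1 (-1))
    (hT : ∀ a b, |F a b| ≤ (14 * δ + T) * (a ^ 2 + b ^ 2)) (hδ : 0 ≤ δ) :
    ∀ a b, |F a b| ≤ (14 * δ + T / 2) * (a ^ 2 + b ^ 2) := by
  have hx : ∀ a, F a 0 = 0 := fun a => by have := hom a 1 0; simpa [h1] using this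
  have hy : ∀ a, F 0 a = 0 := fun a => by have := hom a 0 1; simpa [h2] using this
  have h11 : |F 1 1| ≤ 2 * δ := by
    have := par 1 0 0 1
    norm_num [h1, h2, ← h3] at this
    rw [abs_le] at *
    constructor <;> linarith
  have hF1 : ∀ a b, |F a b + F a (-b)| ≤ 2 * δ * (a ^ 2 + b ^ 2) := fun a b => by
    have := par a 0 0 b
    simpa [hx, hy] using this
  have hF2 : ∀ a b, |F a b + F b a| ≤ 4 * δ * (a ^ 2 + b ^ 2) := fun a b => by
    have h := par ((a + b) / 2) ((a + b) / 2) ((a - b) / 2) (-((a - b) / 2))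
    have e1 := hom ((a + b) / 2) 1 1
    have e2 := hom ((a - b) / 2) 1 (-1)
    simp only [mul_one, mul_neg] at e1 e2
    rw [e1, e2, ← h3] at h
    have i1 : (a + b) / 2 + (a - b) / 2 = a := by ring
    have i2 : (a + b) / 2 - (a - b) / 2 = b := by ring
    rw [sub_neg_eq_add, ← sub_eq_add_neg, i1, i2] at h
    rw [abs_le] at *
    constructor <;> nlinarith [sq_nonneg (a+b), sq_nonneg (a-b)]
  have hrot : ∀ a b, |F (-b) a - F a b| ≤ 6 * δ * (a ^ 2 + b ^ 2) := fun a b => by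
    have k1 := hF1 a (-b)
    have k2 := hF2 a (-b)
    rw [neg_neg] at k1
    rw [abs_le] at *
    constructor <;> nlinarith
  have unit : ∀ a b, a ^ 2 + b ^ 2 = 1 → |F a b| ≤ 14 * δ + T / 2 := fun a b hab => by
    have h := par (a ^ 2 - b ^ 2) (2 * a * b) 1 0
    have e1 := hom (2 * a) a b
    have e2 := hom (2 * b) (-b) a
    have i1 : a ^ 2 - b ^ 2 + 1 = 2 * a * a := by linarith
    have i2 : a ^ 2 - b ^ 2 - 1 = 2 * b * (-b) := by linarith
    have i3 : 2 * a * b - 0 = 2 * b * a := by ring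
    have i4 : (a ^ 2 - b ^ 2)^2 + (2 * a * b)^2 = 1 := by
      have : (a ^ 2 - b ^ 2)^2 + (2 * a * b)^2 = (a^2+b^2)^2 := by ring
      rw [this, hab]; norm_num
    rw [i1, i2, add_zero, i3, e1, e2, h1, i4] at h
    have k := hT (a ^ 2 - b ^ 2) (2 * a * b)
    rw [i4] at k
    have r := hrot a b
    rw [hab] at r
    have hb : b ^ 2 ≤ 1 := by nlinarith
    have hb0 := sq_nonneg b
    obtain ⟨r1, r2⟩ := abs_le.1 r
    obtain ⟨k1, k2⟩ := abs_le.1 k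
    obtain ⟨l1, l2⟩ := abs_le.1 h
    have ha : a ^ 2 = 1 - b ^ 2 := by linarith
    have m1 := mul_le_mul_of_nonneg_left r1 hb0
    have m2 := mul_le_mul_of_nonneg_left r2 hb0
    have m3 : b ^ 2 * δ ≤ δ := by nlinarith
    rw [abs_le]
    have e : (2*a)^2 * F a b + (2*b)^2 * F (-b) a = 4 * F a b + 4 * (b^2 * (F (-b) a - F a b)) := by
      rw [mul_pow, mul_pow, ha]; ring
    constructor <;> nlinarith
  intro a b
  rcases eq_or_lt_of_le (by positivity : 0 ≤ a ^ 2 + b ^ 2) with h | h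
  · have ha : a = 0 := by nlinarith [sq_nonneg a, sq_nonneg b]
    have hb : b = 0 := by nlinarith [sq_nonneg a, sq_nonneg b]
    subst ha; subst hb; simp [hx]
  · set r := Real.sqrt (a ^ 2 + b ^ 2) with hr
    have hr0 : 0 < r := Real.sqrt_pos.2 h
    have hr2 : r ^ 2 = a ^ 2 + b ^ 2 := Real.sq_sqrt h.le
    have := unit (a / r) (b / r) (by rw [div_pow, div_pow, ← add_div, hr2]; field_simp)
    have e := hom r (a / r) (b / r)
    rw [mul_div_cancel₀ _ hr0.ne', mul_div_cancel₀ _ hr0.ne'] at e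
    rw [e, abs_mul, abs_of_nonneg (sq_nonneg r), hr2, mul_comm]
    gcongr

lemma plane_bound (F : ℝ → ℝ → ℝ) (δ S : ℝ)
    (hom : ∀ t a b, F (t * a) (t * b) = t ^ 2 * F a b)
    (par : ∀ a b c d, |F (a + c) (b + d) + F (a - c) (b - d) - 2 * F a b - 2 * F c d|
      ≤ 2 * δ * (a ^ 2 + b ^ 2 + (c ^ 2 + d ^ 2)))
    (h1 : F 1 0 = 0) (h2 : F 0 1 = 0) (h3 : F 1 1 = F 1 (-1))
    (hS : ∀ a b, |F a b| ≤ S * (a ^ 2 + b ^ 2)) (hδ : 0 ≤ δ) :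
    ∀ a b, |F a b| ≤ 14 * δ * (a ^ 2 + b ^ 2) := by
  have key : ∀ k : ℕ, ∀ a b, |F a b| ≤ (14 * δ + S * (1 / 2) ^ k) * (a ^ 2 + b ^ 2) := by
    intro k
    induction k with
    | zero =>
      intro a b
      have : 0 ≤ δ * (a ^ 2 + b ^ 2) := by positivity
      have := hS a b
      simp only [pow_zero]
      nlinarith
    | succ k ih =>
      have := plane_step F δ _ hom par h1 h2 h3 ih hδ
      intro a b
      have := this a b
      rw [pow_succ]
      convert this using 3
      ring
  intro a b
  have lim : Filter.Tendsto (fun k : ℕ => (14 * δ + S * (1 / 2 : ℝ) ^ k) * (a ^ 2 + b ^ 2))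
      Filter.atTop (nhds ((14 * δ + S * 0) * (a ^ 2 + b ^ 2))) :=
    ((((tendsto_pow_atTop_nhds_zero_of_lt_one (by norm_num) (by norm_num)).const_mul S).const_add
      _).mul_const _)
  have := ge_of_tendsto' lim (fun k => key k a b)
  simpa using this

lemma core {E ι : Type*} [NormedAddCommGroup E] [InnerProductSpace ℝ E] [DecidableEq ι]
    (e : ι → E) (he : Orthonormal ℝ e) (D : E → ℝ) (δ S : ℝ) (hδ : 0 ≤ δ)
    (hom : ∀ (t : ℝ) x, D (t • x) = t ^ 2 * D x)
    (par : ∀ x y, |D (x + y) + D (x - y) - 2 * D x - 2 * D y| ≤ 2 * δ * (‖x‖ ^ 2 + ‖y‖ ^ 2))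
    (hS : ∀ x, |D x| ≤ S * ‖x‖ ^ 2) (h0 : ∀ i, D (e i) = 0)
    (h1 : ∀ i j, i ≠ j → D (e i + e j) = D (e i - e j)) (x : ι → ℝ) (s : Finset ι) :
    |D (∑ i ∈ s, x i • e i)| ≤ (8 * (s.card : ℝ) ^ 2 - 7 * s.card) * δ * ∑ i ∈ s, x i ^ 2 := by
  have nrm : ∀ (s : Finset ι), ‖∑ i ∈ s, x i • e i‖ ^ 2 = ∑ i ∈ s, x i ^ 2 := by
    intro s
    rw [← real_inner_self_eq_norm_sq, he.inner_sum]
    simp [sq]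
  have n2 : ∀ i j, i ≠ j → ∀ a b : ℝ, ‖a • e i + b • e j‖ ^ 2 = a ^ 2 + b ^ 2 := by
    intro i j hij a b
    rw [norm_add_sq_real, inner_smul_left, inner_smul_right, he.2 hij, norm_smul, norm_smul,
      he.1 i, he.1 j]
    simp
  have pl : ∀ i j, i ≠ j → ∀ a b : ℝ, |D (a • e i + b • e j)| ≤ 14 * δ * (a ^ 2 + b ^ 2) := by
    intro i j hij
    refine plane_bound (fun a b => D (a • e i + b • e j)) δ S ?_ ?_ ?_ ?_ ?_ ?_ hδ
    · intro t a b
      rw [← hom]; congr 1; module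
    · intro a b c d
      have := par (a • e i + b • e j) (c • e i + d • e j)
      rw [n2 i j hij, n2 i j hij] at this
      have e1 : a • e i + b • e j + (c • e i + d • e j) = (a + c) • e i + (b + d) • e j := by
        module
      have e2 : a • e i + b • e j - (c • e i + d • e j) = (a - c) • e i + (b - d) • e j := by
        module
      rwa [e1, e2] at this
    · simp [h0]
    · simp [h0]
    · simpa [sub_eq_add_neg] using h1 i j hij
    · intro a b
      rw [← n2 i j hij]; exact hS _
  have sgl : ∀ i (a : ℝ), D (a • e i) = 0 := fun i a => by rw [hom, h0, mul_zero]
  have orth : ∀ (s : Finset ι) j, j ∉ s → inner ℝ (∑ i ∈ s, x i • e i) (e j) = 0 := by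
    intro s j hj
    rw [sum_inner]
    refine Finset.sum_eq_zero fun i hi => ?_
    rw [inner_smul_left, he.2 (by rintro rfl; exact hj hi), mul_zero]
  have nadd : ∀ (s : Finset ι) j, j ∉ s → ∀ t : ℝ,
      ‖∑ i ∈ s, x i • e i + t • e j‖ ^ 2 = ∑ i ∈ s, x i ^ 2 + t ^ 2 := by
    intro s j hj t
    rw [norm_add_sq_real, nrm, inner_smul_right, orth s j hj, norm_smul, he.1 j]
    simp
  have cross : ∀ (s : Finset ι) j, j ∉ s → ∀ t : ℝ,
      |D (∑ i ∈ s, x i • e i + t • e j) - D (∑ i ∈ s, x i • e i - t • e j)| ≤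
        32 * s.card * δ * (∑ i ∈ s, x i ^ 2 + t ^ 2) := by
    intro s
    induction s using Finset.induction_on with
    | empty =>
      intro j _ t
      have := sgl j t
      have := sgl j (-t)
      simp only [neg_smul] at this
      simp [*]
    | insert k s hk ih =>
      intro j hj t
      have hjk : j ≠ k := fun h => hj (by simp [h])
      have hjs : j ∉ s := fun h => hj (by simp [h])
      rw [Finset.sum_insert hk, Finset.sum_insert hk, Finset.card_insert_of_notMem hk]
      have ih := ih j hjs t
      set y := ∑ i ∈ s, x i • e i with hy
      set N := ∑ i ∈ s, x i ^ 2 with hN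
      set z := x k • e k with hz
      set w := t • e j with hw
      have hN0 : 0 ≤ N := Finset.sum_nonneg fun i _ => sq_nonneg _
      have nz : ‖z‖ ^ 2 = x k ^ 2 := by rw [hz, norm_smul, he.1 k]; simp
      have nyw : ‖y + w‖ ^ 2 = N + t ^ 2 := nadd s j hjs t
      have nyw' : ‖y - w‖ ^ 2 = N + t ^ 2 := by
        have := nadd s j hjs (-t)
        simpa [neg_smul, ← sub_eq_add_neg] using this
      have ny : ‖y‖ ^ 2 = N := nrm s
      have nzw : ‖z + w‖ ^ 2 = x k ^ 2 + t ^ 2 := n2 k j hjk.symm _ _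
      have nzw' : ‖z - w‖ ^ 2 = x k ^ 2 + t ^ 2 := by
        have := n2 k j hjk.symm (x k) (-t)
        simpa [neg_smul, ← sub_eq_add_neg] using this
      have b1 : |D (z + w)| ≤ 14 * δ * (x k ^ 2 + t ^ 2) := pl k j hjk.symm _ _
      have b2 : |D (z - w)| ≤ 14 * δ * (x k ^ 2 + t ^ 2) := by
        have := pl k j hjk.symm (x k) (-t)
        simpa [neg_smul, ← sub_eq_add_neg] using this
      have p1 := par (y + w) z
      have p2 := par (y - w) z
      have p3 := par (z + w) y
      have p4 := par (z - w) y
      have hneg : ∀ v, D (-v) = D v := fun v => by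
        have := hom (-1) v; simpa using this
      have r1 : y + w + z = z + y + w := by abel
      have r2 : y - w + z = z + y - w := by abel
      have r3 : z + w + y = z + y + w := by abel
      have r4 : z - w + y = z + y - w := by abel
      have r5 : D (z + w - y) = D (y - w - z) := by rw [← hneg]; congr 1; abel
      have r6 : D (z - w - y) = D (y + w - z) := by rw [← hneg]; congr 1; abel
      rw [r1, nyw, nz] at p1
      rw [r2, nyw', nz] at p2
      rw [r3, r5, nzw, ny] at p3
      rw [r4, r6, nzw', ny] at p4
      push_cast
      have q1 : 0 ≤ δ * N := mul_nonneg hδ hN0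
      have q2 : 0 ≤ δ * x k ^ 2 := by positivity
      have q3 : 0 ≤ δ * t ^ 2 := by positivity
      have q4 : 0 ≤ (s.card : ℝ) * (δ * x k ^ 2) := by positivity
      rw [abs_le] at *
      constructor <;> nlinarith
  induction s using Finset.induction_on with
  | empty =>
    have := hom 0 0
    simp at this
    simp [this]
  | insert k s hk ih =>
    have c := cross s k hk (x k)
    have p := par (∑ i ∈ s, x i • e i) (x k • e k)
    rw [nrm, norm_smul, he.1 k, sgl] at p
    simp only [mul_one, Real.norm_eq_abs, sq_abs] at p
    rw [Finset.sum_insert hk, Finset.sum_insert hk, Finset.card_insert_of_notMem hk, add_comm]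
    set y := ∑ i ∈ s, x i • e i with hy
    set N := ∑ i ∈ s, x i ^ 2 with hN
    have hN0 : 0 ≤ N := Finset.sum_nonneg fun i _ => sq_nonneg _
    push_cast
    have q1 : 0 ≤ δ * N := mul_nonneg hδ hN0
    have q2 : 0 ≤ δ * x k ^ 2 := by positivity
    have q4 : 0 ≤ (8 * (s.card : ℝ)^2 - 7 * s.card) * (δ * x k ^ 2) := by
      refine mul_nonneg ?_ q2
      rcases Nat.eq_zero_or_pos s.card with h | h
      · simp [h]
      · have : (1:ℝ) ≤ s.card := by exact_mod_cast h
        nlinarith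
    rw [abs_le] at *
    constructor <;> nlinarith
lemma root {n : ℕ} (T : EuclideanSpace ℝ (Fin n) →ₗ[ℝ] EuclideanSpace ℝ (Fin n))
    (hT : T.IsSymmetric) (hpos : ∀ x, x ≠ 0 → 0 < inner ℝ x (T x)) :
    ∃ R : EuclideanSpace ℝ (Fin n) ≃ₗ[ℝ] EuclideanSpace ℝ (Fin n),
      ∀ x, ‖R x‖ ^ 2 = inner ℝ x (T x) := by
  have hn : Module.finrank ℝ (EuclideanSpace ℝ (Fin n)) = n := by simp
  set b := hT.eigenvectorBasis hn with hb
  set l := hT.eigenvalues hn with hl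
  have hTb : ∀ i, T (b i) = l i • b i := fun i => hT.apply_eigenvectorBasis hn i
  have hl0 : ∀ i, 0 < l i := fun i => by
    have := hpos (b i) (b.orthonormal.ne_zero i)
    rw [hTb, inner_smul_right, real_inner_self_eq_norm_sq, b.orthonormal.1 i] at this
    simpa using this
  let R0 : EuclideanSpace ℝ (Fin n) →ₗ[ℝ] EuclideanSpace ℝ (Fin n) :=
    (WithLp.linearEquiv 2 ℝ (Fin n → ℝ)).symm.toLinearMap ∘ₗ
      LinearMap.pi (fun i => (Real.sqrt (l i)) • (innerₛₗ ℝ (b i)))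
  have hR : ∀ x, ‖R0 x‖ ^ 2 = inner ℝ x (T x) := by
    intro x
    rw [EuclideanSpace.norm_sq_eq, ← b.sum_inner_mul_inner x (T x)]
    refine Finset.sum_congr rfl fun i _ => ?_
    rw [← hT (b i) x, hTb]
    simp only [R0, LinearMap.comp_apply, LinearEquiv.coe_coe, WithLp.linearEquiv_symm_apply,
      LinearMap.pi_apply, LinearMap.smul_apply, innerₛₗ_apply_apply, smul_eq_mul, Real.norm_eq_abs,
      sq_abs, inner_smul_left, mul_pow, Real.sq_sqrt (hl0 i).le]
    rw [real_inner_comm]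
    simp
    ring_nf
    rw [Real.sq_sqrt (hl0 i).le]
    ring
  have inj : Function.Injective R0 := by
    rw [← LinearMap.ker_eq_bot, LinearMap.ker_eq_bot']
    intro x hx
    by_contra h
    have := hpos x h
    rw [← hR, hx] at this
    simp at this
  exact ⟨LinearEquiv.ofInjectiveEndo R0 inj, fun x => by rw [← hR]; rfl⟩

lemma auerbach {n : ℕ} (X : Type) [NormedAddCommGroup X] [NormedSpace ℝ X] (hn : 0 < n)
    (h : Module.finrank ℝ X = n) :
    ∃ L : X ≃ₗ[ℝ] EuclideanSpace ℝ (Fin n),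
      (∀ x, ‖x‖ ^ 2 ≤ n * ‖L x‖ ^ 2) ∧ (∀ x, ‖L x‖ ^ 2 ≤ n * ‖x‖ ^ 2) := by
  have : FiniteDimensional ℝ X := Module.finite_of_finrank_pos (by omega)
  have : ProperSpace X := FiniteDimensional.proper ℝ X
  let b := Module.finBasisOfFinrankEq ℝ X h
  let K : Set (Fin n → X) := Set.univ.pi fun _ => Metric.closedBall 0 1
  have hK : IsCompact K := isCompact_univ_pi fun _ => isCompact_closedBall _ _
  have hc : Continuous fun v : Fin n → X => |b.det v| := by
    refine continuous_abs.comp ?_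
    change Continuous fun v : Fin n → X => (b.toMatrix v).det
    refine Continuous.matrix_det ?_
    refine continuous_matrix fun i j => ?_
    simp only [Module.Basis.toMatrix_apply]
    exact (b.coord i).continuous_of_finiteDimensional.comp (continuous_apply j)
  obtain ⟨v, hvK, hv⟩ := hK.exists_isMaxOn ⟨0, by simp [K]⟩ hc.continuousOn
  have hvn : ∀ i, ‖v i‖ ≤ 1 := fun i => by simpa using hvK i (Set.mem_univ i)
  have hdet : 0 < |b.det v| := by
    have : (fun i => (‖b i‖⁻¹) • b i) ∈ K := by
      intro i _
      simp [norm_smul, b.ne_zero i]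
    have h2 := hv this
    refine lt_of_lt_of_le ?_ h2
    simp only
    rw [AlternatingMap.map_smul_univ, b.det_self, abs_pos]
    simp [Finset.prod_ne_zero_iff, b.ne_zero]
  have hu : IsUnit (b.det v) := isUnit_iff_ne_zero.2 (abs_pos.1 hdet)
  obtain ⟨hli, hsp⟩ := (b.is_basis_iff_det).2 hu
  let e := Module.Basis.mk hli hsp.ge
  have hcoord : ∀ i x, |e.repr x i| ≤ ‖x‖ := by
    intro i x
    have unit : ∀ y : X, ‖y‖ ≤ 1 → |e.repr y i| ≤ 1 := by
      intro y hy
      have h1 := congrArg (fun f => f y) (b.det_smul_mk_coord_eq_det_update hli hsp.ge i)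
      simp only [LinearMap.smul_apply, smul_eq_mul, MultilinearMap.toLinearMap_apply] at h1
      have h2 : Function.update v i y ∈ K := by
        intro j _
        by_cases hj : j = i
        · subst hj; simpa using hy
        · simpa [hj] using hvn j
      have h3 := hv h2
      simp only [Set.mem_ofPred_eq] at h3
      have h4 : |b.det v| * |e.repr y i| ≤ |b.det v| := by
        rw [← abs_mul]
        refine le_trans (le_of_eq ?_) h3
        congr 1
      nlinarith
    by_cases hx : x = 0
    · simp [hx]
    · have hx' : 0 < ‖x‖ := norm_pos_iff.2 hx
      have := unit (‖x‖⁻¹ • x) (by simp [norm_smul, hx])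
      simp only [map_smul, Finsupp.smul_apply, smul_eq_mul, abs_mul, abs_inv, abs_norm] at this
      rwa [inv_mul_le_iff₀ hx', mul_one] at this
  refine ⟨e.equivFun.trans (WithLp.linearEquiv 2 ℝ (Fin n → ℝ)).symm, ?_, ?_⟩
  · intro x
    have h1 : ‖x‖ ≤ ∑ i, |e.repr x i| := by
      conv_lhs => rw [← e.sum_repr x]
      refine (norm_sum_le _ _).trans (Finset.sum_le_sum fun i _ => ?_)
      rw [norm_smul, Real.norm_eq_abs]
      have : ‖e i‖ ≤ 1 := by simpa [e] using hvn i
      nlinarith [abs_nonneg (e.repr x i)]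
    have h2 : (∑ i, |e.repr x i|) ^ 2 ≤ n * ∑ i, |e.repr x i| ^ 2 := by
      simpa using sq_sum_le_card_mul_sum_sq (s := (Finset.univ : Finset (Fin n)))
        (f := fun i => |e.repr x i|)
    rw [EuclideanSpace.norm_sq_eq]
    refine le_trans (pow_le_pow_left₀ (norm_nonneg _) h1 2) (h2.trans (le_of_eq ?_))
    rfl
  · intro x
    rw [EuclideanSpace.norm_sq_eq]
    calc _ ≤ ∑ i : Fin n, ‖x‖ ^ 2 := Finset.sum_le_sum fun i _ =>
            pow_le_pow_left₀ (norm_nonneg _) (hcoord i x) 2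
      _ = _ := by simp

lemma step {n : ℕ} (X : Type) [NormedAddCommGroup X] [NormedSpace ℝ X] (ε c c' : ℝ) (hε : 0 ≤ ε)
    (hc : 0 ≤ c)
    (hv : ∀ a b : X, |‖a + b‖ ^ 2 + ‖a - b‖ ^ 2 - 2 * ‖a‖ ^ 2 - 2 * ‖b‖ ^ 2| ≤
      2 * ε * (‖a‖ ^ 2 + ‖b‖ ^ 2))
    (L : X ≃ₗ[ℝ] EuclideanSpace ℝ (Fin n)) (h1 : ∀ x, ‖x‖ ^ 2 ≤ c * ‖L x‖ ^ 2)
    (h2 : ∀ x, ‖L x‖ ^ 2 ≤ c' * ‖x‖ ^ 2)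
    (hlt : (8 * (n : ℝ) ^ 2 - 7 * n) * (c * ε) * c' < 1) :
    ∃ L' : X ≃ₗ[ℝ] EuclideanSpace ℝ (Fin n), ∀ x,
      |‖x‖ ^ 2 - ‖L' x‖ ^ 2| ≤ (8 * (n : ℝ) ^ 2 - 7 * n) * (c * ε) * c' * ‖x‖ ^ 2 := by
  let e : OrthonormalBasis (Fin n) ℝ (EuclideanSpace ℝ (Fin n)) := EuclideanSpace.basisFun _ ℝ
  let q : EuclideanSpace ℝ (Fin n) → ℝ := fun y => ‖L.symm y‖ ^ 2
  have qhom : ∀ (t : ℝ) y, q (t • y) = t ^ 2 * q y := fun t y => by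
    simp [q, norm_smul, mul_pow]
  have qpar : ∀ x y, |q (x + y) + q (x - y) - 2 * q x - 2 * q y| ≤
      2 * (c * ε) * (‖x‖ ^ 2 + ‖y‖ ^ 2) := fun x y => by
    have := hv (L.symm x) (L.symm y)
    have k1 := h1 (L.symm x)
    have k2 := h1 (L.symm y)
    simp only [LinearEquiv.apply_symm_apply] at k1 k2
    simp only [q, map_add, map_sub]
    refine this.trans ?_
    nlinarith
  have qneg : ∀ y, q (-y) = q y := fun y => by simp [q]
  let A : Matrix (Fin n) (Fin n) ℝ := Matrix.of fun i j => (q (e i + e j) - q (e i - e j)) / 4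
  have hA : A.IsHermitian := by
    ext i j
    simp only [A, Matrix.conjTranspose_apply, Matrix.of_apply, star_trivial]
    rw [add_comm (e j), ← qneg (e j - e i), neg_sub]
  let T := Matrix.toEuclideanLin A
  have hT : T.IsSymmetric := Matrix.isSymmetric_toEuclideanLin_iff.2 hA
  have hTe : ∀ i j, inner ℝ (e i) (T (e j)) = A i j := by
    intro i j
    simp [e, T, EuclideanSpace.inner_single_left, Matrix.toEuclideanLin_apply]
  have hsym : ∀ x y, inner ℝ x (T y) = inner ℝ y (T x) := fun x y => by
    rw [← hT x y, real_inner_comm]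
  let D : EuclideanSpace ℝ (Fin n) → ℝ := fun y => q y - inner ℝ y (T y)
  have hTadd : ∀ x y, inner ℝ (x + y) (T (x + y)) =
      inner ℝ x (T x) + inner ℝ y (T y) + 2 * inner ℝ x (T y) := fun x y => by
    rw [map_add, inner_add_left, inner_add_right, inner_add_right, hsym y x]; ring
  have hTsub : ∀ x y, inner ℝ (x - y) (T (x - y)) =
      inner ℝ x (T x) + inner ℝ y (T y) - 2 * inner ℝ x (T y) := fun x y => by
    rw [map_sub, inner_sub_left, inner_sub_right, inner_sub_right, hsym y x]; ring
  have q0 : q 0 = 0 := by simp [q]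
  have key : ∀ y, |D y| ≤ (8 * (n : ℝ) ^ 2 - 7 * n) * (c * ε) * ‖y‖ ^ 2 := by
    intro y
    have hD := core e e.orthonormal D (c * ε) (c + ‖LinearMap.toContinuousLinearMap T‖)
      (mul_nonneg hc hε)
      (fun t x => by
        simp only [D, qhom, map_smul, inner_smul_left, inner_smul_right, conj_trivial]; ring)
      (fun x y => by
        have := qpar x y
        simp only [D, hTadd, hTsub]
        convert this using 2
        ring)
      (fun x => by
        have k1 := h1 (L.symm x)
        simp only [LinearEquiv.apply_symm_apply] at k1
        have k2 := abs_real_inner_le_norm x (T x)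
        have k3 := (LinearMap.toContinuousLinearMap T).le_opNorm x
        have k3' : ‖T x‖ ≤ ‖LinearMap.toContinuousLinearMap T‖ * ‖x‖ := k3
        have k4 : ‖x‖ * ‖T x‖ ≤ ‖LinearMap.toContinuousLinearMap T‖ * ‖x‖ ^ 2 := by
          nlinarith [norm_nonneg x]
        have k5 : |q x| ≤ c * ‖x‖ ^ 2 := by
          rw [abs_of_nonneg (by positivity : 0 ≤ q x)]; exact k1
        have k6 : |D x| ≤ |q x| + |inner ℝ x (T x)| := abs_sub _ _
        linarith)
      (fun i => by
        simp only [D, hTe, A, Matrix.of_apply, sub_self, q0]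
        have := qhom 2 (e i)
        rw [two_smul] at this
        rw [this]; ring)
      (fun i j _ => by
        simp only [D, hTadd, hTsub, hTe]
        have : A i j = (q (e i + e j) - q (e i - e j)) / 4 := rfl
        linarith)
      (fun i => e.repr y i) Finset.univ
    rw [e.sum_repr y] at hD
    have : ∑ i, (e.repr y i) ^ 2 = ‖y‖ ^ 2 := by
      rw [← e.repr.norm_map y, EuclideanSpace.norm_sq_eq]; simp
    rw [this] at hD
    simpa using hD
  have hnn : 0 ≤ (8 * (n : ℝ) ^ 2 - 7 * n) * (c * ε) := by
    refine mul_nonneg ?_ (mul_nonneg hc hε)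
    rcases Nat.eq_zero_or_pos n with h | h
    · simp [h]
    · have : (1:ℝ) ≤ n := by exact_mod_cast h
      nlinarith
  have key2 : ∀ x : X, |‖x‖ ^ 2 - inner ℝ (L x) (T (L x))| ≤
      (8 * (n : ℝ) ^ 2 - 7 * n) * (c * ε) * c' * ‖x‖ ^ 2 := by
    intro x
    have := key (L x)
    simp only [D, q, LinearEquiv.symm_apply_apply] at this
    refine this.trans ?_
    rw [mul_assoc _ c']
    exact mul_le_mul_of_nonneg_left (h2 x) hnn
  obtain ⟨R, hR⟩ := root T hT (by
    intro y hy
    have := key2 (L.symm y)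
    rw [LinearEquiv.apply_symm_apply] at this
    have hp : 0 < ‖L.symm y‖ ^ 2 := by
      have : L.symm y ≠ 0 := by simpa using hy
      positivity
    have := (abs_le.1 this).2
    nlinarith)
  refine ⟨L.trans R, fun x => ?_⟩
  rw [LinearEquiv.trans_apply, hR]
  exact key2 x

/-- **Main theorem** (Theorem 3.4). For each `n ≥ 2` there are constants `C > 0` and
`ε₀ > 0` such that any `n`-dimensional real normed vector space with von Neumann–Jordan
constant at most `ε + 1` (for `ε ∈ [0, ε₀]`) admits a linear isomorphism `Λ` onto
Euclidean `ℝⁿ` with `‖Λ‖·‖Λ⁻¹‖ ≤ 1 + (18n² − 17n + 14)ε + Cε²`; in particular the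
Banach–Mazur distance `d(X, ℝⁿ)` is at most this quantity. -/
theorem approx_jordan_von_neumann (n : ℕ) (hn : 2 ≤ n) :
    ∃ C : ℝ, 0 < C ∧ ∃ ε₀ : ℝ, 0 < ε₀ ∧
      ∀ (ε : ℝ), 0 ≤ ε → ε ≤ ε₀ →
      ∀ (X : Type) (_ : NormedAddCommGroup X) (_ : NormedSpace ℝ X),
        Module.finrank ℝ X = n →
        (∀ a b : X, ¬(a = 0 ∧ b = 0) →
          1 / (ε + 1) ≤ (‖a + b‖ ^ 2 + ‖a - b‖ ^ 2) / (2 * (‖a‖ ^ 2 + ‖b‖ ^ 2)) ∧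
          (‖a + b‖ ^ 2 + ‖a - b‖ ^ 2) / (2 * (‖a‖ ^ 2 + ‖b‖ ^ 2)) ≤ ε + 1) →
        ∃ Λ : X ≃L[ℝ] EuclideanSpace ℝ (Fin n),
          ‖(Λ : X →L[ℝ] EuclideanSpace ℝ (Fin n))‖ *
            ‖(Λ.symm : EuclideanSpace ℝ (Fin n) →L[ℝ] X)‖ ≤
            1 + (18 * (n : ℝ) ^ 2 - 17 * n + 14) * ε + C * ε ^ 2 := by
  have hn2 : (2:ℝ) ≤ n := by exact_mod_cast hn
  set K : ℝ := 8 * (n : ℝ) ^ 2 - 7 * n with hK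
  have hK0 : 0 < K := by nlinarith
  have hn0 : (0:ℝ) < n := by linarith
  refine ⟨1, one_pos, 1 / (12 * K * n ^ 2), by positivity, ?_⟩
  intro ε hε hε0 X _ _ hX hvnj
  have hv : ∀ a b : X, |‖a + b‖ ^ 2 + ‖a - b‖ ^ 2 - 2 * ‖a‖ ^ 2 - 2 * ‖b‖ ^ 2| ≤
      2 * ε * (‖a‖ ^ 2 + ‖b‖ ^ 2) := by
    intro a b
    by_cases hab : a = 0 ∧ b = 0
    · simp [hab.1, hab.2]
    obtain ⟨u1, u2⟩ := hvnj a b hab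
    have hp : 0 < 2 * (‖a‖ ^ 2 + ‖b‖ ^ 2) := by
      by_cases ha : a = 0
      · have hb : b ≠ 0 := fun hb => hab ⟨ha, hb⟩
        positivity
      · positivity
    rw [div_le_iff₀ hp] at u2
    have u3 : 1 - ε ≤ 1 / (ε + 1) := by
      rw [le_div_iff₀ (by linarith)]; nlinarith
    have u4 := u3.trans u1
    rw [le_div_iff₀ hp] at u4
    rw [abs_le]
    constructor <;> nlinarith
  have hfd : FiniteDimensional ℝ X := Module.finite_of_finrank_pos (by omega)
  obtain ⟨L, hL1, hL2⟩ := auerbach X (by omega) hX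
  have hη : K * (n * ε) * n ≤ 1 / 12 := by
    rw [le_div_iff₀ (by positivity)] at hε0
    nlinarith
  have hKε : K * ε ≤ 1 / 48 := by
    have : 0 ≤ K * ε := by positivity
    nlinarith [mul_le_mul_of_nonneg_left (by nlinarith : (4:ℝ) ≤ n * n) this]
  obtain ⟨L1, h1⟩ := step X ε n n hε hn0.le hv L hL1 hL2 (by linarith)
  have h1' : ∀ x, |‖x‖ ^ 2 - ‖L1 x‖ ^ 2| ≤ 1 / 12 * ‖x‖ ^ 2 := fun x =>
    (h1 x).trans (by gcongr)
  obtain ⟨L2, h2⟩ := step X ε (6 / 5) (6 / 5) hε (by norm_num) hv L1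
    (fun x => by
      have := abs_le.1 (h1' x)
      nlinarith [sq_nonneg ‖x‖])
    (fun x => by
      have := abs_le.1 (h1' x)
      nlinarith [sq_nonneg ‖x‖])
    (by nlinarith)
  set h := K * (6 / 5 * ε) * (6 / 5) with hh
  have hh0 : 0 ≤ h := by positivity
  have hh1 : h ≤ 1 / 30 := by nlinarith
  refine ⟨L2.toContinuousLinearEquiv, ?_⟩
  have n1 : ‖(L2.toContinuousLinearEquiv : X →L[ℝ] EuclideanSpace ℝ (Fin n))‖ ≤ √(1 + h) := by
    refine ContinuousLinearMap.opNorm_le_bound _ (Real.sqrt_nonneg _) fun x => ?_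
    refine abs_le_of_sq_le_sq' ?_ (by positivity) |>.2
    rw [mul_pow, Real.sq_sqrt (by linarith)]
    have := abs_le.1 (h2 x)
    change ‖L2 x‖ ^ 2 ≤ _
    nlinarith
  have n2 : ‖(L2.toContinuousLinearEquiv.symm : EuclideanSpace ℝ (Fin n) →L[ℝ] X)‖ ≤
      √(1 / (1 - h)) := by
    refine ContinuousLinearMap.opNorm_le_bound _ (Real.sqrt_nonneg _) fun y => ?_
    refine abs_le_of_sq_le_sq' ?_ (by positivity) |>.2
    have h0 : 0 < 1 - h := by linarith
    rw [mul_pow, Real.sq_sqrt (by positivity)]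
    have := abs_le.1 (h2 (L2.symm y))
    rw [LinearEquiv.apply_symm_apply] at this
    change ‖L2.symm y‖ ^ 2 ≤ _
    rw [one_div, inv_mul_eq_div, le_div_iff₀ h0]
    nlinarith
  calc _ ≤ √(1 + h) * √(1 / (1 - h)) := by gcongr
    _ = √((1 + h) * (1 / (1 - h))) := (Real.sqrt_mul (by linarith) _).symm
    _ ≤ 1 + 6 / 5 * h := by
      have h0 : 0 < 1 - h := by linarith
      rw [Real.sqrt_le_left (by positivity), mul_one_div, div_le_iff₀ h0]
      nlinarith [mul_nonneg hh0 hh0, mul_nonneg (mul_nonneg hh0 hh0) hh0]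
    _ ≤ _ := by
      have e1 : 6 / 5 * h ≤ 2 * K * ε := by
        rw [hh]; nlinarith [mul_nonneg hK0.le hε]
      have e2 : 2 * K ≤ 18 * (n : ℝ) ^ 2 - 17 * n + 14 := by rw [hK]; nlinarith
      have e3 := mul_le_mul_of_nonneg_right e2 hε
      nlinarith [sq_nonneg ε]
end

section
/- Let n ≥ 1 and p ∈ [1, ∞]. The identity map Id from ℓ_p^n (that is, ℝⁿ with the ℓ_p norm) to ℓ_2^n (ℝⁿ with the Euclidean norm) satisfies ‖Id‖·‖Id⁻¹‖ = n^{|1/2 − 1/p|}. In particular the Banach–Mazur distance satisfies d(ℓ_p^n, ℓ_2^n) ≤ n^{|1/2 − 1/p|}. -/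
theorem lpaux_anti {n : ℕ} (p q : ENNReal) [Fact (1 ≤ p)] [Fact (1 ≤ q)] (h : p ≤ q)
    (v : Fin n → ℝ) : ‖WithLp.toLp q v‖ ≤ ‖WithLp.toLp p v‖ := by
  have hp1 : 1 ≤ p := Fact.out
  have hcoord : ∀ i, |v i| ≤ ‖WithLp.toLp p v‖ := fun i => by
    simpa using PiLp.norm_apply_le (WithLp.toLp p v) i
  by_cases hq : q = ⊤
  · subst hq
    rw [PiLp.norm_toLp, pi_norm_le_iff_of_nonneg (norm_nonneg _)]
    exact hcoord
  have hp : p ≠ ⊤ := fun h' => hq (top_le_iff.1 (h' ▸ h))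
  have hp0 : 1 ≤ p.toReal := by simpa using ENNReal.toReal_mono hp hp1
  have hpq : p.toReal ≤ q.toReal := ENNReal.toReal_mono hq h
  have hMp : ∑ i, |v i| ^ p.toReal = ‖WithLp.toLp p v‖ ^ p.toReal := by
    rw [PiLp.norm_eq_sum (by linarith), ← Real.rpow_mul (by positivity)]
    rw [one_div, inv_mul_cancel₀ (by linarith), Real.rpow_one]; simp
  set M := ‖WithLp.toLp p v‖ with hM
  have hM0 : 0 ≤ M := norm_nonneg _
  rw [PiLp.norm_eq_sum (by linarith)]
  rw [one_div, Real.rpow_inv_le_iff_of_pos (by positivity) hM0 (by linarith)]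
  have hsplit : ∀ x : ℝ, 0 ≤ x → x ^ q.toReal = x ^ p.toReal * x ^ (q.toReal - p.toReal) := by
    intro x hx
    rw [← Real.rpow_add_of_nonneg hx (by linarith) (by linarith)]; congr 1; ring
  rw [hsplit M hM0, ← hMp, Finset.sum_mul]
  refine Finset.sum_le_sum fun i _ => ?_
  simp only [Real.norm_eq_abs]
  rw [hsplit _ (abs_nonneg _)]
  gcongr
  · exact hcoord i

theorem lpaux_rev {n : ℕ} (hn : 1 ≤ n) (p q : ENNReal) [Fact (1 ≤ p)] [Fact (1 ≤ q)] (h : p ≤ q)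
    (v : Fin n → ℝ) : ‖WithLp.toLp p v‖ ≤
      (n : ℝ) ^ (1 / p.toReal - 1 / q.toReal) * ‖WithLp.toLp q v‖ := by
  have hp1 : 1 ≤ p := Fact.out
  have hnpos : (0 : ℝ) < n := by exact_mod_cast hn
  by_cases hp : p = ⊤
  · subst hp
    obtain rfl := top_le_iff.1 h
    simp
  have hp0 : 1 ≤ p.toReal := by simpa using ENNReal.toReal_mono hp hp1
  rw [PiLp.norm_eq_sum (by linarith)]
  rw [one_div, Real.rpow_inv_le_iff_of_pos (by positivity) (by positivity) (by linarith)]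
  rw [Real.mul_rpow (by positivity) (by positivity), ← Real.rpow_mul hnpos.le]
  by_cases hq : q = ⊤
  · subst hq
    have : (p.toReal⁻¹ - 1 / (⊤ : ENNReal).toReal) * p.toReal = 1 := by
      simp; field_simp
    rw [this, Real.rpow_one]
    refine (Finset.sum_le_card_nsmul _ _ (‖WithLp.toLp ⊤ v‖ ^ p.toReal) ?_).trans ?_
    · intro i _
      gcongr
      exact PiLp.norm_apply_le (WithLp.toLp ⊤ v) i
    · simp
  have hpq : p.toReal ≤ q.toReal := ENNReal.toReal_mono hq h
  set a := p.toReal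
  have hMq : ∑ i, |v i| ^ q.toReal = ‖WithLp.toLp q v‖ ^ q.toReal := by
    rw [PiLp.norm_eq_sum (by linarith), ← Real.rpow_mul (by positivity)]
    rw [one_div, inv_mul_cancel₀ (by linarith), Real.rpow_one]; simp
  set b := q.toReal
  have ha : 0 < a := by linarith
  have hb : 0 < b := by linarith
  have key := Real.rpow_sum_le_const_mul_sum_rpow (Finset.univ : Finset (Fin n))
    (fun i => |v i| ^ a) (p := b / a) (by rw [le_div_iff₀ ha]; linarith)
  have e : ∀ i, |(|v i| ^ a)| = |v i| ^ a := fun i => abs_of_nonneg (by positivity)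
  have e2 : ∀ i, (|v i| ^ a) ^ (b / a) = |v i| ^ b := fun i => by
    rw [← Real.rpow_mul (abs_nonneg _)]; congr 1; field_simp
  simp only [e, e2, hMq, Finset.card_univ, Fintype.card_fin] at key
  simp only [Real.norm_eq_abs]
  rw [← Real.rpow_le_rpow_iff (z := b / a) (by positivity) (by positivity) (by positivity)]
  refine key.trans (le_of_eq ?_)
  rw [Real.mul_rpow (by positivity) (by positivity), ← Real.rpow_mul (by positivity),
    ← Real.rpow_mul (by positivity)]
  congr 2 <;> field_simp

theorem lpaux_norm_down {n : ℕ} (hn : 1 ≤ n) (p q : ENNReal) [Fact (1 ≤ p)] [Fact (1 ≤ q)]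
    (h : p ≤ q) (L : PiLp p (fun _ : Fin n => ℝ) →L[ℝ] PiLp q (fun _ : Fin n => ℝ))
    (hL : ∀ v, L (WithLp.toLp p v) = WithLp.toLp q v) : ‖L‖ = 1 := by
  apply le_antisymm
  · refine L.opNorm_le_bound zero_le_one fun x => ?_
    have := hL x.ofLp
    rw [WithLp.toLp_ofLp] at this
    rw [this, one_mul]
    simpa using lpaux_anti p q h x.ofLp
  · have := L.le_opNorm (WithLp.toLp p (Pi.single (⟨0, hn⟩ : Fin n) (1 : ℝ)))
    rw [hL] at this
    simpa [PiLp.norm_toLp_single] using this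

theorem lpaux_norm_const {n : ℕ} (hn : 1 ≤ n) (p : ENNReal) [Fact (1 ≤ p)] :
    ‖(WithLp.toLp p (fun _ => 1) : PiLp p (fun _ : Fin n => ℝ))‖ = (n : ℝ) ^ (1 / p.toReal) := by
  haveI : Nonempty (Fin n) := ⟨⟨0, hn⟩⟩
  have := PiLp.norm_toLp_const' (p := p) (ι := Fin n) (1 : ℝ)
  simpa [Function.const_def] using this

theorem lpaux_norm_up {n : ℕ} (hn : 1 ≤ n) (p q : ENNReal) [Fact (1 ≤ p)] [Fact (1 ≤ q)]
    (h : p ≤ q) (L : PiLp q (fun _ : Fin n => ℝ) →L[ℝ] PiLp p (fun _ : Fin n => ℝ))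
    (hL : ∀ v, L (WithLp.toLp q v) = WithLp.toLp p v) :
    ‖L‖ = (n : ℝ) ^ (1 / p.toReal - 1 / q.toReal) := by
  have hnpos : (0 : ℝ) < n := by exact_mod_cast hn
  apply le_antisymm
  · refine L.opNorm_le_bound (by positivity) fun x => ?_
    have := hL x.ofLp
    rw [WithLp.toLp_ofLp] at this
    rw [this]
    simpa using lpaux_rev hn p q h x.ofLp
  · have := L.le_opNorm (WithLp.toLp q (fun _ => 1))
    rw [hL, lpaux_norm_const hn, lpaux_norm_const hn] at this
    rw [Real.rpow_sub hnpos, div_le_iff₀ (by positivity)]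
    exact this

theorem lpaux_inv_le {p q : ENNReal} (hp : 1 ≤ p) (hq : q = ⊤ ∨ q ≠ ⊤) (h : p ≤ q) :
    1 / q.toReal ≤ 1 / p.toReal := by
  rcases hq with rfl | hq
  · simp
  · have hp' : p ≠ ⊤ := fun h' => hq (top_le_iff.1 (h' ▸ h))
    have : 1 ≤ p.toReal := by simpa using ENNReal.toReal_mono hp' hp
    exact one_div_le_one_div_of_le (by linarith) (ENNReal.toReal_mono hq h)


/-- The identity map from `ℓ_p^n` to `ℓ_2^n` (realized as the continuous linear
equivalence induced by the identity of `ℝⁿ`) satisfies `‖Id‖·‖Id⁻¹‖ = n^{|1/2 − 1/p|}`;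
in particular the Banach–Mazur distance `d(ℓ_p^n, ℓ_2^n)` is at most `n^{|1/2 − 1/p|}`.
(When `p = ∞`, `1/p` is interpreted as `0`.) -/
theorem lp_identity_norms (n : ℕ) (hn : 1 ≤ n) (p : ENNReal) [Fact (1 ≤ p)] :
    ‖(((PiLp.continuousLinearEquiv p ℝ (fun _ : Fin n => ℝ)).trans
          (PiLp.continuousLinearEquiv 2 ℝ (fun _ : Fin n => ℝ)).symm :
        PiLp p (fun _ : Fin n => ℝ) ≃L[ℝ] PiLp 2 (fun _ : Fin n => ℝ)) :
        PiLp p (fun _ : Fin n => ℝ) →L[ℝ] PiLp 2 (fun _ : Fin n => ℝ))‖ *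
    ‖(((PiLp.continuousLinearEquiv p ℝ (fun _ : Fin n => ℝ)).trans
          (PiLp.continuousLinearEquiv 2 ℝ (fun _ : Fin n => ℝ)).symm).symm :
        PiLp 2 (fun _ : Fin n => ℝ) →L[ℝ] PiLp p (fun _ : Fin n => ℝ))‖ =
      (n : ℝ) ^ |1 / 2 - 1 / p.toReal| := by
  have hp1 : 1 ≤ p := Fact.out
  rcases le_total p 2 with h | h
  · have := lpaux_inv_le hp1 (em _) h
    rw [lpaux_norm_down hn p 2 h _ (fun v => rfl), lpaux_norm_up hn p 2 h _ (fun v => rfl), one_mul,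
      abs_sub_comm, abs_of_nonneg (by simpa using this)]
    simp
  · have := lpaux_inv_le (p := 2) (by norm_num) (em _) h
    rw [lpaux_norm_up hn 2 p h _ (fun v => rfl), lpaux_norm_down hn 2 p h _ (fun v => rfl), mul_one,
      abs_of_nonneg (by simpa using this)]
    simp
end

section
/- Let n ≥ 1, let p ∈ [1, ∞], and suppose the von Neumann–Jordan constant of ℓ_p^n equals ε + 1, i.e. ε + 1 = 2^{|2 − p|/p} (interpreted as ε + 1 = 2 when p = ∞). Then the Banach–Mazur distance satisfies d(ℓ_p^n, ℓ_2^n) ≤ n^{log₂(ε + 1)/2}; that is, there is a linear isomorphism Λ : ℓ_p^n → ℓ_2^n with ‖Λ‖·‖Λ⁻¹‖ ≤ n^{log₂(ε + 1)/2}. -/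
lemma aux_mono {n : ℕ} (a : Fin n → ℝ) {q r : ℝ} (hq : 0 < q) (hqr : q ≤ r) :
    (∑ i, ‖a i‖ ^ r) ^ (1 / r) ≤ (∑ i, ‖a i‖ ^ q) ^ (1 / q) := by
  have hr : 0 < r := hq.trans_le hqr
  have hS : 0 ≤ ∑ i, ‖a i‖ ^ q := Finset.sum_nonneg fun i _ => by positivity
  have hR : 0 ≤ ∑ i, ‖a i‖ ^ r := Finset.sum_nonneg fun i _ => by positivity
  set S := ∑ i, ‖a i‖ ^ q with hSdef
  have hle : ∀ i, ‖a i‖ ≤ S ^ (1 / q) := fun i => by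
    have h1 : ‖a i‖ ^ q ≤ S :=
      Finset.single_le_sum (f := fun i => ‖a i‖ ^ q) (fun i _ => by positivity) (Finset.mem_univ i)
    calc ‖a i‖ = (‖a i‖ ^ q) ^ (1 / q) := by
          rw [← Real.rpow_mul (norm_nonneg _), mul_one_div_cancel hq.ne', Real.rpow_one]
      _ ≤ _ := Real.rpow_le_rpow (by positivity) h1 (by positivity)
  have key : ∑ i, ‖a i‖ ^ r ≤ (S ^ (1 / q)) ^ r := by
    calc ∑ i, ‖a i‖ ^ r ≤ ∑ i, ‖a i‖ ^ q * (S ^ (1 / q)) ^ (r - q) := by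
          refine Finset.sum_le_sum fun i _ => ?_
          have : ‖a i‖ ^ r = ‖a i‖ ^ q * ‖a i‖ ^ (r - q) := by
            rw [← Real.rpow_add_of_nonneg (norm_nonneg _) hq.le (by linarith)]
            congr 1; ring
          rw [this]
          exact mul_le_mul_of_nonneg_left
            (Real.rpow_le_rpow (norm_nonneg _) (hle i) (by linarith)) (by positivity)
      _ = S * (S ^ (1 / q)) ^ (r - q) := by rw [← Finset.sum_mul]
      _ = (S ^ (1 / q)) ^ q * (S ^ (1 / q)) ^ (r - q) := by
          rw [← Real.rpow_mul hS (1 / q) q, one_div_mul_cancel hq.ne', Real.rpow_one]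
      _ = _ := by
          rw [← Real.rpow_add_of_nonneg (by positivity) hq.le (by linarith)]
          congr 1; ring
  calc _ ≤ ((S ^ (1 / q)) ^ r) ^ (1 / r) := Real.rpow_le_rpow hR key (by positivity)
    _ = _ := by
      rw [← Real.rpow_mul (by positivity) r, mul_one_div_cancel hr.ne', Real.rpow_one]

lemma aux_card {n : ℕ} (a : Fin n → ℝ) {q r : ℝ} (hq : 0 < q) (hqr : q ≤ r) :
    (∑ i, ‖a i‖ ^ q) ^ (1 / q) ≤ (n : ℝ) ^ (1 / q - 1 / r) * (∑ i, ‖a i‖ ^ r) ^ (1 / r) := by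
  have hr : 0 < r := hq.trans_le hqr
  have hS : 0 ≤ ∑ i, ‖a i‖ ^ q := Finset.sum_nonneg fun i _ => by positivity
  have hR : 0 ≤ ∑ i, ‖a i‖ ^ r := Finset.sum_nonneg fun i _ => by positivity
  have h := Real.rpow_sum_le_const_mul_sum_rpow_of_nonneg (s := Finset.univ)
    (f := fun i => ‖a i‖ ^ q) (p := r / q) ((one_le_div hq).2 hqr) (fun i _ => by positivity)
  simp only [Finset.card_univ, Fintype.card_fin] at h
  have e : ∀ i, (‖a i‖ ^ q) ^ (r / q) = ‖a i‖ ^ r := fun i => by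
    rw [← Real.rpow_mul (norm_nonneg _), mul_div_cancel₀ _ hq.ne']
  simp only [e] at h
  have h2 := Real.rpow_le_rpow (by positivity) h (one_div_nonneg.2 hr.le)
  rw [← Real.rpow_mul hS, Real.mul_rpow (by positivity) hR, ← Real.rpow_mul (by positivity)] at h2
  convert! h2 using 2
  · field_simp
  · congr 1; field_simp

lemma aux_main {n : ℕ} (p : ENNReal) [Fact (1 ≤ p)] {C D B : ℝ} (hC : 0 ≤ C) (hD : 0 ≤ D)
    (h1 : ∀ a : Fin n → ℝ, ‖WithLp.toLp 2 a‖ ≤ C * ‖WithLp.toLp p a‖)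
    (h2 : ∀ a : Fin n → ℝ, ‖WithLp.toLp p a‖ ≤ D * ‖WithLp.toLp 2 a‖) (hB : C * D ≤ B) :
    ∃ Λ : PiLp p (fun _ : Fin n => ℝ) ≃L[ℝ] EuclideanSpace ℝ (Fin n),
      ‖(Λ : PiLp p (fun _ : Fin n => ℝ) →L[ℝ] EuclideanSpace ℝ (Fin n))‖ *
        ‖(Λ.symm : EuclideanSpace ℝ (Fin n) →L[ℝ] PiLp p (fun _ : Fin n => ℝ))‖ ≤ B := by
  refine ⟨(PiLp.continuousLinearEquiv p ℝ (fun _ : Fin n => ℝ)).trans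
    (PiLp.continuousLinearEquiv 2 ℝ (fun _ : Fin n => ℝ)).symm, le_trans ?_ hB⟩
  refine mul_le_mul ?_ ?_ (norm_nonneg _) hC
  · exact ContinuousLinearMap.opNorm_le_bound _ hC fun x => h1 x.ofLp
  · exact ContinuousLinearMap.opNorm_le_bound _ hD fun x => h2 x.ofLp

/-- If `ε + 1 = 2^{|2 − p|/p}` is the von Neumann–Jordan constant of `ℓ_p^n`
(interpreted as `ε + 1 = 2` when `p = ∞`), then the Banach–Mazur distance satisfies
`d(ℓ_p^n, ℓ_2^n) ≤ n^{log₂(ε + 1)/2}`: there is a linear isomorphism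
`Λ : ℓ_p^n → ℓ_2^n` with `‖Λ‖·‖Λ⁻¹‖ ≤ n^{log₂(ε + 1)/2}`. -/
theorem lp_banach_mazur_bound (n : ℕ) (hn : 1 ≤ n) (p : ENNReal) [Fact (1 ≤ p)]
    (ε : ℝ) (hε : 0 ≤ ε)
    (hfin : p ≠ ⊤ → ε + 1 = 2 ^ (|2 - p.toReal| / p.toReal))
    (hinf : p = ⊤ → ε + 1 = 2) :
    ∃ Λ : PiLp p (fun _ : Fin n => ℝ) ≃L[ℝ] EuclideanSpace ℝ (Fin n),
      ‖(Λ : PiLp p (fun _ : Fin n => ℝ) →L[ℝ] EuclideanSpace ℝ (Fin n))‖ *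
        ‖(Λ.symm : EuclideanSpace ℝ (Fin n) →L[ℝ] PiLp p (fun _ : Fin n => ℝ))‖ ≤
        (n : ℝ) ^ (Real.logb 2 (ε + 1) / 2) := by
  have n1 : (1 : ℝ) ≤ n := by exact_mod_cast hn
  have n0 : (0 : ℝ) < n := by linarith
  have N2 : ∀ a : Fin n → ℝ, ‖WithLp.toLp 2 a‖ = (∑ i, ‖a i‖ ^ (2 : ℝ)) ^ (1 / (2 : ℝ)) := by
    intro a
    rw [PiLp.norm_eq_sum (by norm_num)]
    simp
  by_cases hp : p = ⊤
  · subst hp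
    rw [hinf rfl, Real.logb_self_eq_one (by norm_num)]
    refine aux_main ⊤ (C := (n : ℝ) ^ (1 / 2 : ℝ)) (D := 1) (by positivity) zero_le_one ?_ ?_
      (by simp)
    · intro a
      rw [N2, PiLp.norm_toLp]
      have : ∑ i, ‖a i‖ ^ (2 : ℝ) ≤ n * ‖a‖ ^ (2 : ℝ) := by
        calc ∑ i, ‖a i‖ ^ (2 : ℝ) ≤ ∑ _i : Fin n, ‖a‖ ^ (2 : ℝ) :=
              Finset.sum_le_sum fun i _ =>
                Real.rpow_le_rpow (norm_nonneg _) (norm_le_pi_norm a i) (by norm_num)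
          _ = _ := by simp
      refine (Real.rpow_le_rpow (Finset.sum_nonneg fun i _ => by positivity) this
        (by norm_num)).trans_eq ?_
      rw [Real.mul_rpow n0.le (by positivity), ← Real.rpow_mul (norm_nonneg _)]
      norm_num
    · intro a
      rw [PiLp.norm_toLp, one_mul]
      exact (pi_norm_le_iff_of_nonneg (norm_nonneg _)).2 fun i =>
        PiLp.norm_apply_le (WithLp.toLp 2 a) i
  · have hp1 : 1 ≤ p.toReal := by
      have := ENNReal.toReal_mono hp (Fact.out : 1 ≤ p)
      simpa using this
    have hp0 : 0 < p.toReal := by linarith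
    have NP : ∀ a : Fin n → ℝ,
        ‖WithLp.toLp p a‖ = (∑ i, ‖a i‖ ^ p.toReal) ^ (1 / p.toReal) := by
      intro a
      rw [PiLp.norm_eq_sum hp0]
    rw [hfin hp, Real.logb_rpow (by norm_num) (by norm_num)]
    rcases le_total p.toReal 2 with h | h
    · refine aux_main p (C := 1) (D := (n : ℝ) ^ (1 / p.toReal - 1 / 2)) zero_le_one
        (by positivity) ?_ ?_ ?_
      · intro a
        rw [N2, NP, one_mul]
        exact aux_mono a hp0 h
      · intro a
        rw [N2, NP]
        exact aux_card a hp0 h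
      · rw [one_mul, abs_of_nonneg (by linarith)]
        apply le_of_eq
        congr 1
        field_simp
    · refine aux_main p (C := (n : ℝ) ^ (1 / 2 - 1 / p.toReal)) (D := 1) (by positivity)
        zero_le_one ?_ ?_ ?_
      · intro a
        rw [N2, NP]
        exact aux_card a two_pos h
      · intro a
        rw [N2, NP, one_mul]
        exact aux_mono a two_pos h
      · rw [mul_one, abs_of_nonpos (by linarith)]
        apply le_of_eq
        congr 1
        field_simp
        ring
end
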